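/- arXiv:1205.5993 — 4 statements merged into one kernel-verified Lean document; each statement's English description precedes it below -/
import Mathlib

section
/- Let F be a family of metric spaces. Then one of the following two possibilities holds: either (i) for every finite metric space (M,d_M) and every ε > 0 there exists N ∈ F such that c_N(M) ≤ 1+ε; or (ii) there exist α, κ ∈ (0,∞) such that for each integer n ≥ 2 there exists an n-point metric space (M_n, d_{M_n}) with c_N(M_n) ≥ κ (log n)^α for every N ∈ F. -/
universe u v

/-- `d` is a metric on `A`. -/
def IsMetricOn {A : Type*} (d : A → A → ℝ) : Prop :=
  (∀ x y, 0 ≤ d x y) ∧ (∀ x y, d x y = 0 ↔ x = y) ∧ (∀ x y, d x y = d y x) ∧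
    ∀ x y z, d x z ≤ d x y + d y z

/-!
Fix a finite metric space `M`, with `n` points, that does not embed with distortion `1 + ε` into a
metric space `Y`. The Fréchet embedding of `M`, dilated and rounded, lies in a box `[0, m]^n` of
`ℤ^n` with the supremum distance, so no map to `Y` is similar to the inclusion of this box up to a
small additive error.

This forces contraction. Let `F` be a map from a finite abelian group `G` to `Y`, and let the length
of `g ∈ G` be the distance from `F` to `F(· + g)` in `ℓ²(G; Y)`. If a homomorphism `ψ : ℤ^n → G`
sends every vector of `{-1, 0, 1}^n` to an element of length at most `C`, the translates of `F` by
`ψ` form a `C`-Lipschitz map from the grid to `ℓ²(G; Y)`. Were all the segments of length `4m` on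
the axes stretched by almost the full factor `C`, equality in the triangle inequality and in
Cauchy–Schwarz would almost hold: the pointwise distances of any two points `p, q` of the box would
be almost proportional, with the same profile `W ∈ ℓ²(G)` for all pairs, since the segment from `0`
to `(1, …, 1)` is compatible with every axis. At some `ω ∈ G` this proportionality is accurate for
all pairs at once, which yields a rough copy of the box in `Y`. Hence along some axis the step `4m`
has length at most `θ · 4m · C`, with `θ < 1` depending on `M` and `ε` only.

Iterating this over `k` levels of blocks in `ℤ^(n^k)` gains a factor `θ^k` at the scale `(4m)^k`.
For the discrete torus `(ℤ/2(4m)^k)^(n^k)` this bounds the distortion from below by `θ^(-k)`, while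
the logarithm of the size of the torus is at most of order `(2n)^k`.
-/

open scoped NNReal InnerProductSpace

/-- The bound `c_Y(M) ≤ D`, with the infimum defining `c_Y(M)` attained. -/
def EmbedsWithDistortion (M Y : Type*) [PseudoMetricSpace M] [PseudoMetricSpace Y] (D : ℝ) : Prop :=
  ∃ (f : M → Y) (lam : ℝ), 0 < lam ∧
    ∀ x y, lam * dist x y ≤ dist (f x) (f y) ∧ dist (f x) (f y) ≤ D * (lam * dist x y)

/-- After rescaling the target, `f` preserves the distances between points of `s` up to an additive
error of `1`. This is a useful notion of similarity for points of `s` at large mutual distance. -/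
def IsRoughSimilarityOn {X Y : Type*} [PseudoMetricSpace X] [PseudoMetricSpace Y]
    (f : X → Y) (s : Set X) : Prop :=
  ∃ c : ℝ, 0 < c ∧ ∀ p ∈ s, ∀ q ∈ s, |dist (f p) (f q) - c * dist p q| ≤ c

section Distortion

theorem isMetricOn_dist_comp {A X : Type*} [MetricSpace X] {e : A → X}
    (he : Function.Injective e) : IsMetricOn fun x y => dist (e x) (e y) :=
  ⟨fun _ _ => dist_nonneg, fun _ _ => dist_eq_zero.trans he.eq_iff, fun _ _ => dist_comm _ _,
    fun _ _ _ => dist_triangle _ _ _⟩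

/-- The metric space structure given by a distance function satisfying the axioms of a metric. -/
abbrev IsMetricOn.metricSpace {A : Type*} {d : A → A → ℝ} (hd : IsMetricOn d) : MetricSpace A where
  dist := d
  dist_self x := (hd.2.1 x x).2 rfl
  dist_comm := hd.2.2.1
  dist_triangle := hd.2.2.2
  eq_of_dist_eq_zero {x y} := (hd.2.1 x y).1

variable {M M' Y : Type*} [PseudoMetricSpace M'] [PseudoMetricSpace Y] {D : ℝ}

theorem EmbedsWithDistortion.of_isEmpty [PseudoMetricSpace M] [IsEmpty M] :
    EmbedsWithDistortion M Y D :=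
  ⟨isEmptyElim, 1, one_pos, isEmptyElim⟩

theorem EmbedsWithDistortion.comp_isometry [PseudoMetricSpace M] (h : EmbedsWithDistortion M' Y D)
    {g : M → M'} (hg : Isometry g) : EmbedsWithDistortion M Y D := by
  obtain ⟨f, lam, hlam, hf⟩ := h
  exact ⟨f ∘ g, lam, hlam, fun x y => hg.dist_eq x y ▸ hf (g x) (g y)⟩

theorem EmbedsWithDistortion.one_le [MetricSpace M] [Nontrivial M]
    (h : EmbedsWithDistortion M Y D) : 1 ≤ D := by
  obtain ⟨f, lam, hlam, hf⟩ := h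
  obtain ⟨x, y, hxy⟩ := exists_pair_ne M
  have hpos : 0 < lam * dist x y := mul_pos hlam (dist_pos.2 hxy)
  exact (le_mul_iff_one_le_left hpos).1 ((hf x y).1.trans (hf x y).2)

theorem EmbedsWithDistortion.of_subset_range {A X : Type*} [MetricSpace X] {e : A → X}
    (he : Function.Injective e) {S : Set X} (hS : S ⊆ Set.range e)
    (h : letI := (isMetricOn_dist_comp he).metricSpace; EmbedsWithDistortion A Y D) :
    EmbedsWithDistortion S Y D := by
  let _ := (isMetricOn_dist_comp he).metricSpace
  choose g hg using fun x : S => hS x.2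
  have hgiso : Isometry g := Isometry.of_dist_eq fun x y =>
    show dist (e (g x)) (e (g y)) = dist x y by rw [hg, hg, Subtype.dist_eq]
  exact h.comp_isometry hgiso

theorem embedsWithDistortion_of_abs_dist_sub_le [PseudoMetricSpace M] {g : M → Y} {c η : ℝ}
    (hc : 0 < c) (hη : η < 1)
    (hg : ∀ x y, |dist (g x) (g y) - c * dist x y| ≤ η * (c * dist x y)) :
    EmbedsWithDistortion M Y ((1 + η) / (1 - η)) := by
  have hη' : 0 < 1 - η := sub_pos.2 hη
  refine ⟨g, (1 - η) * c, mul_pos hη' hc, fun x y => ?_⟩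
  obtain ⟨hlow, hup⟩ := abs_le.1 (hg x y)
  refine ⟨by linarith, ?_⟩
  calc dist (g x) (g y) ≤ (1 + η) * (c * dist x y) := by linarith
    _ = (1 + η) / (1 - η) * ((1 - η) * c * dist x y) := by field_simp

end Distortion

/-! ### The integer grid with the supremum distance -/

section Grid

theorem exists_dist_apply_eq_dist {ι : Type*} [Fintype ι] [Nonempty ι] {X : ι → Type*}
    [∀ i, PseudoMetricSpace (X i)] (p q : ∀ i, X i) : ∃ b, dist (p b) (q b) = dist p q := by
  obtain ⟨b, hb⟩ := Finite.exists_max fun i => dist (p i) (q i)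
  exact ⟨b, (dist_le_pi_dist p q b).antisymm ((dist_pi_le_iff dist_nonneg).2 hb)⟩

variable {ι : Type*} [Fintype ι]

theorem one_le_dist_of_ne {p q : ι → ℤ} (hpq : p ≠ q) : 1 ≤ dist p q := by
  obtain ⟨j, hj⟩ := Function.ne_iff.1 hpq
  exact (Int.pairwise_one_le_dist hj).trans (dist_le_pi_dist p q j)

theorem dist_le_of_mem_Icc {m : ℕ} {p q : ι → ℤ} (hp : p ∈ Set.Icc 0 (m : ι → ℤ))
    (hq : q ∈ Set.Icc 0 (m : ι → ℤ)) : dist p q ≤ m := by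
  refine (dist_pi_le_iff m.cast_nonneg).2 fun j => ?_
  rw [Int.dist_eq]
  norm_cast
  have hpj : 0 ≤ p j ∧ p j ≤ m := ⟨hp.1 j, hp.2 j⟩
  have hqj : 0 ≤ q j ∧ q j ≤ m := ⟨hq.1 j, hq.2 j⟩
  rw [abs_le]
  omega

theorem dist_single_le_of_mem_Icc [DecidableEq ι] {m : ℕ} {p : ι → ℤ}
    (hp : p ∈ Set.Icc 0 (m : ι → ℤ)) {b : ι} {a : ℤ} (ha : m ≤ dist (p b) a) :
    dist p (Pi.single b a) ≤ dist (p b) a := by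
  refine (dist_pi_le_iff dist_nonneg).2 fun j => ?_
  rcases eq_or_ne j b with rfl | hj
  · rw [Pi.single_eq_same]
  · rw [Pi.single_eq_of_ne hj]
    exact (dist_le_pi_dist p 0 j).trans
      ((dist_le_of_mem_Icc hp ⟨le_rfl, hp.1.trans hp.2⟩).trans ha)

theorem dist_single_neg_two_mul_le [DecidableEq ι] {m : ℕ} {p : ι → ℤ}
    (hp : p ∈ Set.Icc 0 (m : ι → ℤ)) (b : ι) :
    dist p (Pi.single b (-(2 * m))) ≤ p b + 2 * m := by
  have hpb : (0 : ℝ) ≤ p b := mod_cast hp.1 b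
  have hdist : dist (p b) (-(2 * m)) = p b + 2 * m := by
    rw [Int.dist_eq]
    push_cast
    rw [sub_neg_eq_add, abs_of_nonneg (by positivity)]
  exact hdist ▸ dist_single_le_of_mem_Icc hp (by linarith [m.cast_nonneg (α := ℝ)])

theorem dist_single_two_mul_le [DecidableEq ι] {m : ℕ} {p : ι → ℤ}
    (hp : p ∈ Set.Icc 0 (m : ι → ℤ)) (b : ι) :
    dist p (Pi.single b (2 * m)) ≤ 2 * m - p b := by
  have hpb : (p b : ℝ) ≤ m := mod_cast hp.2 b
  have hdist : dist (p b) (2 * m) = 2 * m - p b := by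
    rw [dist_comm, Int.dist_eq]
    push_cast
    rw [abs_of_nonneg (by linarith [m.cast_nonneg (α := ℝ)])]
  exact hdist ▸ dist_single_le_of_mem_Icc hp (by linarith)

theorem exists_dist_le_one_of_dist_le_add_one {p q : ι → ℤ} {h : ℕ} (hpq : dist p q ≤ h + 1) :
    ∃ r, dist p r ≤ 1 ∧ dist r q ≤ h := by
  have hle (j : ι) : |p j - q j| ≤ h + 1 := by
    have := (dist_le_pi_dist p q j).trans hpq
    rw [Int.dist_eq] at this
    exact_mod_cast this
  refine ⟨fun j => p j - (p j - q j).sign, (dist_pi_le_iff zero_le_one).2 fun j => ?_,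
    (dist_pi_le_iff h.cast_nonneg).2 fun j => ?_⟩
  all_goals
    rw [Int.dist_eq]
    norm_cast
    have := abs_le.1 (hle j)
    rcases lt_trichotomy (p j - q j) 0 with hj | hj | hj
  · simp [Int.sign_eq_neg_one_of_neg hj]
  · simp [hj]
  · simp [Int.sign_eq_one_of_pos hj]
  · rw [Int.sign_eq_neg_one_of_neg hj, abs_le]
    omega
  · rw [hj, Int.sign_zero, abs_le]
    omega
  · rw [Int.sign_eq_one_of_pos hj, abs_le]
    omega

theorem lipschitzWith_of_dist_le_one {Z : Type*} [PseudoMetricSpace Z] {u : (ι → ℤ) → Z} {C : ℝ≥0}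
    (hu : ∀ p q, dist p q ≤ 1 → dist (u p) (u q) ≤ C) : LipschitzWith C u := by
  have chain (h : ℕ) : ∀ p q, dist p q ≤ h → dist (u p) (u q) ≤ C * h := by
    induction h with
    | zero =>
      intro p q hpq
      obtain rfl : p = q := dist_le_zero.1 (by exact_mod_cast hpq)
      simp
    | succ h ih =>
      intro p q hpq
      obtain ⟨r, hpr, hrq⟩ := exists_dist_le_one_of_dist_le_add_one (by exact_mod_cast hpq)
      calc dist (u p) (u q) ≤ dist (u p) (u r) + dist (u r) (u q) := dist_triangle _ _ _
        _ ≤ C + C * h := add_le_add (hu p r hpr) (ih r q hrq)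
        _ = C * (h + 1 : ℕ) := by push_cast; ring
  refine LipschitzWith.of_dist_le_mul fun p q => ?_
  have hfloor : dist p q ≤ (⌊dist p q⌋₊ : ℝ) := by
    refine (dist_pi_le_iff (by positivity)).2 fun j => ?_
    have hj : ((p j - q j).natAbs : ℝ) = dist (p j) (q j) := by
      rw [Int.dist_eq, Nat.cast_natAbs, Int.cast_abs, Int.cast_sub]
    rw [← hj, Nat.cast_le, Nat.le_floor_iff dist_nonneg, hj]
    exact dist_le_pi_dist p q j
  exact (chain _ p q hfloor).trans (by gcongr; exact Nat.floor_le dist_nonneg)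

/-- The Fréchet embedding `x ↦ (dist x j)ⱼ`, dilated by `a` and rounded down to the grid. -/
noncomputable def floorFrechet {M : Type*} [PseudoMetricSpace M] (a : ℝ) (x j : M) : ℤ :=
  ⌊a * dist x j⌋

variable {M : Type*} [PseudoMetricSpace M]

theorem abs_dist_floorFrechet_sub_le [Fintype M] {a : ℝ} (ha : 0 ≤ a) (x y : M) :
    |dist (floorFrechet a x) (floorFrechet a y) - a * dist x y| ≤ 1 := by
  have floor_le (z j : M) : (floorFrechet a z j : ℝ) ≤ a * dist z j := Int.floor_le _
  have lt_floor (z j : M) : a * dist z j < floorFrechet a z j + 1 := Int.lt_floor_add_one _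
  rw [abs_sub_le_iff]
  constructor
  · rw [sub_le_iff_le_add', dist_pi_le_iff (by positivity)]
    intro j
    have hxj := mul_le_mul_of_nonneg_left (dist_triangle x y j) ha
    have hyj := mul_le_mul_of_nonneg_left (dist_triangle_left y j x) ha
    rw [Int.dist_eq, abs_sub_le_iff]
    constructor <;> linarith [floor_le x j, lt_floor x j, floor_le y j, lt_floor y j]
  · have hy : floorFrechet a y y = 0 := by simp [floorFrechet]
    have hcoord : (floorFrechet a x y : ℝ) ≤ dist (floorFrechet a x) (floorFrechet a y) :=
      calc (floorFrechet a x y : ℝ) ≤ dist (floorFrechet a x y) (floorFrechet a y y) := by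
            rw [hy, Int.dist_eq, Int.cast_zero, sub_zero]
            exact le_abs_self _
        _ ≤ _ := dist_le_pi_dist _ _ y
    linarith [lt_floor x y]

theorem exists_forall_floorFrechet_mem_Icc [Finite M] {a : ℝ} (ha : 0 ≤ a) :
    ∃ m : ℕ, 0 < m ∧ ∀ x : M, floorFrechet a x ∈ Set.Icc 0 (m : M → ℤ) := by
  obtain ⟨R, hR⟩ := (Set.finite_range fun p : M × M => ⌊a * dist p.1 p.2⌋).bddAbove
  refine ⟨R.toNat + 1, Nat.succ_pos _, fun x => ⟨fun j => ?_, fun j => ?_⟩⟩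
  · exact Int.floor_nonneg.2 (by positivity)
  · have : ⌊a * dist x j⌋ ≤ R := hR ⟨(x, j), rfl⟩
    simp only [floorFrechet, Pi.natCast_apply]
    omega

end Grid

theorem exists_pos_forall_le_dist (M : Type*) [MetricSpace M] [Finite M] :
    ∃ δ : ℝ, 0 < δ ∧ ∀ x y : M, x ≠ y → δ ≤ dist x y := by
  rcases subsingleton_or_nontrivial M with _ | _
  · exact ⟨1, one_pos, fun x y hxy => absurd (Subsingleton.elim x y) hxy⟩
  · exact ⟨_, Set.finite_univ.infsep_pos_iff_nontrivial.2 (Set.nontrivial_univ (α := M)),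
      fun x y => Set.infsep_le_dist_of_mem (Set.mem_univ x) (Set.mem_univ y)⟩

theorem exists_embedsWithDistortion_of_isRoughSimilarityOn (M : Type u) [MetricSpace M] [Fintype M]
    {ε : ℝ} (hε : 0 < ε) :
    ∃ m : ℕ, 0 < m ∧ ∀ (Y : Type v) [PseudoMetricSpace Y] (f : (M → ℤ) → Y),
      IsRoughSimilarityOn f (Set.Icc 0 (m : M → ℤ)) → EmbedsWithDistortion M Y (1 + ε) := by
  obtain ⟨δ, hδ, hsep⟩ := exists_pos_forall_le_dist M
  set η := ε / (2 + ε) with hη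
  have hη0 : 0 < η := by positivity
  have hη1 : η < 1 := (div_lt_one (by positivity)).2 (by linarith)
  have hηε : (1 + η) / (1 - η) = 1 + ε := by
    rw [div_eq_iff (by linarith), hη]
    field_simp
    ring
  set a := 2 / (η * δ) with ha
  have ha0 : 0 < a := by positivity
  obtain ⟨m, hm, hmem⟩ := exists_forall_floorFrechet_mem_Icc (M := M) ha0.le
  refine ⟨m, hm, fun Y _ f ⟨c, hc, hf⟩ => hηε ▸ ?_⟩
  refine embedsWithDistortion_of_abs_dist_sub_le (g := f ∘ floorFrechet a) (mul_pos hc ha0) hη1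
    fun x y => ?_
  rcases eq_or_ne x y with rfl | hxy
  · simp
  have hround := mul_le_mul_of_nonneg_left (abs_dist_floorFrechet_sub_le ha0.le x y) hc.le
  calc |dist (f (floorFrechet a x)) (f (floorFrechet a y)) - c * a * dist x y|
      ≤ |dist (f (floorFrechet a x)) (f (floorFrechet a y))
            - c * dist (floorFrechet a x) (floorFrechet a y)|
          + c * |dist (floorFrechet a x) (floorFrechet a y) - a * dist x y| := by
        rw [← abs_of_pos hc, ← abs_mul, abs_of_pos hc, mul_sub, ← mul_assoc]
        exact abs_sub_le _ _ _
    _ ≤ c + c * 1 := add_le_add (hf _ (hmem x) _ (hmem y)) hround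
    _ = η * (c * a * δ) := by rw [ha]; field_simp; ring
    _ ≤ η * (c * a * dist x y) := by gcongr; exact hsep x y hxy

/-! ### Rigidity of distances in `L²` -/

section Rigidity

theorem norm_sub_smul_sq_le {E : Type*} [NormedAddCommGroup E] [InnerProductSpace ℝ E]
    {A B V : E} {ρ X : ℝ} (hρ0 : 0 ≤ ρ) (hρ1 : ρ ≤ 1) (hA : ‖A‖ ≤ ρ * X) (hB : ‖B‖ ≤ (1 - ρ) * X)
    (hV : ‖V‖ ^ 2 ≤ ⟪A + B, V⟫_ℝ) : ‖A - ρ • V‖ ^ 2 ≤ 2 * ρ * X * (X - ‖V‖) := by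
  have hBV : ⟪B, V⟫_ℝ ≤ (1 - ρ) * X * ‖V‖ :=
    (real_inner_le_norm B V).trans (by gcongr)
  have hAV : ‖V‖ ^ 2 - (1 - ρ) * X * ‖V‖ ≤ ⟪A, V⟫_ℝ := by
    rw [inner_add_left] at hV
    linarith
  have hρ2 : 0 ≤ 2 - ρ := by linarith
  calc ‖A - ρ • V‖ ^ 2 = ‖A‖ ^ 2 - 2 * ρ * ⟪A, V⟫_ℝ + ρ ^ 2 * ‖V‖ ^ 2 := by
        rw [norm_sub_sq_real, real_inner_smul_right, norm_smul, mul_pow, Real.norm_eq_abs, sq_abs]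
        ring
    _ ≤ (ρ * X) ^ 2 - 2 * ρ * (‖V‖ ^ 2 - (1 - ρ) * X * ‖V‖) + ρ ^ 2 * ‖V‖ ^ 2 := by gcongr
    _ = 2 * ρ * X * (X - ‖V‖) - ρ * (2 - ρ) * (X - ‖V‖) ^ 2 := by ring
    _ ≤ 2 * ρ * X * (X - ‖V‖) := sub_le_self _ (by positivity)

theorem exists_forall_abs_apply_lt_of_sum_norm_sq_lt {Ω J : Type*} [Fintype Ω] {s : Finset J}
    {V : J → EuclideanSpace ℝ Ω} {W : EuclideanSpace ℝ Ω} (h : ∑ i ∈ s, ‖V i‖ ^ 2 < ‖W‖ ^ 2) :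
    ∃ ω, 0 < |W ω| ∧ ∀ i ∈ s, |V i ω| < |W ω| := by
  simp only [EuclideanSpace.real_norm_sq_eq] at h
  rw [Finset.sum_comm] at h
  obtain ⟨ω, -, hω⟩ := Finset.exists_lt_of_sum_lt h
  refine ⟨ω, abs_pos.2 (sq_pos_iff.1 ?_), fun i hi => sq_lt_sq.1 ?_⟩
  · exact (Finset.sum_nonneg fun i _ => sq_nonneg (V i ω)).trans_lt hω
  · exact (Finset.single_le_sum (fun j _ => sq_nonneg (V j ω)) hi).trans_lt hω

/-- The pointwise distance of two `Y`-valued functions on `Ω`, as a vector of `ℓ²(Ω)`. Its norm is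
the distance of `f` and `g` in `ℓ²(Ω; Y)`, see `norm_distFn`. -/
def distFn {Ω Y : Type*} [PseudoMetricSpace Y] (f g : PiLp 2 fun _ : Ω => Y) :
    EuclideanSpace ℝ Ω :=
  WithLp.toLp 2 fun ω => dist (f ω) (g ω)

variable {Ω Y : Type*} [PseudoMetricSpace Y]

theorem distFn_apply (f g : PiLp 2 fun _ : Ω => Y) (ω : Ω) :
    distFn f g ω = dist (f ω) (g ω) :=
  rfl

theorem distFn_comm (f g : PiLp 2 fun _ : Ω => Y) : distFn f g = distFn g f := by
  simp only [distFn, dist_comm]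

theorem distFn_self (f : PiLp 2 fun _ : Ω => Y) : distFn f f = 0 := by
  ext ω
  simp [distFn_apply]

variable [Fintype Ω]

theorem dist_eq_sqrt_sum_dist_sq (f g : PiLp 2 fun _ : Ω => Y) :
    dist f g = √(∑ ω, dist (f ω) (g ω) ^ 2) := by
  rw [PiLp.dist_eq_sum (by norm_num), Real.sqrt_eq_rpow]
  norm_num

theorem norm_distFn (f g : PiLp 2 fun _ : Ω => Y) : ‖distFn f g‖ = dist f g := by
  simp [EuclideanSpace.norm_eq, dist_eq_sqrt_sum_dist_sq, distFn_apply]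

theorem norm_distFn_sq_le_inner (f g f' g' : PiLp 2 fun _ : Ω => Y) :
    ‖distFn f' g'‖ ^ 2 ≤ ⟪distFn f g + (distFn f' f + distFn g g'), distFn f' g'⟫_ℝ := by
  rw [EuclideanSpace.real_norm_sq_eq, PiLp.inner_apply]
  refine Finset.sum_le_sum fun ω _ => ?_
  simp only [PiLp.add_apply, distFn_apply, RCLike.inner_apply, conj_trivial, sq]
  gcongr
  linarith [dist_triangle4 (f' ω) (f ω) (g ω) (g' ω)]

theorem norm_distFn_sub_smul_distFn_sq_le {f g f' g' : PiLp 2 fun _ : Ω => Y} {ρ X : ℝ}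
    (hρ0 : 0 ≤ ρ) (hρ1 : ρ ≤ 1) (hmid : dist f g ≤ ρ * X)
    (hends : dist f' f + dist g g' ≤ (1 - ρ) * X) :
    ‖distFn f g - ρ • distFn f' g'‖ ^ 2 ≤ 2 * ρ * X * (X - dist f' g') := by
  rw [← norm_distFn f' g']
  refine norm_sub_smul_sq_le hρ0 hρ1 (by rwa [norm_distFn]) ?_ (norm_distFn_sq_le_inner f g f' g')
  exact (norm_add_le _ _).trans (by rwa [norm_distFn, norm_distFn])

end Rigidity

/-! ### Lipschitz maps from the grid that stretch every axis -/

section LongAxes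

variable {ι Ω Y : Type*} [DecidableEq ι] [PseudoMetricSpace Y]

/-- The average speed of `u` along the segment from `-2m` to `2m` on the `b`-th axis. The segment
extends beyond the box `[0, m]^ι`, so that every pair of points of the box whose distance is
realised by the coordinate `b` lies on a geodesic between its endpoints. -/
noncomputable def axisSpeed (u : (ι → ℤ) → PiLp 2 fun _ : Ω => Y) (m : ℕ) (b : ι) :
    EuclideanSpace ℝ Ω :=
  (4 * m : ℝ)⁻¹ • distFn (u (Pi.single b (-(2 * m)))) (u (Pi.single b (2 * m)))

variable [Fintype Ω] {u : (ι → ℤ) → PiLp 2 fun _ : Ω => Y} {m : ℕ} {C : ℝ≥0} {θ ζ : ℝ} {b : ι}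
  {p q : ι → ℤ}

theorem le_norm_axisSpeed (hm : 0 < m)
    (hlong : θ * (4 * m) * C ≤ dist (u (Pi.single b (-(2 * m)))) (u (Pi.single b (2 * m)))) :
    θ * C ≤ ‖axisSpeed u m b‖ := by
  rw [axisSpeed, norm_smul, norm_distFn, Real.norm_of_nonneg (by positivity),
    le_inv_mul_iff₀ (by positivity)]
  linarith

variable [Fintype ι]

theorem norm_distFn_sub_smul_axisSpeed_le (hm : 0 < m) (hζ0 : 0 ≤ ζ) (hζ : 8 * m * (1 - θ) ≤ ζ ^ 2)
    (hu : LipschitzWith C u)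
    (hlong : θ * (4 * m) * C ≤ dist (u (Pi.single b (-(2 * m)))) (u (Pi.single b (2 * m))))
    (hp : p ∈ Set.Icc 0 (m : ι → ℤ)) (hq : q ∈ Set.Icc 0 (m : ι → ℤ)) (hpq : p ≠ q)
    (hb : dist p q = q b - p b) :
    ‖distFn (u p) (u q) - dist p q • axisSpeed u m b‖ ≤ dist p q * (ζ * C) := by
  have hm' : (0 : ℝ) < 4 * m := by positivity
  have hle : dist p q ≤ 4 * m := by linarith [dist_le_of_mem_Icc hp hq]
  have hends : dist (u (Pi.single b (-(2 * m)))) (u p) + dist (u q) (u (Pi.single b (2 * m)))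
      ≤ (1 - dist p q / (4 * m)) * (4 * m * C) :=
    calc _ ≤ C * dist p (Pi.single b (-(2 * m))) + C * dist q (Pi.single b (2 * m)) :=
          dist_comm (u p) _ ▸ add_le_add (hu.dist_le_mul _ _) (hu.dist_le_mul _ _)
      _ ≤ C * (p b + 2 * m : ℝ) + C * (2 * m - q b : ℝ) := by
          gcongr
          · exact dist_single_neg_two_mul_le hp b
          · exact dist_single_two_mul_le hq b
      _ = _ := by rw [hb]; field_simp; ring
  have hmid : dist (u p) (u q) ≤ dist p q / (4 * m) * (4 * m * C) :=
    (hu.dist_le_mul p q).trans_eq (by field_simp)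
  have hrigid := norm_distFn_sub_smul_distFn_sq_le (by positivity) ((div_le_one hm').2 hle)
    hmid hends
  rw [axisSpeed, smul_smul, ← div_eq_mul_inv]
  refine le_of_sq_le_sq (hrigid.trans ?_) (by positivity)
  have hdist := one_le_dist_of_ne hpq
  calc _ = 2 * dist p q * C * (4 * m * C - dist (u (Pi.single b (-(2 * m))))
        (u (Pi.single b (2 * m)))) := by field_simp
    _ ≤ 2 * dist p q * C * (4 * m * C - θ * (4 * m) * C) := by gcongr
    _ = dist p q * (8 * m * (1 - θ)) * C ^ 2 := by ring
    _ ≤ dist p q * ζ ^ 2 * C ^ 2 := by gcongr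
    _ ≤ dist p q ^ 2 * ζ ^ 2 * C ^ 2 := by gcongr; exact le_self_pow₀ hdist two_ne_zero
    _ = (dist p q * (ζ * C)) ^ 2 := by ring

theorem norm_distFn_zero_one_sub_axisSpeed_le (hm : 0 < m) (hζ0 : 0 ≤ ζ)
    (hζ : 8 * m * (1 - θ) ≤ ζ ^ 2) (hu : LipschitzWith C u)
    (hlong : θ * (4 * m) * C ≤ dist (u (Pi.single b (-(2 * m)))) (u (Pi.single b (2 * m)))) :
    ‖distFn (u 0) (u 1) - axisSpeed u m b‖ ≤ ζ * C := by
  have : Nonempty ι := ⟨b⟩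
  have hdist : dist (0 : ι → ℤ) 1 = 1 := (dist_pi_const (0 : ℤ) 1).trans (by simp)
  have hone : (1 : ι → ℤ) ∈ Set.Icc 0 (m : ι → ℤ) := ⟨zero_le_one, fun _ => Int.toNat_le.1 hm⟩
  simpa [hdist] using norm_distFn_sub_smul_axisSpeed_le hm hζ0 hζ hu hlong
    ⟨le_rfl, zero_le_one.trans hone.2⟩ hone zero_ne_one (by simp [hdist])

theorem norm_distFn_sub_smul_distFn_zero_one_le [Nonempty ι] (hm : 0 < m) (hζ0 : 0 ≤ ζ)
    (hζ : 8 * m * (1 - θ) ≤ ζ ^ 2) (hu : LipschitzWith C u)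
    (hlong : ∀ b, θ * (4 * m) * C ≤ dist (u (Pi.single b (-(2 * m)))) (u (Pi.single b (2 * m))))
    (hp : p ∈ Set.Icc 0 (m : ι → ℤ)) (hq : q ∈ Set.Icc 0 (m : ι → ℤ)) :
    ‖distFn (u p) (u q) - dist p q • distFn (u 0) (u 1)‖ ≤ 2 * m * ζ * C := by
  obtain ⟨b, hb⟩ := exists_dist_apply_eq_dist p q
  wlog hpq : p b ≤ q b generalizing p q
  · rw [distFn_comm (u p), dist_comm p]
    exact this hq hp (by rw [dist_comm, hb, dist_comm]) (le_of_not_ge hpq)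
  rcases eq_or_ne p q with rfl | hne
  · simp only [distFn_self, dist_self, zero_smul, sub_zero, norm_zero]
    positivity
  have hb' : dist p q = q b - p b := by
    rw [← hb, dist_comm, Int.dist_eq, abs_of_nonneg (sub_nonneg.2 (mod_cast hpq))]
  have hunit := norm_distFn_zero_one_sub_axisSpeed_le hm hζ0 hζ hu (hlong b)
  calc ‖distFn (u p) (u q) - dist p q • distFn (u 0) (u 1)‖
      = ‖(distFn (u p) (u q) - dist p q • axisSpeed u m b)
          - dist p q • (distFn (u 0) (u 1) - axisSpeed u m b)‖ := by
        congr 1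
        module
    _ ≤ dist p q * (ζ * C) + dist p q * (ζ * C) := by
        refine (norm_sub_le _ _).trans (add_le_add
          (norm_distFn_sub_smul_axisSpeed_le hm hζ0 hζ hu (hlong b) hp hq hne hb') ?_)
        rw [norm_smul, Real.norm_of_nonneg dist_nonneg]
        gcongr
    _ = 2 * dist p q * ζ * C := by ring
    _ ≤ 2 * m * ζ * C := by gcongr; exact dist_le_of_mem_Icc hp hq

theorem exists_isRoughSimilarityOn_of_long_axes [Nonempty ι] (hm : 0 < m) (hC : 0 < C)
    (hζ0 : 0 ≤ ζ) (hζ : 8 * m * (1 - θ) ≤ ζ ^ 2) {s : Finset (ι → ℤ)}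
    (hs : ↑s ⊆ Set.Icc 0 (m : ι → ℤ)) (hζs : s.card * (2 * m * ζ) < θ - ζ)
    (hu : LipschitzWith C u)
    (hlong : ∀ b, θ * (4 * m) * C ≤ dist (u (Pi.single b (-(2 * m)))) (u (Pi.single b (2 * m)))) :
    ∃ ω, IsRoughSimilarityOn (fun p => u p ω) ↑s := by
  set W := distFn (u 0) (u 1)
  have hWnorm : (θ - ζ) * C ≤ ‖W‖ := by
    obtain ⟨b⟩ := ‹Nonempty ι›
    have hunit := norm_distFn_zero_one_sub_axisSpeed_le hm hζ0 hζ hu (hlong b)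
    have := norm_sub_norm_le (axisSpeed u m b) W
    rw [norm_sub_rev] at this
    linarith [le_norm_axisSpeed hm (hlong b)]
  have hsum : ∑ x ∈ s ×ˢ s, ‖distFn (u x.1) (u x.2) - dist x.1 x.2 • W‖ ^ 2 < ‖W‖ ^ 2 :=
    calc _ ≤ ∑ x ∈ s ×ˢ s, (2 * m * ζ * C) ^ 2 := Finset.sum_le_sum fun x hx => by
          obtain ⟨hx1, hx2⟩ := Finset.mem_product.1 hx
          gcongr
          exact norm_distFn_sub_smul_distFn_zero_one_le hm hζ0 hζ hu hlong (hs hx1) (hs hx2)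
      _ = (s.card * (2 * m * ζ) * C) ^ 2 := by
          rw [Finset.sum_const, Finset.card_product, nsmul_eq_mul]
          push_cast
          ring
      _ < ‖W‖ ^ 2 := by
          gcongr
          exact (mul_lt_mul_of_pos_right hζs (mod_cast hC)).trans_le hWnorm
  obtain ⟨ω, hω, hlt⟩ := exists_forall_abs_apply_lt_of_sum_norm_sq_lt hsum
  have hWω : 0 ≤ W ω := dist_nonneg
  rw [abs_of_nonneg hWω] at hω
  rw [abs_of_nonneg hWω] at hlt
  refine ⟨ω, W ω, hω, fun p hp q hq => ?_⟩
  have := (hlt (p, q) (Finset.mem_product.2 ⟨hp, hq⟩)).le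
  simpa [distFn_apply, mul_comm] using this

end LongAxes

/-! ### Displacements under the translations of a finite group -/

section Displacement

/-- The translate of `F` by `g`, as a point of `ℓ²(G; Y)`. -/
def translateLp {G Y : Type*} [Add G] (F : G → Y) (g : G) : PiLp 2 fun _ : G => Y :=
  WithLp.toLp 2 fun x => F (x + g)

/-- The distance in `ℓ²(G; Y)` between `F` and its translate by `g`, for the counting measure. -/
noncomputable def displacement {G Y : Type*} [AddMonoid G] [Fintype G] [PseudoMetricSpace Y]
    (F : G → Y) (g : G) : ℝ :=
  dist (translateLp F g) (translateLp F 0)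

variable {G Y : Type*} [Fintype G] [PseudoMetricSpace Y]

theorem displacement_eq_sqrt [AddMonoid G] (F : G → Y) (g : G) :
    displacement F g = √(∑ x, dist (F (x + g)) (F x) ^ 2) := by
  simp [displacement, translateLp, dist_eq_sqrt_sum_dist_sq]

theorem dist_translateLp_translateLp [AddCommGroup G] (F : G → Y) (a b : G) :
    dist (translateLp F a) (translateLp F b) = displacement F (a - b) := by
  rw [displacement_eq_sqrt, dist_eq_sqrt_sum_dist_sq,
    ← Equiv.sum_comp (Equiv.addRight b) fun x => dist (F (x + (a - b))) (F x) ^ 2]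
  simp only [translateLp, Equiv.coe_addRight, add_assoc, add_sub_cancel]

variable [AddMonoid G] {F : G → Y} {g : G} {r : ℝ}

theorem displacement_le (h : ∀ x, dist (F (x + g)) (F x) ≤ r) :
    displacement F g ≤ √(Fintype.card G) * r := by
  have hr : 0 ≤ r := dist_nonneg.trans (h 0)
  rw [displacement_eq_sqrt, ← Real.sqrt_sq hr, ← Real.sqrt_mul (by positivity),
    ← nsmul_eq_mul, Fintype.card, ← Finset.sum_const]
  gcongr
  exact h _

theorem le_displacement (hr : 0 ≤ r) (h : ∀ x, r ≤ dist (F (x + g)) (F x)) :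
    √(Fintype.card G) * r ≤ displacement F g := by
  rw [displacement_eq_sqrt, ← Real.sqrt_sq hr, ← Real.sqrt_mul (by positivity),
    ← nsmul_eq_mul, Fintype.card, ← Finset.sum_const]
  gcongr
  exact h _

theorem dist_rangeFactorization_add {G E : Type*} [AddGroup G] [SeminormedAddCommGroup E]
    (e : G →+ E) (x g : G) :
    dist (Set.rangeFactorization e (x + g)) (Set.rangeFactorization e x) = ‖e g‖ := by
  rw [Subtype.dist_eq, Set.rangeFactorization_coe, Set.rangeFactorization_coe, map_add,
    dist_eq_norm, add_sub_cancel_left]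

end Displacement

section Contraction

variable {ι G : Type*} [Fintype ι] [DecidableEq ι]

/-- If `ℓ` is bounded by `C` on the image of the cube `{-1, 0, 1}^ι` under a homomorphism `ψ`, then
along some axis it is at most `c * C` on the image of the vector of length `L`. For subadditive `ℓ`
this is only of interest when `c < L`. -/
def ContractsSomeAxis (ι : Type*) {G : Type*} [Fintype ι] [DecidableEq ι] [AddMonoid G]
    (ℓ : G → ℝ) (L : ℕ) (c : ℝ) : Prop :=
  ∀ (ψ : (ι → ℤ) →+ G) (C : ℝ), (∀ t, ‖t‖ ≤ 1 → ℓ (ψ t) ≤ C) →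
    ∃ b, ℓ (ψ (Pi.single b L)) ≤ c * C

theorem contractsSomeAxis_displacement [Nonempty ι] [AddCommGroup G] [Fintype G] {Y : Type*}
    [PseudoMetricSpace Y] {m : ℕ} {θ ζ : ℝ} (hm : 0 < m) (hζ0 : 0 ≤ ζ)
    (hζ : 8 * m * (1 - θ) ≤ ζ ^ 2) {s : Finset (ι → ℤ)} (hs : ↑s ⊆ Set.Icc 0 (m : ι → ℤ))
    (hζs : s.card * (2 * m * ζ) < θ - ζ) (hY : ∀ f : (ι → ℤ) → Y, ¬IsRoughSimilarityOn f ↑s)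
    (F : G → Y) : ContractsSomeAxis ι (displacement F) (4 * m) (θ * (4 * m)) := by
  intro ψ C hC
  by_contra! hlong
  lift C to ℝ≥0 using dist_nonneg.trans (hC 0 (by simp))
  set u : (ι → ℤ) → PiLp 2 fun _ : G => Y := fun p => translateLp F (ψ p)
  have hdist (p q : ι → ℤ) : dist (u p) (u q) = displacement F (ψ (p - q)) := by
    rw [dist_translateLp_translateLp, map_sub]
  have hu : LipschitzWith C u := lipschitzWith_of_dist_le_one fun p q hpq =>
    (hdist p q).trans_le (hC _ (by rwa [← dist_eq_norm]))
  have haxis (b : ι) :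
      θ * (4 * m) * C < dist (u (Pi.single b (-(2 * m)))) (u (Pi.single b (2 * m))) := by
    have hlen : (2 * m - -(2 * m) : ℤ) = (4 * m : ℕ) := by push_cast; ring
    rw [dist_comm, hdist, ← Pi.single_sub, hlen]
    exact hlong b
  have hCpos : 0 < C := by
    refine pos_iff_ne_zero.2 ?_
    rintro rfl
    obtain ⟨b⟩ := ‹Nonempty ι›
    simpa using (haxis b).trans_le (hu.dist_le_mul _ _)
  obtain ⟨ω, hω⟩ := exists_isRoughSimilarityOn_of_long_axes hm hCpos hζ0 hζ hs hζs hu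
    fun b => (haxis b).le
  exact hY _ hω

end Contraction

section Iteration

variable {ι : Type*} {k : ℕ}

/-- The vector of `ℤ^(ι^(k+1))` whose block of coordinates `v` with `v 0 = b` is `t b • u b`. -/
def blockVec (t : ι → ℤ) (u : ι → (Fin k → ι) → ℤ) (v : Fin (k + 1) → ι) : ℤ :=
  t (v 0) * u (v 0) (Fin.tail v)

theorem blockVec_add_left (t t' : ι → ℤ) (u : ι → (Fin k → ι) → ℤ) :
    blockVec (t + t') u = blockVec t u + blockVec t' u :=
  funext fun _ => add_mul _ _ _

theorem blockVec_add_right (t : ι → ℤ) (u u' : ι → (Fin k → ι) → ℤ) :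
    blockVec t (u + u') = blockVec t u + blockVec t u' :=
  funext fun _ => mul_add _ _ _

theorem norm_blockVec_le_one [Fintype ι] {t : ι → ℤ} {u : ι → (Fin k → ι) → ℤ} (ht : ‖t‖ ≤ 1)
    (hu : ∀ b, ‖u b‖ ≤ 1) : ‖blockVec t u‖ ≤ 1 := by
  refine (pi_norm_le_iff_of_nonneg zero_le_one).2 fun v => ?_
  rw [blockVec, norm_mul]
  exact mul_le_one₀ ((norm_le_pi_norm t _).trans ht) (norm_nonneg _)
    ((norm_le_pi_norm (u (v 0)) _).trans (hu _))

theorem blockVec_single [DecidableEq ι] (b : ι) (a : ℤ) (u : ι → (Fin k → ι) → ℤ) :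
    blockVec (Pi.single b a) u = blockVec (Pi.single b a) fun _ => u b := by
  ext v
  rcases eq_or_ne (v 0) b with h | h
  · simp [blockVec, h]
  · simp [blockVec, Pi.single_eq_of_ne h]

variable [Fintype ι] [DecidableEq ι] {G : Type*} [AddCommGroup G] {ℓ : G → ℝ} {L : ℕ} {c : ℝ}

/-- If every block contained a bad vector `u b`, then `t ↦ φ (blockVec t u)` would contract no
axis. -/
theorem ContractsSomeAxis.exists_block (h : ContractsSomeAxis ι ℓ L c)
    (φ : ((Fin (k + 1) → ι) → ℤ) →+ G) {C : ℝ} (hφ : ∀ w, ‖w‖ ≤ 1 → ℓ (φ w) ≤ C) :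
    ∃ b, ∀ u : (Fin k → ι) → ℤ, ‖u‖ ≤ 1 →
      ℓ (φ (blockVec (Pi.single b (L : ℤ)) fun _ => u)) ≤ c * C := by
  by_contra! hbad
  choose u hu hlt using hbad
  let ψ : (ι → ℤ) →+ G :=
    φ.comp (AddMonoidHom.mk' (blockVec · u) fun t t' => blockVec_add_left t t' u)
  obtain ⟨b, hb⟩ := h ψ C fun t ht => hφ _ (norm_blockVec_le_one ht hu)
  refine (hlt b).not_ge ?_
  rw [← blockVec_single]
  exact hb

theorem ContractsSomeAxis.exists_pow (h : ContractsSomeAxis ι ℓ L c) (k : ℕ)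
    (φ : ((Fin k → ι) → ℤ) →+ G) {C : ℝ} (hφ : ∀ w, ‖w‖ ≤ 1 → ℓ (φ w) ≤ C) :
    ∃ w : (Fin k → ι) → ℤ, (∃ v, w v = L ^ k) ∧ ℓ (φ w) ≤ c ^ k * C := by
  induction k generalizing C with
  | zero => exact ⟨1, ⟨Fin.elim0, by simp⟩, by simpa using hφ 1 (by simp)⟩
  | succ k ih =>
    obtain ⟨b, hb⟩ := h.exists_block φ hφ
    let ψ : ((Fin k → ι) → ℤ) →+ G := φ.comp (AddMonoidHom.mk'
      (fun u => blockVec (Pi.single b (L : ℤ)) fun _ => u)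
      fun u u' => blockVec_add_right _ (fun _ => u) fun _ => u')
    obtain ⟨w, ⟨v, hv⟩, hw⟩ := ih ψ hb
    refine ⟨blockVec (Pi.single b (L : ℤ)) fun _ => w, ⟨Fin.cons b v, ?_⟩, hw.trans_eq (by ring)⟩
    simp [blockVec, hv, pow_succ']

end Iteration

/-! ### Discrete tori -/

section Torus

/-- The discrete torus `(ℤ/T)^κ` inside `(ℝ/ℤ)^κ`, with the supremum distance. -/
noncomputable def torusHom (κ : Type*) (T : ℕ) [NeZero T] : (κ → ZMod T) →+ (κ → UnitAddCircle) :=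
  ZMod.toAddCircle.compLeft κ

/-- Reduction of the coordinates modulo `T`. -/
def modHom (κ : Type*) (T : ℕ) : (κ → ℤ) →+ (κ → ZMod T) :=
  (Int.castAddHom (ZMod T)).compLeft κ

variable {κ : Type*} {T : ℕ} [NeZero T]

theorem torusHom_modHom_apply (w : κ → ℤ) (v : κ) :
    torusHom κ T (modHom κ T w) v = ((w v / T : ℝ) : UnitAddCircle) :=
  ZMod.toAddCircle_intCast _

variable [Fintype κ]

theorem norm_torusHom_modHom_le {w : κ → ℤ} (hw : ‖w‖ ≤ 1) :
    ‖torusHom κ T (modHom κ T w)‖ ≤ 1 / T := by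
  refine (pi_norm_le_iff_of_nonneg (by positivity)).2 fun v => ?_
  have hwv : |(w v : ℝ)| ≤ 1 := (norm_le_pi_norm w v).trans hw
  rw [torusHom_modHom_apply]
  calc ‖((w v / T : ℝ) : UnitAddCircle)‖ ≤ |(w v / T : ℝ)| := QuotientAddGroup.norm_mk_le_norm
    _ ≤ 1 / T := by rw [abs_div, Nat.abs_cast]; gcongr

theorem half_le_norm_torusHom_modHom {w : κ → ℤ} {v : κ} (hv : 2 * w v = T) :
    1 / 2 ≤ ‖torusHom κ T (modHom κ T w)‖ := by
  have hT : (T : ℝ) = 2 * w v := mod_cast hv.symm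
  have hhalf : (w v / T : ℝ) = 1 / 2 := by
    have : (T : ℝ) ≠ 0 := NeZero.ne _
    rw [div_eq_iff this, hT]
    ring
  have hnorm : ‖((1 / 2 : ℝ) : UnitAddCircle)‖ = 1 / 2 := by
    rw [(AddCircle.norm_coe_eq_abs_iff 1 one_ne_zero).2 (by norm_num [abs_of_pos])]
    norm_num [abs_of_pos]
  calc (1 : ℝ) / 2 = ‖torusHom κ T (modHom κ T w) v‖ := by
        rw [torusHom_modHom_apply, hhalf, hnorm]
    _ ≤ _ := norm_le_pi_norm _ v

theorem one_le_pow_mul_of_embedsWithDistortion_torus {ι Y : Type*} [Fintype ι] [DecidableEq ι]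
    [PseudoMetricSpace Y] {L k : ℕ} (hT : T = 2 * L ^ k) {θ D : ℝ}
    (hY : ∀ F : ((Fin k → ι) → ZMod T) → Y, ContractsSomeAxis ι (displacement F) L (θ * L))
    (hD : 0 ≤ D) (h : EmbedsWithDistortion (Set.range (torusHom (Fin k → ι) T)) Y D) :
    1 ≤ θ ^ k * D := by
  obtain ⟨f, lam, hlam, hf⟩ := h
  let F := f ∘ Set.rangeFactorization (torusHom (Fin k → ι) T)
  set R := √(Fintype.card ((Fin k → ι) → ZMod T))
  have hR : 0 < R := Real.sqrt_pos.2 (mod_cast Fintype.card_pos)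
  have hnear (w : (Fin k → ι) → ℤ) (hw : ‖w‖ ≤ 1) :
      displacement F (modHom _ T w) ≤ R * (D * (lam * (1 / T))) := by
    refine displacement_le fun x => (hf _ _).2.trans ?_
    rw [dist_rangeFactorization_add]
    gcongr
    exact norm_torusHom_modHom_le hw
  obtain ⟨w, ⟨v, hv⟩, hw⟩ := (hY F).exists_pow k (modHom _ T) hnear
  have hfar : R * (lam * (1 / 2)) ≤ displacement F (modHom _ T w) := by
    refine le_displacement (by positivity) fun x => le_trans ?_ (hf _ _).1
    rw [dist_rangeFactorization_add]
    gcongr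
    exact half_le_norm_torusHom_modHom (v := v) (by simp [hv, hT])
  have hT0 : (T : ℝ) ≠ 0 := NeZero.ne _
  have hLT : (L : ℝ) ^ k = T / 2 := by rw [hT]; push_cast; ring
  have hcompare : R * (lam * (1 / 2)) * 1 ≤ R * (lam * (1 / 2)) * (θ ^ k * D) :=
    calc _ ≤ (θ * L) ^ k * (R * (D * (lam * (1 / T)))) := by
          rw [mul_one]
          exact hfar.trans hw
      _ = _ := by
          rw [mul_pow, hLT]
          field_simp
  exact le_of_mul_le_mul_left hcompare (by positivity)

end Torus

/-! ### Finite spaces that embed badly -/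

section Parameters

theorem exists_rigidity_parameters {m : ℕ} (hm : 0 < m) (N : ℕ) :
    ∃ θ ζ : ℝ, 0 < θ ∧ θ < 1 ∧ 0 ≤ ζ ∧ 8 * m * (1 - θ) ≤ ζ ^ 2 ∧ N * (2 * m * ζ) < θ - ζ := by
  have hm1 : (1 : ℝ) ≤ m := mod_cast hm
  set ζ : ℝ := 1 / (8 * m * (N + 1)) with hζ
  have hζ0 : 0 < ζ := by positivity
  have hζm : 8 * m * ((N + 1) * ζ) = 1 := by rw [hζ]; field_simp
  have hζ1 : ζ ≤ 1 / 8 := one_div_le_one_div_of_le (by norm_num) (by nlinarith)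
  have hθ : ζ ^ 2 / (8 * m) ≤ ζ ^ 2 := div_le_self (sq_nonneg ζ) (by linarith)
  have hθ0 : 0 < ζ ^ 2 / (8 * m) := by positivity
  refine ⟨1 - ζ ^ 2 / (8 * m), ζ, by nlinarith, by linarith, hζ0.le, ?_, ?_⟩
  · rw [sub_sub_cancel, mul_div_cancel₀ _ (by positivity)]
  · nlinarith

theorem exists_rpow_le_pow_of_le_mul_pow {B γ C : ℝ} (hB : 1 < B) (hγ : 1 < γ) (hC : 0 < C) :
    ∃ α κ : ℝ, 0 < α ∧ 0 < κ ∧ ∀ (x : ℝ) (k : ℕ), 0 ≤ x → x ≤ C * B ^ k → κ * x ^ α ≤ γ ^ k := by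
  have hB0 : 0 < B := one_pos.trans hB
  refine ⟨Real.logb B γ, (C ^ Real.logb B γ)⁻¹, Real.logb_pos hB hγ, by positivity,
    fun x k hx hxk => ?_⟩
  rw [inv_mul_le_iff₀ (by positivity)]
  calc x ^ Real.logb B γ ≤ (C * B ^ k) ^ Real.logb B γ := by
        gcongr
        exact (Real.logb_pos hB hγ).le
    _ = C ^ Real.logb B γ * γ ^ k := by
        rw [Real.mul_rpow hC.le (by positivity), ← Real.rpow_pow_comm hB0.le,
          Real.rpow_logb hB0 hB.ne' (one_pos.trans hγ)]

theorem two_mul_pow_pow_le {L : ℕ} (hL : 2 ≤ L) (n k : ℕ) :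
    (2 * L ^ k) ^ n ^ k ≤ L ^ (2 * n) ^ k :=
  calc (2 * L ^ k) ^ n ^ k ≤ (L ^ (k + 1)) ^ n ^ k := by rw [pow_succ']; gcongr
    _ = L ^ ((k + 1) * n ^ k) := (pow_mul _ _ _).symm
    _ ≤ L ^ (2 ^ k * n ^ k) := by
        gcongr
        · omega
        · exact k.lt_two_pow_self
    _ = L ^ (2 * n) ^ k := by rw [mul_pow]

theorem exists_pow_le_and_log_le {L n p : ℕ} (hL : 2 ≤ L) (hn : 0 < n) (hp : 2 ≤ p) :
    ∃ k, (2 * L ^ k) ^ n ^ k ≤ p ∧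
      Real.log p ≤ Real.log L * (2 * n) * (2 * n) ^ k := by
  classical
  have hbig : ∃ k, p < L ^ (2 * n) ^ (k + 1) :=
    ⟨p, calc p < L ^ p := Nat.lt_pow_self hL
      _ ≤ L ^ (2 * n) ^ (p + 1) := by
        gcongr
        · omega
        · exact p.le_succ.trans (Nat.lt_pow_self (by omega)).le⟩
  refine ⟨Nat.find hbig, ?_, ?_⟩
  · rcases hk : Nat.find hbig with _ | k
    · simpa using hp
    · exact (two_mul_pow_pow_le hL n (k + 1)).trans
        (not_lt.1 (Nat.find_min hbig (hk ▸ k.lt_succ_self)))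
  · calc Real.log p ≤ Real.log (L ^ (2 * n) ^ (Nat.find hbig + 1) : ℕ) :=
          Real.log_le_log (by positivity) (mod_cast (Nat.find_spec hbig).le)
      _ = Real.log L * (2 * n) * (2 * n) ^ Nat.find hbig := by
          push_cast
          rw [Real.log_pow]
          push_cast
          ring

end Parameters

section BadSpaces

theorem exists_injective_fin_subset_range {X : Type*} [Infinite X] {S : Finset X} {p : ℕ}
    (hS : S.card ≤ p) : ∃ e : Fin p → X, Function.Injective e ∧ ↑S ⊆ Set.range e := by
  obtain ⟨S', hSS', hcard⟩ := Infinite.exists_superset_card_eq S p hS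
  let e := (S'.equivFinOfCardEq hcard).symm
  refine ⟨fun i => e i, Subtype.val_injective.comp e.injective, fun x hx => ?_⟩
  exact ⟨e.symm ⟨x, hSS' hx⟩, by simp⟩

instance infinite_addCircle {T : ℝ} [hT : Fact (0 < T)] : Infinite (AddCircle T) :=
  (AddCircle.equivIco T 0).infinite_iff.2 (Set.Ico_infinite (by simpa using hT.out)).to_subtype

theorem exists_torus_card_le_and_distortion_ge (M : Type u) [MetricSpace M] [Fintype M] [Nonempty M]
    {ε : ℝ} (hε : 0 < ε) :
    ∃ (L : ℕ) (θ : ℝ), 2 ≤ L ∧ 0 < θ ∧ θ < 1 ∧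
      ∀ k, ∃ S : Finset ((Fin k → M) → UnitAddCircle), S.card ≤ (2 * L ^ k) ^ Fintype.card M ^ k ∧
        ∀ (Y : Type v) [PseudoMetricSpace Y] (D : ℝ), ¬EmbedsWithDistortion M Y (1 + ε) → 0 ≤ D →
          EmbedsWithDistortion S Y D → 1 ≤ θ ^ k * D := by
  classical
  obtain ⟨m, hm, hembed⟩ := exists_embedsWithDistortion_of_isRoughSimilarityOn.{u, v} M hε
  obtain ⟨θ, ζ, hθ0, hθ1, hζ0, hζ, hζs⟩ :=
    exists_rigidity_parameters hm (Finset.Icc 0 (m : M → ℤ)).card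
  have : NeZero m := ⟨hm.ne'⟩
  refine ⟨4 * m, θ, by omega, hθ0, hθ1, fun k => ?_⟩
  let torus := torusHom (Fin k → M) (2 * (4 * m) ^ k)
  refine ⟨Finset.univ.image torus, Finset.card_image_le.trans_eq (by simp [ZMod.card]),
    fun Y _ D hY hD h => ?_⟩
  have hrough (f : (M → ℤ) → Y) : ¬IsRoughSimilarityOn f ↑(Finset.Icc 0 (m : M → ℤ)) :=
    fun hf => hY (hembed Y f (by rwa [Finset.coe_Icc] at hf))
  refine one_le_pow_mul_of_embedsWithDistortion_torus (L := 4 * m) (ι := M) rfl (fun F => ?_) hD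
    (h.comp_isometry (g := Set.inclusion (by simp [torus])) (Isometry.of_dist_eq fun _ _ => rfl))
  exact mod_cast contractsSomeAxis_displacement hm hζ0 hζ (Finset.coe_Icc _ _).le hζs hrough F

theorem exists_isMetricOn_forall_rpow_log_le (M : Type u) [MetricSpace M] [Finite M] {ε : ℝ}
    (hε : 0 < ε) :
    ∃ α κ : ℝ, 0 < α ∧ 0 < κ ∧ ∀ p : ℕ, 2 ≤ p →
      ∃ (d : Fin p → Fin p → ℝ) (hd : IsMetricOn d),
        ∀ (Y : Type v) [PseudoMetricSpace Y] (D : ℝ), ¬EmbedsWithDistortion M Y (1 + ε) →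
          (letI := hd.metricSpace; EmbedsWithDistortion (Fin p) Y D) →
            κ * Real.log p ^ α ≤ D := by
  rcases isEmpty_or_nonempty M with _ | _
  · exact ⟨1, 1, one_pos, one_pos, fun p _ => ⟨_, isMetricOn_dist_comp Fin.val_injective,
      fun Y _ D hY => absurd EmbedsWithDistortion.of_isEmpty hY⟩⟩
  have := Fintype.ofFinite M
  obtain ⟨L, θ, hL, hθ0, hθ1, htorus⟩ := exists_torus_card_le_and_distortion_ge.{u, v} M hε
  have hn : 0 < Fintype.card M := Fintype.card_pos
  have hlogL : 0 < Real.log L := Real.log_pos (mod_cast hL)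
  obtain ⟨α, κ, hα, hκ, hrate⟩ := exists_rpow_le_pow_of_le_mul_pow
    (B := 2 * Fintype.card M) (C := Real.log L * (2 * Fintype.card M))
    (mod_cast (by omega)) ((one_lt_inv₀ hθ0).2 hθ1) (by positivity)
  refine ⟨α, κ, hα, hκ, fun p hp => ?_⟩
  obtain ⟨k, hkp, hlogp⟩ := exists_pow_le_and_log_le hL hn hp
  obtain ⟨S, hcard, hS⟩ := htorus k
  obtain ⟨e, he, hSe⟩ := exists_injective_fin_subset_range (hcard.trans hkp)
  refine ⟨_, isMetricOn_dist_comp he, fun Y _ D hY h => ?_⟩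
  have hD : 1 ≤ D := by
    have : Nontrivial (Fin p) := Fin.nontrivial_iff_two_le.2 hp
    let _ := (isMetricOn_dist_comp he).metricSpace
    exact h.one_le
  have hθD : 1 ≤ θ ^ k * D := hS Y D hY (by linarith) (.of_subset_range he hSe h)
  calc κ * Real.log p ^ α ≤ θ⁻¹ ^ k := hrate _ k (Real.log_natCast_nonneg p) hlogp
    _ ≤ D := by rwa [inv_pow, inv_le_iff_one_le_mul₀' (by positivity)]

end BadSpaces

/-- **General metric dichotomy (Mendel–Naor).** For every family `(N i)` of metric spaces,
either every finite metric space embeds into some member of the family with distortion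
arbitrarily close to `1`, or there are `α, κ > 0` and, for every `n ≥ 2`, an `n`-point metric
space all of whose embeddings into each member of the family have distortion at least
`κ (log n)^α`. (Finite metric spaces are modelled as metrics on `Fin n`.) -/
theorem metric_dichotomy {ι : Type u} (N : ι → Type v) [∀ i, MetricSpace (N i)] :
    (∀ (n : ℕ) (d : Fin n → Fin n → ℝ), IsMetricOn d → ∀ ε : ℝ, 0 < ε →
      ∃ (i : ι) (f : Fin n → N i) (lam : ℝ), 0 < lam ∧
        ∀ x y : Fin n, lam * d x y ≤ dist (f x) (f y) ∧
          dist (f x) (f y) ≤ (1 + ε) * (lam * d x y)) ∨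
    (∃ α κ : ℝ, 0 < α ∧ 0 < κ ∧ ∀ n : ℕ, 2 ≤ n →
      ∃ d : Fin n → Fin n → ℝ, IsMetricOn d ∧
        ∀ (i : ι) (f : Fin n → N i) (lam D : ℝ), 0 < lam →
          (∀ x y : Fin n, lam * d x y ≤ dist (f x) (f y) ∧
            dist (f x) (f y) ≤ D * (lam * d x y)) →
          κ * Real.log (n : ℝ) ^ α ≤ D) := by
  refine or_iff_not_imp_left.2 fun hnot => ?_
  push Not at hnot
  obtain ⟨n, d, hd, ε, hε, hN⟩ := hnot
  let _ := hd.metricSpace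
  have hbad (i : ι) : ¬EmbedsWithDistortion (Fin n) (N i) (1 + ε) := by
    rintro ⟨f, lam, hlam, hf⟩
    obtain ⟨x, y, hxy⟩ := hN i f lam hlam
    exact (hxy (hf x y).1).not_ge (hf x y).2
  obtain ⟨α, κ, hα, hκ, hspaces⟩ := exists_isMetricOn_forall_rpow_log_le.{0, v} (Fin n) hε
  refine ⟨α, κ, hα, hκ, fun p hp => ?_⟩
  obtain ⟨d', hd', hd'N⟩ := hspaces p hp
  exact ⟨d', hd', fun i f lam D hlam hf => hd'N (N i) D (hbad i) ⟨f, lam, hlam, hf⟩⟩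
end

section
/- For every ε ∈ (0,1) there exists c_ε ∈ [1,∞) with the following property. Let (M,d_M) be a compact metric space and let μ be a Borel probability measure on M. Then there exist a compact subset S ⊆ M and a Borel probability measure ν supported on S such that: (i) (S,d_M) embeds into an ultrametric space with distortion at most 9/ε, i.e., there is an ultrametric ρ on S with d_M(x,y) ≤ ρ(x,y) ≤ (9/ε) d_M(x,y) for all x,y ∈ S; and (ii) ν(B(x,r) ∩ S) ≤ (μ(B(x, c_ε r)))^{1−ε} for every x ∈ M and r ∈ [0,∞), where B(x,r) = {y ∈ M : d_M(x,y) ≤ r}. -/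
open MeasureTheory Metric

universe u

/-- `ρ` is an ultrametric on `A`. -/
def IsUltrametricOn {A : Type*} (ρ : A → A → ℝ) : Prop :=
  IsMetricOn ρ ∧ ∀ x y z, ρ x z ≤ max (ρ x y) (ρ y z)

/-!
Suppose first that `μ` has finite support. A set `C` of diameter at most `Δ` is divided by
repeatedly cutting off a ball, discarding the points in a buffer of width about `ε Δ / 9` around it,
and handing the mass of the buffer to the ball, so that no mass is lost and the surviving pieces are
at mutual distance at least `ε Δ / 9`. A telescoping product over radii finds a ball whose buffer is
not much heavier than the ball itself. If some buffer carries too large a share of the mass, then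
`C` is first replaced by a ball of smaller radius, which has almost the same mass exponent. Along
the recursion the mass handed to a piece stays below `μ(B)^(1 - ε)` for the balls `B` that exceed
the piece by a factor depending only on `ε`.

A general `μ` is a weak limit of finitely supported measures. Their skeletons subconverge by
compactness of the space of probability measures, the ball bound passes to the limit by the
portmanteau theorem, and so does the distortion bound, since it can be expressed through chains:
`S` embeds into an ultrametric space with distortion `D` if and only if the endpoints of each chain
of `s`-jumps in `S` are at distance at most `D s`.
-/

/-! ### Chains -/

section Chain

variable {M : Type*} [PseudoMetricSpace M] {S T : Set M} {D s : ℝ} {x y z : M}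

/-- A single step of an `s`-chain: a jump of length at most `s` between two points of `S`. -/
def ChainStep (S : Set M) (s : ℝ) (a b : M) : Prop :=
  a ∈ S ∧ b ∈ S ∧ dist a b ≤ s

/-- Every chain in `S` with jumps of length at most `s` has displacement at most `D * s`. For
`0 < D` this says that `S` embeds into an ultrametric space with distortion at most `D`, but it
mentions no ultrametric, which makes it stable under limits of the set `S`. -/
def ChainDistortionLE (D : ℝ) (S : Set M) : Prop :=
  ∀ s, 0 ≤ s → ∀ x ∈ S, ∀ y, Relation.ReflTransGen (ChainStep S s) x y → dist x y ≤ D * s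

lemma ChainStep.symm (h : ChainStep S s x y) : ChainStep S s y x :=
  ⟨h.2.1, h.1, by rw [dist_comm]; exact h.2.2⟩

lemma ChainStep.mono {t : ℝ} (hst : s ≤ t) (h : ChainStep S s x y) : ChainStep S t x y :=
  ⟨h.1, h.2.1, h.2.2.trans hst⟩

lemma chain_symm (h : Relation.ReflTransGen (ChainStep S s) x y) :
    Relation.ReflTransGen (ChainStep S s) y x :=
  Relation.ReflTransGen.mono (fun _ _ => ChainStep.symm) _ _ h.swap

lemma chain_mono {t : ℝ} (hst : s ≤ t) (h : Relation.ReflTransGen (ChainStep S s) x y) :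
    Relation.ReflTransGen (ChainStep S t) x y :=
  Relation.ReflTransGen.mono (fun _ _ => ChainStep.mono hst) _ _ h

lemma ChainDistortionLE.empty : ChainDistortionLE D (∅ : Set M) :=
  fun _ _ _ hx => hx.elim

lemma ChainDistortionLE.singleton (hD : 0 ≤ D) (x : M) : ChainDistortionLE D {x} := by
  rintro s hs a ha y h
  obtain rfl : a = x := ha
  have hya : y = a := by
    induction h with
    | refl => rfl
    | tail _ hstep _ => exact hstep.2.1
  rw [hya, dist_self]
  positivity

lemma chain_of_chain_union (hsep : ∀ a ∈ S, ∀ b ∈ T, s < dist a b) (hx : x ∈ S)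
    (h : Relation.ReflTransGen (ChainStep (S ∪ T) s) x y) :
    y ∈ S ∧ Relation.ReflTransGen (ChainStep S s) x y := by
  induction h with
  | refl => exact ⟨hx, .refl⟩
  | @tail b c _ hstep ih =>
    have hc : c ∈ S := hstep.2.1.resolve_right fun hcT => (hsep b ih.1 c hcT).not_ge hstep.2.2
    exact ⟨hc, ih.2.tail ⟨ih.1, hc, hstep.2.2⟩⟩

lemma ChainDistortionLE.union {Δ : ℝ} (hD : 0 < D) (hS : ChainDistortionLE D S)
    (hT : ChainDistortionLE D T) (hdiam : ∀ x ∈ S ∪ T, ∀ y ∈ S ∪ T, dist x y ≤ Δ)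
    (hsep : ∀ x ∈ S, ∀ y ∈ T, Δ ≤ D * dist x y) : ChainDistortionLE D (S ∪ T) := by
  intro s hs x hx y h
  by_cases hΔ : Δ ≤ D * s
  · have hy : y ∈ S ∪ T := by
      rcases h.cases_tail with rfl | ⟨_, _, hstep⟩
      exacts [hx, hstep.2.1]
    exact (hdiam x hx y hy).trans hΔ
  have hgap : ∀ a ∈ S, ∀ b ∈ T, s < dist a b := fun a ha b hb =>
    lt_of_mul_lt_mul_left ((not_le.1 hΔ).trans_le (hsep a ha b hb)) hD.le
  rcases hx with hx | hx
  · exact hS s hs x hx y (chain_of_chain_union hgap hx h).2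
  · rw [Set.union_comm] at h
    refine hT s hs x hx y (chain_of_chain_union (fun a ha b hb => ?_) hx h).2
    rw [dist_comm]
    exact hgap b hb a ha

lemma IsUltrametricOn.of_dist_le_of_le {M : Type*} [MetricSpace M] {S : Set M} {D : ℝ}
    {ρ : S → S → ℝ} (hsymm : ∀ x y, ρ x y = ρ y x)
    (hmax : ∀ x y z, ρ x z ≤ max (ρ x y) (ρ y z))
    (hlower : ∀ x y : S, dist (x : M) y ≤ ρ x y)
    (hupper : ∀ x y : S, ρ x y ≤ D * dist (x : M) y) : IsUltrametricOn ρ := by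
  have hnonneg (x y : S) : 0 ≤ ρ x y := dist_nonneg.trans (hlower x y)
  refine ⟨⟨hnonneg, fun x y => ⟨fun h => ?_, ?_⟩, hsymm, fun x y z => ?_⟩, hmax⟩
  · exact Subtype.ext (dist_le_zero.1 (h ▸ hlower x y))
  · rintro rfl
    refine le_antisymm ?_ (hnonneg x x)
    simpa only [dist_self, mul_zero] using hupper x x
  · exact (hmax x y z).trans (max_le_add_of_nonneg (hnonneg x y) (hnonneg y z))

/-- The minimax (single linkage) distance: the infimum of all `s` such that `x` and `y` are joined
by an `s`-chain in `S`. -/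
noncomputable def chainDist (S : Set M) (x y : M) : ℝ :=
  sInf {s | 0 ≤ s ∧ Relation.ReflTransGen (ChainStep S s) x y}

lemma chainDist_le (hs : 0 ≤ s) (h : Relation.ReflTransGen (ChainStep S s) x y) :
    chainDist S x y ≤ s :=
  csInf_le ⟨0, fun _ ht => ht.1⟩ ⟨hs, h⟩

lemma chainDist_le_dist (hx : x ∈ S) (hy : y ∈ S) : chainDist S x y ≤ dist x y :=
  chainDist_le dist_nonneg (.single ⟨hx, hy, le_rfl⟩)

lemma exists_chain_of_chainDist_lt (hx : x ∈ S) (hy : y ∈ S) {t : ℝ} (h : chainDist S x y < t) :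
    ∃ s, 0 ≤ s ∧ s < t ∧ Relation.ReflTransGen (ChainStep S s) x y := by
  have hne : {s | 0 ≤ s ∧ Relation.ReflTransGen (ChainStep S s) x y}.Nonempty :=
    ⟨dist x y, dist_nonneg, .single ⟨hx, hy, le_rfl⟩⟩
  obtain ⟨s, ⟨hs, hchain⟩, hst⟩ := exists_lt_of_csInf_lt hne h
  exact ⟨s, hs, hst, hchain⟩

lemma chainDist_comm (S : Set M) (x y : M) : chainDist S x y = chainDist S y x :=
  congrArg sInf (Set.ext fun _ => and_congr_right fun _ => ⟨chain_symm, chain_symm⟩)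

lemma chainDist_le_max (hx : x ∈ S) (hy : y ∈ S) (hz : z ∈ S) :
    chainDist S x z ≤ max (chainDist S x y) (chainDist S y z) := by
  refine le_of_forall_gt_imp_ge_of_dense fun t ht => ?_
  obtain ⟨s₁, hs₁, hst₁, h₁⟩ := exists_chain_of_chainDist_lt hx hy ((le_max_left _ _).trans_lt ht)
  obtain ⟨s₂, -, hst₂, h₂⟩ := exists_chain_of_chainDist_lt hy hz ((le_max_right _ _).trans_lt ht)
  exact chainDist_le (hs₁.trans hst₁.le) ((chain_mono hst₁.le h₁).trans (chain_mono hst₂.le h₂))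

lemma ChainDistortionLE.dist_le_mul_chainDist (hD : 0 < D) (hS : ChainDistortionLE D S)
    (hx : x ∈ S) (hy : y ∈ S) : dist x y ≤ D * chainDist S x y := by
  rw [mul_comm, ← div_le_iff₀ hD]
  refine le_of_forall_gt_imp_ge_of_dense fun t ht => ?_
  obtain ⟨s, hs, hst, h⟩ := exists_chain_of_chainDist_lt hx hy ht
  rw [div_le_iff₀ hD, mul_comm]
  exact (hS s hs x hx y h).trans (by gcongr)

lemma ChainDistortionLE.exists_ultrametric {M : Type*} [MetricSpace M] {S : Set M} {D : ℝ}
    (hD : 0 < D) (hS : ChainDistortionLE D S) :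
    ∃ ρ : S → S → ℝ, IsUltrametricOn ρ ∧
      ∀ x y : S, dist (x : M) (y : M) ≤ ρ x y ∧ ρ x y ≤ D * dist (x : M) (y : M) := by
  have hlower (x y : S) : dist (x : M) y ≤ D * chainDist S x y :=
    hS.dist_le_mul_chainDist hD x.2 y.2
  have hupper (x y : S) : D * chainDist S x y ≤ D * dist (x : M) y :=
    mul_le_mul_of_nonneg_left (chainDist_le_dist x.2 y.2) hD.le
  refine ⟨fun x y => D * chainDist S x y, .of_dist_le_of_le (fun x y => ?_) (fun x y z => ?_)
    hlower hupper, fun x y => ⟨hlower x y, hupper x y⟩⟩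
  · rw [chainDist_comm]
  · rw [← mul_max_of_nonneg _ _ hD.le]
    exact mul_le_mul_of_nonneg_left (chainDist_le_max x.2 y.2 z.2) hD.le

end Chain

/-! ### Sets carrying a skeleton -/

lemma exists_mem_of_measureReal_ne_zero {α : Type*} [MeasurableSpace α] {ν : Measure α}
    {S A : Set α} (hS : ν Sᶜ = 0) (hA : ν.real A ≠ 0) : ∃ x ∈ S, x ∈ A := by
  by_contra! h
  have hAS : A ⊆ Sᶜ := fun x hxA hxS => h x hxS hxA
  exact hA (by rw [measureReal_def, measure_mono_null hAS hS, ENNReal.toReal_zero])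

section CarriesSkeleton

variable {M : Type*} [PseudoMetricSpace M] [MeasurableSpace M] {D m m₁ m₂ : ℝ} {B : M → ℝ → ℝ}
  {X Y : Set M}

/-- Some subset of `X` of chain distortion at most `D` carries a measure of total mass `m` that
gives mass at most `B y r` to the closed ball of centre `y` and radius `r`. -/
def CarriesSkeleton (D : ℝ) (B : M → ℝ → ℝ) (X : Set M) (m : ℝ) : Prop :=
  ∃ S ⊆ X, ∃ ν : Measure M, IsFiniteMeasure ν ∧ ν.real Set.univ = m ∧ ν Sᶜ = 0 ∧
    ChainDistortionLE D S ∧ ∀ y r, 0 ≤ r → ν.real (closedBall y r) ≤ B y r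

lemma CarriesSkeleton.mono (hXY : X ⊆ Y) (h : CarriesSkeleton D B X m) :
    CarriesSkeleton D B Y m :=
  let ⟨S, hSX, hν⟩ := h
  ⟨S, hSX.trans hXY, hν⟩

lemma carriesSkeleton_zero (hB : ∀ y r, 0 ≤ B y r) (X : Set M) : CarriesSkeleton D B X 0 :=
  ⟨∅, X.empty_subset, 0, inferInstance, by simp, by simp, .empty,
    by simpa using fun y r _ => hB y r⟩

lemma carriesSkeleton_singleton [MeasurableSingletonClass M] (hD : 0 ≤ D) (hB : ∀ y r, 0 ≤ B y r)
    (hm : 0 ≤ m) {x : M} (hball : ∀ y r, dist x y ≤ r → m ≤ B y r) :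
    CarriesSkeleton D B {x} m := by
  refine ⟨{x}, subset_rfl, ENNReal.ofReal m • Measure.dirac x, ?_, ?_, ?_, .singleton hD x,
    fun y r _ => ?_⟩
  · exact Measure.smul_finite _ ENNReal.ofReal_ne_top
  · simp [measureReal_def, hm]
  · simp
  · by_cases hxy : dist x y ≤ r
    · simpa [measureReal_def, hxy, hm] using hball y r hxy
    · simpa [measureReal_def, hxy] using hB y r

lemma CarriesSkeleton.union {Δ : ℝ} (hD : 0 < D) (hX : CarriesSkeleton D B X m₁)
    (hY : CarriesSkeleton D B Y m₂) (hdiam : ∀ x ∈ X ∪ Y, ∀ y ∈ X ∪ Y, dist x y ≤ Δ)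
    (hsep : ∀ x ∈ X, ∀ y ∈ Y, Δ ≤ D * dist x y)
    (hball : ∀ x ∈ X, ∀ y r, dist x y ≤ r → Δ ≤ D * (2 * r) → m₁ + m₂ ≤ B y r) :
    CarriesSkeleton D B (X ∪ Y) (m₁ + m₂) := by
  obtain ⟨S, hSX, ν₁, hfin₁, rfl, hS, hDS, hB₁⟩ := hX
  obtain ⟨T, hTY, ν₂, hfin₂, rfl, hT, hDT, hB₂⟩ := hY
  have hST : S ∪ T ⊆ X ∪ Y := Set.union_subset_union hSX hTY
  refine ⟨S ∪ T, hST, ν₁ + ν₂, inferInstance, measureReal_add_apply, ?_, ?_, fun y r hr => ?_⟩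
  · rw [Measure.add_apply, Set.compl_union, measure_mono_null Set.inter_subset_left hS,
      measure_mono_null Set.inter_subset_right hT, add_zero]
  · exact hDS.union hD hDT (fun x hx y hy => hdiam x (hST hx) y (hST hy))
      fun x hx y hy => hsep x (hSX hx) y (hTY hy)
  rw [measureReal_add_apply]
  by_cases h₁ : ν₁.real (closedBall y r) = 0
  · rw [h₁, zero_add]
    exact hB₂ y r hr
  by_cases h₂ : ν₂.real (closedBall y r) = 0
  · rw [h₂, add_zero]
    exact hB₁ y r hr
  obtain ⟨s, hs, hsy⟩ := exists_mem_of_measureReal_ne_zero hS h₁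
  obtain ⟨t, ht, hty⟩ := exists_mem_of_measureReal_ne_zero hT h₂
  have hst : dist s t ≤ 2 * r := by
    linarith [dist_triangle_right s t y, mem_closedBall.1 hsy, mem_closedBall.1 hty]
  calc ν₁.real (closedBall y r) + ν₂.real (closedBall y r)
      ≤ ν₁.real Set.univ + ν₂.real Set.univ :=
        add_le_add (measureReal_mono (Set.subset_univ _)) (measureReal_mono (Set.subset_univ _))
    _ ≤ B y r := hball s (hSX hs) y r hsy
        ((hsep s (hSX hs) t (hTY ht)).trans (mul_le_mul_of_nonneg_left hst hD.le))

end CarriesSkeleton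

/-! ### Cutting off a ball of controlled growth -/

lemma inter_closedBall_subset_inter_closedBall {M : Type*} [PseudoMetricSpace M] {X Y : Set M}
    {y : M} {r r' : ℝ} (hXY : X ⊆ Y) (hr : r ≤ r') :
    X ∩ closedBall y r ⊆ Y ∩ closedBall y r' :=
  Set.inter_subset_inter hXY (closedBall_subset_closedBall hr)

section ScaleMass

variable {M : Type*} [PseudoMetricSpace M] [MeasurableSpace M] {μ : Measure M} {k n : ℕ}
  {X Y : Set M} {Δ Δ' : ℝ} {x y : M}

/-- The product over `i < k` of the masses in `X` of the balls around `y` of radii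
`(1 / 5 + 3 / 25 * (i / n)) * Δ`, raised to the power `1 / n`. It interpolates the power `k / n` of
the mass of a ball across the scales at which pieces are separated. -/
noncomputable def scaleMass (μ : Measure M) (k n : ℕ) (X : Set M) (Δ : ℝ) (y : M) : ℝ :=
  (∏ i ∈ Finset.range k, μ.real (X ∩ closedBall y ((1 / 5 + 3 / 25 * (i / n)) * Δ))) ^
    (1 / n : ℝ)

lemma scaleMass_nonneg (μ : Measure M) (k n : ℕ) (X : Set M) (Δ : ℝ) (y : M) :
    0 ≤ scaleMass μ k n X Δ y :=
  Real.rpow_nonneg (Finset.prod_nonneg fun _ _ => measureReal_nonneg) _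

lemma scaleMass_pow (hn : n ≠ 0) : scaleMass μ k n X Δ y ^ n =
    ∏ i ∈ Finset.range k, μ.real (X ∩ closedBall y ((1 / 5 + 3 / 25 * (i / n)) * Δ)) := by
  rw [scaleMass, one_div (n : ℝ)]
  exact Real.rpow_inv_natCast_pow (Finset.prod_nonneg fun _ _ => measureReal_nonneg) hn

lemma measureReal_inter_closedBall_pos [IsFiniteMeasure μ] (hX : ∀ z ∈ X, 0 < μ.real {z})
    (hx : x ∈ X) {r : ℝ} (hr : 0 ≤ r) : 0 < μ.real (X ∩ closedBall x r) :=
  (hX x hx).trans_le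
    (measureReal_mono (Set.singleton_subset_iff.2 ⟨hx, mem_closedBall_self hr⟩))

lemma scaleMass_pos [IsFiniteMeasure μ] (hX : ∀ z ∈ X, 0 < μ.real {z}) (hx : x ∈ X)
    (hΔ : 0 ≤ Δ) : 0 < scaleMass μ k n X Δ x :=
  Real.rpow_pos_of_pos
    (Finset.prod_pos fun _ _ => measureReal_inter_closedBall_pos hX hx (by positivity)) _

lemma scaleMass_mono [IsFiniteMeasure μ] (hXY : X ⊆ Y) (hΔ : Δ ≤ Δ') (y : M) :
    scaleMass μ k n X Δ y ≤ scaleMass μ k n Y Δ' y := by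
  refine Real.rpow_le_rpow (Finset.prod_nonneg fun _ _ => measureReal_nonneg) ?_ (by positivity)
  refine Finset.prod_le_prod (fun _ _ => measureReal_nonneg) fun i _ => measureReal_mono ?_
  exact inter_closedBall_subset_inter_closedBall hXY (by gcongr)

lemma rpow_le_scaleMass [IsFiniteMeasure μ] (hΔ : 0 ≤ Δ) (y : M) :
    μ.real (X ∩ closedBall y (Δ / 5)) ^ (k / n : ℝ) ≤ scaleMass μ k n X Δ y := by
  rw [div_eq_mul_one_div (k : ℝ), Real.rpow_mul measureReal_nonneg, Real.rpow_natCast]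
  refine Real.rpow_le_rpow (pow_nonneg measureReal_nonneg _) ?_ (by positivity)
  rw [← Finset.card_range k, ← Finset.prod_const, Finset.card_range]
  refine Finset.prod_le_prod (fun _ _ => measureReal_nonneg) fun i _ => measureReal_mono ?_
  refine inter_closedBall_subset_inter_closedBall subset_rfl ?_
  have : 0 ≤ 3 / 25 * (i / n : ℝ) * Δ := by positivity
  linarith

lemma scaleMass_le_one [IsZeroOrProbabilityMeasure μ] : scaleMass μ k n X Δ y ≤ 1 :=
  Real.rpow_le_one (Finset.prod_nonneg fun _ _ => measureReal_nonneg)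
    (Finset.prod_le_one (fun _ _ => measureReal_nonneg) fun _ _ => measureReal_le_one)
    (by positivity)

/-- Multiplying the failing inequalities over `j < n` telescopes to a contradiction. -/
lemma exists_mul_le_mul_of_pow_le_prod {f : ℕ → ℝ} (hf : ∀ j, 0 < f j) (hn : n ≠ 0) {a b : ℝ}
    (hb : 0 < b) (ha : a ^ n ≤ ∏ i ∈ Finset.range k, f i)
    (hb' : ∏ i ∈ Finset.range k, f (n + i) ≤ b ^ n) : ∃ j < n, f (j + k) * a ≤ f j * b := by
  by_contra! hlt
  have hshift : (∏ j ∈ Finset.range n, f j) * ∏ i ∈ Finset.range k, f (n + i) =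
      (∏ j ∈ Finset.range n, f (j + k)) * ∏ i ∈ Finset.range k, f i := by
    rw [← Finset.prod_range_add, add_comm n k, Finset.prod_range_add, mul_comm]
    simp only [add_comm]
  have hprod : (∏ j ∈ Finset.range n, f j) * b ^ n < (∏ j ∈ Finset.range n, f (j + k)) * a ^ n := by
    have := Finset.prod_lt_prod_of_nonempty (fun j _ => mul_pos (hf j) hb)
      (fun j hj => hlt j (Finset.mem_range.1 hj)) (Finset.nonempty_range_iff.2 hn)
    simpa only [Finset.prod_mul_distrib, Finset.prod_const, Finset.card_range] using this
  have hle_left := mul_le_mul_of_nonneg_left hb'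
    (Finset.prod_pos fun j (_ : j ∈ Finset.range n) => hf j).le
  have hle_right := mul_le_mul_of_nonneg_left ha
    (Finset.prod_pos fun j (_ : j ∈ Finset.range n) => hf (j + k)).le
  linarith

lemma exists_radius_mul_scaleMass_le [IsFiniteMeasure μ] (hn : n ≠ 0)
    (hX : ∀ z ∈ X, 0 < μ.real {z}) (hx : x ∈ X) (hΔ : 0 < Δ) : ∃ r, 0 ≤ r ∧ r ≤ Δ / 5 ∧
      μ.real (X ∩ closedBall x (r + 3 / 25 * (k / n) * Δ)) * scaleMass μ k n X (2 / 5 * Δ) x ≤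
        μ.real (X ∩ closedBall x r) * scaleMass μ k n X Δ x := by
  set f : ℕ → ℝ := fun j => μ.real (X ∩ closedBall x ((2 / 25 + 3 / 25 * (j / n)) * Δ)) with hf
  have hfpos (j : ℕ) : 0 < f j := measureReal_inter_closedBall_pos hX hx (by positivity)
  have hsmall : scaleMass μ k n X (2 / 5 * Δ) x ^ n ≤ ∏ i ∈ Finset.range k, f i := by
    rw [scaleMass_pow hn]
    refine Finset.prod_le_prod (fun _ _ => measureReal_nonneg) fun i _ => measureReal_mono ?_
    refine inter_closedBall_subset_inter_closedBall subset_rfl ?_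
    have : 0 ≤ (i / n : ℝ) * Δ := by positivity
    linarith
  have hlarge : ∏ i ∈ Finset.range k, f (n + i) = scaleMass μ k n X Δ x ^ n := by
    rw [scaleMass_pow hn]
    refine Finset.prod_congr rfl fun i _ => ?_
    simp only [hf]
    congr 3
    push_cast
    field_simp
    ring
  obtain ⟨j, hj, hle⟩ := exists_mul_le_mul_of_pow_le_prod hfpos hn (scaleMass_pos hX hx hΔ.le)
    hsmall hlarge.le
  have hjn : (j / n : ℝ) ≤ 1 := div_le_one_of_le₀ (by exact_mod_cast hj.le) (by positivity)
  have hrΔ : (2 / 25 + 3 / 25 * (j / n)) * Δ ≤ Δ / 5 :=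
    calc (2 / 25 + 3 / 25 * (j / n)) * Δ ≤ (2 / 25 + 3 / 25 * 1) * Δ := by gcongr
      _ = Δ / 5 := by ring
  refine ⟨(2 / 25 + 3 / 25 * (j / n)) * Δ, by positivity, hrΔ, ?_⟩
  convert hle using 5
  push_cast
  ring

lemma exists_ball_mul_scaleMass_le [IsFiniteMeasure μ] (hn : n ≠ 0) (hfin : X.Finite)
    (hne : X.Nonempty) (hX : ∀ z ∈ X, 0 < μ.real {z}) (hΔ : 0 < Δ) :
    ∃ x ∈ X, ∃ r, 0 ≤ r ∧ r ≤ Δ / 5 ∧ ∀ y ∈ X ∩ closedBall x r,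
      μ.real (X ∩ closedBall x (r + 3 / 25 * (k / n) * Δ)) *
          scaleMass μ k n (X ∩ closedBall x r) (2 / 5 * Δ) y ≤
        μ.real (X ∩ closedBall x r) * scaleMass μ k n X Δ x := by
  obtain ⟨x, hx, hmax⟩ := X.exists_max_image (scaleMass μ k n X (2 / 5 * Δ)) hfin hne
  obtain ⟨r, hr, hrΔ, hle⟩ := exists_radius_mul_scaleMass_le (k := k) hn hX hx hΔ
  refine ⟨x, hx, r, hr, hrΔ, fun y hy => le_trans ?_ hle⟩
  have hscale : scaleMass μ k n (X ∩ closedBall x r) (2 / 5 * Δ) y ≤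
      scaleMass μ k n X (2 / 5 * Δ) x :=
    (scaleMass_mono Set.inter_subset_left le_rfl y).trans (hmax y hy.1)
  gcongr

end ScaleMass

section Carve

variable {M : Type*} [PseudoMetricSpace M] [MeasurableSpace M] {μ : Measure M} [IsFiniteMeasure μ]
  {k n : ℕ} {X Y : Set M} {D Δ b t Q : ℝ} {B : M → ℝ → ℝ}

/-- A finite set `X` of diameter at most `Δ` that can be divided into children of diameter at most
`2 / 5 * Δ`. Here `Q` is the density, relative to `μ`, of the mass to be distributed over the
children, and `t` is the maximal mass given to a single child. -/
structure IsCarvable (μ : Measure M) (k n : ℕ) (b t Q Δ : ℝ) (X : Set M) : Prop where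
  finite : X.Finite
  measureReal_singleton_pos : ∀ z ∈ X, 0 < μ.real {z}
  dist_le : ∀ x ∈ X, ∀ y ∈ X, dist x y ≤ Δ
  mul_scaleMass_mul_le : ∀ y ∈ X,
    Q * scaleMass μ k n X Δ y * μ.real (X ∩ closedBall y (Δ / 5)) ^ b ≤ 1
  mul_measureReal_le : ∀ y ∈ X,
    Q * μ.real (X ∩ closedBall y ((1 / 5 + 3 / 25 * (k / n)) * Δ)) ≤ t

lemma IsCarvable.subset (hX : IsCarvable μ k n b t Q Δ X) (hb : 0 ≤ b) (hQ : 0 ≤ Q) (hYX : Y ⊆ X) :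
    IsCarvable μ k n b t Q Δ Y where
  finite := hX.finite.subset hYX
  measureReal_singleton_pos z hz := hX.measureReal_singleton_pos z (hYX hz)
  dist_le x hx y hy := hX.dist_le x (hYX hx) y (hYX hy)
  mul_scaleMass_mul_le y hy := by
    refine le_trans ?_ (hX.mul_scaleMass_mul_le y (hYX hy))
    have hscale : scaleMass μ k n Y Δ y ≤ scaleMass μ k n X Δ y := scaleMass_mono hYX le_rfl y
    have hball : μ.real (Y ∩ closedBall y (Δ / 5)) ≤ μ.real (X ∩ closedBall y (Δ / 5)) :=
      measureReal_mono (Set.inter_subset_inter_left _ hYX)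
    have := scaleMass_nonneg μ k n X Δ y
    gcongr
  mul_measureReal_le y hy :=
    (mul_le_mul_of_nonneg_left (measureReal_mono (Set.inter_subset_inter_left _ hYX)) hQ).trans
      (hX.mul_measureReal_le y (hYX hy))

lemma IsCarvable.exists_ball (hX : IsCarvable μ k n b t Q Δ X) (hn : n ≠ 0) (hb : 0 ≤ b)
    (hQ : 0 ≤ Q) (hΔ : 0 < Δ) (hne : X.Nonempty) : ∃ x ∈ X, ∃ r, 0 ≤ r ∧ r ≤ Δ / 5 ∧
      Q * μ.real (X ∩ closedBall x (r + 3 / 25 * (k / n) * Δ)) ≤ t ∧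
      ∀ y ∈ X ∩ closedBall x r, Q * μ.real (X ∩ closedBall x (r + 3 / 25 * (k / n) * Δ)) *
        scaleMass μ k n (X ∩ closedBall x r) (2 / 5 * Δ) y ≤
          μ.real (X ∩ closedBall x r) ^ (1 - b) := by
  obtain ⟨x, hx, r, hr, hrΔ, hcut⟩ :=
    exists_ball_mul_scaleMass_le (k := k) hn hX.finite hne hX.measureReal_singleton_pos hΔ
  refine ⟨x, hx, r, hr, hrΔ, le_trans ?_ (hX.mul_measureReal_le x hx), fun y hy => ?_⟩
  · refine mul_le_mul_of_nonneg_left (measureReal_mono ?_) hQ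
    exact inter_closedBall_subset_inter_closedBall subset_rfl (by linarith)
  set C := X ∩ closedBall x r
  have hCpos : 0 < μ.real C :=
    measureReal_inter_closedBall_pos hX.measureReal_singleton_pos hx hr
  have hCle : μ.real C ≤ μ.real (X ∩ closedBall x (Δ / 5)) :=
    measureReal_mono (inter_closedBall_subset_inter_closedBall subset_rfl hrΔ)
  have := scaleMass_nonneg μ k n X Δ x
  calc Q * μ.real (X ∩ closedBall x (r + 3 / 25 * (k / n) * Δ)) * scaleMass μ k n C (2 / 5 * Δ) y
      ≤ Q * (μ.real C * scaleMass μ k n X Δ x) := by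
        rw [mul_assoc]
        exact mul_le_mul_of_nonneg_left (hcut y hy) hQ
    _ = Q * scaleMass μ k n X Δ x * μ.real C ^ b * μ.real C ^ (1 - b) := by
        rw [mul_assoc _ (μ.real C ^ b), ← Real.rpow_add hCpos, add_sub_cancel, Real.rpow_one]
        ring
    _ ≤ Q * scaleMass μ k n X Δ x * μ.real (X ∩ closedBall x (Δ / 5)) ^ b *
          μ.real C ^ (1 - b) := by gcongr
    _ ≤ 1 * μ.real C ^ (1 - b) := by gcongr; exact hX.mul_scaleMass_mul_le x hx
    _ = μ.real C ^ (1 - b) := one_mul _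

lemma le_mul_dist_of_mem_closedBall_of_notMem {M : Type*} [PseudoMetricSpace M] {x y z : M}
    {D Δ r γ : ℝ} (hD : 0 ≤ D) (hDγ : 1 ≤ D * γ) (hΔ : 0 ≤ Δ) (hy : y ∈ closedBall x r)
    (hz : z ∉ closedBall x (r + γ * Δ)) : Δ ≤ D * dist y z := by
  rw [mem_closedBall] at hy hz
  have hgap : γ * Δ ≤ dist y z := by linarith [dist_triangle_left z x y]
  calc Δ ≤ D * γ * Δ := le_mul_of_one_le_left hΔ hDγ
    _ = D * (γ * Δ) := mul_assoc ..
    _ ≤ D * dist y z := mul_le_mul_of_nonneg_left hgap hD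

/-- Repeatedly cut off a ball together with a buffer around it. The ball becomes a child that
inherits the mass of its buffer, so no mass is lost and distinct children are well separated. -/
lemma IsCarvable.carriesSkeleton [OpensMeasurableSpace M] (hX : IsCarvable μ k n b t Q Δ X)
    (hn : n ≠ 0) (hb : 0 ≤ b) (hQ : 0 ≤ Q) (hΔ : 0 < Δ) (hD : 0 < D)
    (hDkn : 1 ≤ D * (3 / 25 * (k / n))) (hB : ∀ y r, 0 ≤ B y r)
    (hball : ∀ x ∈ X, ∀ y r, dist x y ≤ r → Δ ≤ D * (2 * r) → Q * μ.real X ≤ B y r)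
    (hchild : ∀ C ⊆ X, C.Nonempty → (∀ x ∈ C, ∀ y ∈ C, dist x y ≤ 2 / 5 * Δ) → ∀ m, 0 ≤ m →
      m ≤ t → (∀ y ∈ C, m * scaleMass μ k n C (2 / 5 * Δ) y ≤ μ.real C ^ (1 - b)) →
      CarriesSkeleton D B C m) :
    CarriesSkeleton D B X (Q * μ.real X) := by
  induction hN : X.ncard using Nat.strong_induction_on generalizing X with
  | _ N ih =>
  obtain rfl | hne := X.eq_empty_or_nonempty
  · simpa using carriesSkeleton_zero hB ∅
  obtain ⟨x, hx, r, hr, hrΔ, hmass, hscale⟩ := hX.exists_ball hn hb hQ hΔ hne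
  set R := r + 3 / 25 * (k / n) * Δ
  set C := X ∩ closedBall x r
  set Y := X \ closedBall x R
  have hCX : C ⊆ X := Set.inter_subset_left
  have hYX : Y ⊆ X := Set.sdiff_subset
  have hsplit : Q * μ.real (X ∩ closedBall x R) + Q * μ.real Y = Q * μ.real X := by
    rw [← mul_add, measureReal_inter_add_sdiff isClosed_closedBall.measurableSet]
  have hCcarries : CarriesSkeleton D B C (Q * μ.real (X ∩ closedBall x R)) := by
    refine hchild C hCX ⟨x, hx, mem_closedBall_self hr⟩ (fun y hy z hz => ?_) _ (by positivity)
      hmass hscale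
    linarith [dist_triangle_right y z x, mem_closedBall.1 hy.2, mem_closedBall.1 hz.2]
  have hYcarries : CarriesSkeleton D B Y (Q * μ.real Y) := by
    have hxY : x ∉ Y := fun h => h.2 (mem_closedBall_self (by positivity))
    have hlt : Y.ncard < N :=
      hN ▸ Set.ncard_lt_ncard (hYX.ssubset_of_mem_notMem hx hxY) hX.finite
    refine ih _ hlt (hX.subset hb hQ hYX) (fun z hz y s hzy hs => ?_)
      (fun C hC => hchild C (hC.trans hYX)) rfl
    exact (mul_le_mul_of_nonneg_left (measureReal_mono hYX) hQ).trans
      (hball z (hYX hz) y s hzy hs)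
  have hCY : C ∪ Y ⊆ X := Set.union_subset hCX hYX
  rw [← hsplit] at hball ⊢
  exact (hCcarries.union hD hYcarries (fun y hy z hz => hX.dist_le y (hCY hy) z (hCY hz))
    (fun y hy z hz => le_mul_dist_of_mem_closedBall_of_notMem hD.le hDkn hΔ.le hy.2 hz.2)
    fun z hz => hball z (hCX hz)).mono hCY

end Carve

/-! ### The recursive construction -/

lemma exists_pos_pairwise_le_dist_of_finite {M : Type*} [MetricSpace M] {C : Set M}
    (hC : C.Finite) : ∃ δ > 0, C.Pairwise fun x y => δ ≤ dist x y := by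
  by_cases hnt : C.Nontrivial
  · exact ⟨C.infsep, hC.infsep_pos_iff_nontrivial.2 hnt, fun x hx y hy hxy =>
      Set.infsep_le_dist_of_mem hx hy hxy⟩
  · exact ⟨1, one_pos, (Set.not_nontrivial_iff.1 hnt).pairwise _⟩

lemma exists_natCast_div_mem_Icc {a b : ℝ} (ha : 0 ≤ a) (hab : a < b) :
    ∃ k n : ℕ, (k / n : ℝ) ∈ Set.Icc a b := by
  obtain ⟨q, haq, hqb⟩ := exists_rat_btwn hab
  lift q to ℚ≥0 using by exact_mod_cast ha.trans haq.le
  have hq : (q.num / q.den : ℝ) = ((q : ℚ) : ℝ) := by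
    rw [Rat.cast_nnratCast, NNRat.cast_def]
  exact ⟨q.num, q.den, hq ▸ haq.le, hq ▸ hqb.le⟩

lemma measure_compl_inter_atoms_eq_zero {α : Type*} [MeasurableSpace α] {μ : Measure α}
    [IsFiniteMeasure μ] {F : Set α} (hF : F.Countable) (hμF : μ Fᶜ = 0) :
    μ (F ∩ {z | 0 < μ.real {z}})ᶜ = 0 := by
  have hnull : μ (F ∩ {z | μ {z} = 0}) = 0 := by
    rw [← Set.biUnion_of_singleton (F ∩ _),
      measure_biUnion_null_iff (hF.mono Set.inter_subset_left)]
    exact fun z hz => hz.2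
  refine measure_mono_null (fun z hz => ?_) (measure_union_null hμF hnull)
  by_cases hzF : z ∈ F
  · have hz0 : ¬ 0 < μ.real {z} := fun h => hz ⟨hzF, h⟩
    exact .inr ⟨hzF, (measureReal_eq_zero_iff).1 (le_antisymm (not_lt.1 hz0) measureReal_nonneg)⟩
  · exact .inl hzF

section ChildCap

variable {α : Type*} [MeasurableSpace α] {μ : Measure α} {ε m : ℝ} {A C C' : Set α}

/-- The maximal mass given to a child of a piece `C` that carries mass `m`. -/
noncomputable def childCap (μ : Measure α) (ε : ℝ) (C : Set α) (m : ℝ) : ℝ :=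
  max (μ.real C ^ (1 - ε)) (m * μ.real C ^ (ε / 960))

lemma rpow_lt_measureReal_of_childCap_lt (hm : 0 ≤ m) (hv : 0 < μ.real C)
    (hheavy : childCap μ ε C m < m / μ.real C * μ.real A) :
    μ.real C ^ (1 + ε / 960) < μ.real A := by
  have hlt : m * μ.real C ^ (ε / 960) < m * (μ.real A / μ.real C) :=
    calc m * μ.real C ^ (ε / 960) < m / μ.real C * μ.real A := (le_max_right _ _).trans_lt hheavy
      _ = m * (μ.real A / μ.real C) := by ring
  rw [add_comm, Real.rpow_add_one hv.ne']
  exact (lt_div_iff₀ hv).1 (lt_of_mul_lt_mul_left hlt hm)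

lemma div_mul_measureReal_le_childCap [IsZeroOrProbabilityMeasure μ] (hε : ε ≤ 1) (hm : 0 ≤ m)
    (hv : 0 < μ.real C) (hC' : μ.real C ^ (1 + ε / 960) ≤ μ.real C')
    (hA : μ.real A ≤ μ.real C ^ (31 / 30 : ℝ)) :
    m / μ.real C' * μ.real A ≤ childCap μ ε C m := by
  refine le_trans ?_ (le_max_right _ _)
  have hexp : μ.real C ^ (31 / 30 : ℝ) ≤ μ.real C ^ (ε / 960 + (1 + ε / 960)) :=
    Real.rpow_le_rpow_of_exponent_ge hv measureReal_le_one (by linarith)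
  calc m / μ.real C' * μ.real A ≤ m / μ.real C' * μ.real C ^ (ε / 960 + (1 + ε / 960)) := by
        gcongr
        exact hA.trans hexp
    _ = m * μ.real C ^ (ε / 960) * (μ.real C ^ (1 + ε / 960) / μ.real C') := by
        rw [Real.rpow_add hv]
        ring
    _ ≤ m * μ.real C ^ (ε / 960) :=
        mul_le_of_le_one_right (by positivity) (div_le_one_of_le₀ hC' measureReal_nonneg)

end ChildCap

section Recursion

variable {M : Type*} [PseudoMetricSpace M] [MeasurableSpace M] {μ : Measure M}
  {ε : ℝ} {k n : ℕ} {C C' : Set M} {Δ Δ' m Q r : ℝ} {x y z : M}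

/-- The constant `c_ε`. The exponent makes `ε / 960 * ⌈960 / ε⌉₊` at least `1`. -/
noncomputable def skeletonDilation (ε : ℝ) : ℝ :=
  1 + 36 / ε * 4 ^ ⌈960 / ε⌉₊

/-- The bound `μ(B(y, c_ε r))^(1 - ε)` on the mass of the closed ball of centre `y` and
radius `r`. -/
noncomputable def skeletonBound (μ : Measure M) (ε : ℝ) (y : M) (r : ℝ) : ℝ :=
  μ.real (closedBall y (skeletonDilation ε * r)) ^ (1 - ε)

/-- The invariant of the recursion: the piece `C`, of diameter at most `Δ`, is to carry mass `m`.
The bound on `m * scaleMass` makes it possible to subdivide `C`, and the last bound says that `m`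
is dominated by the masses of balls, up to an exponent that improves with the number of scales
by which the ball exceeds `C`. -/
structure IsAdmissible (μ : Measure M) (ε : ℝ) (k n : ℕ) (C : Set M) (Δ m : ℝ) : Prop where
  nonneg : 0 ≤ m
  dist_le : ∀ x ∈ C, ∀ y ∈ C, dist x y ≤ Δ
  mul_scaleMass_le : ∀ y ∈ C, m * scaleMass μ k n C Δ y ≤ μ.real C ^ (1 - ε / 32)
  le_rpow : ∀ y ∈ C, ∀ j : ℕ, m ≤ μ.real (closedBall y (4 ^ j * Δ)) ^ min (ε / 960 * j) (1 - ε)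

lemma one_le_skeletonDilation (hε : 0 < ε) : 1 ≤ skeletonDilation ε :=
  le_add_of_nonneg_right (by positivity)

lemma skeletonBound_nonneg (μ : Measure M) (ε : ℝ) (y : M) (r : ℝ) : 0 ≤ skeletonBound μ ε y r :=
  Real.rpow_nonneg measureReal_nonneg _

lemma IsAdmissible.le_one (hC : IsAdmissible μ ε k n C Δ m) (hε : ε ≤ 1) (hy : y ∈ C) : m ≤ 1 := by
  have hm := hC.le_rpow y hy 0
  rwa [Nat.cast_zero, mul_zero, min_eq_left (sub_nonneg.2 hε), Real.rpow_zero] at hm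

lemma IsAdmissible.scaleMass_le_of_rpow_lt (hC : IsAdmissible μ ε k n C Δ m) (hv : 0 < μ.real C)
    (hm : μ.real C ^ (1 - ε) < m) (hz : z ∈ C) :
    scaleMass μ k n C Δ z ≤ μ.real C ^ (31 / 32 * ε) := by
  have hvm : 0 < μ.real C ^ (1 - ε) := Real.rpow_pos_of_pos hv _
  refine le_of_mul_le_mul_left ?_ hvm
  calc μ.real C ^ (1 - ε) * scaleMass μ k n C Δ z ≤ m * scaleMass μ k n C Δ z :=
        mul_le_mul_of_nonneg_right hm.le (scaleMass_nonneg ..)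
    _ ≤ μ.real C ^ (1 - ε / 32) := hC.mul_scaleMass_le z hz
    _ = μ.real C ^ (1 - ε) * μ.real C ^ (31 / 32 * ε) := by
        rw [← Real.rpow_add hv]
        congr 1
        ring

variable [IsProbabilityMeasure μ]

lemma IsAdmissible.le_skeletonBound (hC : IsAdmissible μ ε k n C Δ m) (hε : ε ∈ Set.Ioo 0 1)
    (hx : x ∈ C) (hxy : dist x y ≤ r) (hΔr : Δ ≤ 36 / ε * r) : m ≤ skeletonBound μ ε y r := by
  have hε0 : 0 < ε := hε.1
  have hexp : 1 - ε ≤ ε / 960 * ⌈960 / ε⌉₊ :=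
    calc 1 - ε ≤ ε / 960 * (960 / ε) := by field_simp; linarith
      _ ≤ ε / 960 * ⌈960 / ε⌉₊ := by gcongr; exact Nat.le_ceil _
  have hradius : 4 ^ ⌈960 / ε⌉₊ * Δ + dist x y ≤ skeletonDilation ε * r :=
    calc 4 ^ ⌈960 / ε⌉₊ * Δ + dist x y ≤ 4 ^ ⌈960 / ε⌉₊ * (36 / ε * r) + r := by gcongr
      _ = skeletonDilation ε * r := by rw [skeletonDilation]; ring
  have hm := hC.le_rpow x hx ⌈960 / ε⌉₊
  rw [min_eq_right hexp] at hm
  exact hm.trans (Real.rpow_le_rpow measureReal_nonneg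
    (measureReal_mono (closedBall_subset_closedBall' hradius)) (sub_nonneg.2 hε.2.le))

lemma le_skeletonBound_of_le_rpow (hε : ε ∈ Set.Ioo 0 1) (hm : m ≤ μ.real {x} ^ (1 - ε))
    (hxy : dist x y ≤ r) : m ≤ skeletonBound μ ε y r := by
  refine hm.trans (Real.rpow_le_rpow measureReal_nonneg (measureReal_mono ?_)
    (sub_nonneg.2 hε.2.le))
  have hr : r ≤ skeletonDilation ε * r :=
    le_mul_of_one_le_left (dist_nonneg.trans hxy) (one_le_skeletonDilation hε.1)
  exact Set.singleton_subset_iff.2 (hxy.trans hr)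

lemma IsAdmissible.le_rpow_of_singleton (hx : IsAdmissible μ ε k n {x} Δ m)
    (hε : ε ∈ Set.Ioo 0 1) (hkn : (k / n : ℝ) ≤ 15 / 16 * ε) (hΔ : 0 ≤ Δ)
    (hpos : 0 < μ.real {x}) : m ≤ μ.real {x} ^ (1 - ε) := by
  have hscale : μ.real {x} ^ (k / n : ℝ) ≤ scaleMass μ k n {x} Δ x := by
    refine le_of_eq_of_le ?_ (rpow_le_scaleMass hΔ x)
    rw [Set.inter_eq_left.2 (Set.singleton_subset_iff.2 (mem_closedBall_self (by positivity)))]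
  have hmul : m * μ.real {x} ^ (k / n : ℝ) ≤ μ.real {x} ^ (1 - ε / 32) :=
    (mul_le_mul_of_nonneg_left hscale hx.nonneg).trans (hx.mul_scaleMass_le x rfl)
  calc m ≤ μ.real {x} ^ (1 - ε / 32) / μ.real {x} ^ (k / n : ℝ) :=
        (le_div_iff₀ (Real.rpow_pos_of_pos hpos _)).2 hmul
    _ = μ.real {x} ^ (1 - ε / 32 - k / n) := (Real.rpow_sub hpos _ _).symm
    _ ≤ μ.real {x} ^ (1 - ε) :=
        Real.rpow_le_rpow_of_exponent_ge hpos measureReal_le_one (by linarith [hε.1])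

lemma IsAdmissible.childCap_le_one (hC : IsAdmissible μ ε k n C Δ m) (hε : ε ∈ Set.Ioo 0 1)
    (hy : y ∈ C) : childCap μ ε C m ≤ 1 := by
  have hε0 := hε.1
  refine max_le (Real.rpow_le_one measureReal_nonneg measureReal_le_one (sub_nonneg.2 hε.2.le)) ?_
  exact mul_le_one₀ (hC.le_one hε.2.le hy) (Real.rpow_nonneg measureReal_nonneg _)
    (Real.rpow_le_one measureReal_nonneg measureReal_le_one (by positivity))

lemma IsAdmissible.childCap_le_rpow (hC : IsAdmissible μ ε k n C Δ m) (hε : ε ∈ Set.Ioo 0 1)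
    (hy : y ∈ C) (hΔ : Δ ≤ 4 * Δ') (j : ℕ) :
    childCap μ ε C m ≤ μ.real (closedBall y (4 ^ j * Δ')) ^ min (ε / 960 * j) (1 - ε) := by
  have hε0 := hε.1
  have hε1 : 0 ≤ 1 - ε := sub_nonneg.2 hε.2.le
  obtain _ | j := j
  · rw [Nat.cast_zero, mul_zero, min_eq_left hε1, Real.rpow_zero]
    exact hC.childCap_le_one hε hy
  set w := μ.real (closedBall y (4 ^ j * Δ))
  have hΔ0 : 0 ≤ Δ := dist_nonneg.trans (hC.dist_le y hy y hy)
  have hCw : μ.real C ≤ w := measureReal_mono fun z hz =>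
    (hC.dist_le z hz y hy).trans (le_mul_of_one_le_left hΔ0 (one_le_pow₀ (by norm_num)))
  have hexp : min (ε / 960 * (j + 1 : ℕ)) (1 - ε) ≤ min (ε / 960 * j) (1 - ε) + ε / 960 := by
    rw [← min_add_add_right]
    exact min_le_min (by push_cast; linarith) (by linarith)
  have hwle : w ^ min (ε / 960 * (j + 1 : ℕ)) (1 - ε) ≤
      μ.real (closedBall y (4 ^ (j + 1) * Δ')) ^ min (ε / 960 * (j + 1 : ℕ)) (1 - ε) := by
    refine Real.rpow_le_rpow measureReal_nonneg (measureReal_mono ?_) (by positivity)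
    refine closedBall_subset_closedBall ?_
    calc 4 ^ j * Δ ≤ 4 ^ j * (4 * Δ') := by gcongr
      _ = 4 ^ (j + 1) * Δ' := by ring
  refine le_trans (max_le ?_ ?_) hwle
  · calc μ.real C ^ (1 - ε) ≤ w ^ (1 - ε) := by gcongr
      _ ≤ w ^ min (ε / 960 * (j + 1 : ℕ)) (1 - ε) :=
        Real.rpow_le_rpow_of_exponent_ge' measureReal_nonneg measureReal_le_one (by positivity)
          (min_le_right _ _)
  · calc m * μ.real C ^ (ε / 960) ≤ w ^ min (ε / 960 * j) (1 - ε) * w ^ (ε / 960) := by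
          gcongr
          exact hC.le_rpow y hy j
      _ = w ^ (min (ε / 960 * j) (1 - ε) + ε / 960) :=
        (Real.rpow_add_of_nonneg measureReal_nonneg (by positivity) (by positivity)).symm
      _ ≤ w ^ min (ε / 960 * (j + 1 : ℕ)) (1 - ε) :=
        Real.rpow_le_rpow_of_exponent_ge' measureReal_nonneg measureReal_le_one (by positivity)
          hexp

lemma IsAdmissible.carriesSkeleton_of_isCarvable [OpensMeasurableSpace M]
    (hC : IsAdmissible μ ε k n C Δ m) (hε : ε ∈ Set.Ioo 0 1) (hkn : 25 / 27 * ε ≤ k / n)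
    (hΔ : 0 < Δ) (hC'C : C' ⊆ C) (hcarve : IsCarvable μ k n (ε / 32) (childCap μ ε C m) Q Δ' C')
    (hQ : 0 ≤ Q) (hm : Q * μ.real C' = m) (hΔ' : 5 / 8 * Δ ≤ Δ') (hΔ'Δ : Δ' ≤ Δ)
    (hchild : ∀ C'' ⊆ C, C''.Nonempty → ∀ Δ'' m'', 0 < Δ'' → Δ'' ≤ 2 / 5 * Δ →
      IsAdmissible μ ε k n C'' Δ'' m'' → CarriesSkeleton (9 / ε) (skeletonBound μ ε) C'' m'') :
    CarriesSkeleton (9 / ε) (skeletonBound μ ε) C m := by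
  have hε0 := hε.1
  have hn : n ≠ 0 := by
    rintro rfl
    rw [Nat.cast_zero, div_zero] at hkn
    linarith
  have hD : 1 ≤ 9 / ε * (3 / 25 * (k / n)) :=
    calc (1 : ℝ) = 9 / ε * (3 / 25 * (25 / 27 * ε)) := by field_simp; norm_num
      _ ≤ 9 / ε * (3 / 25 * (k / n)) := by gcongr
  rw [← hm]
  refine (hcarve.carriesSkeleton hn (by positivity) hQ (by linarith) (by positivity) hD
    (skeletonBound_nonneg μ ε) (fun x hx y r hxy hr => ?_)
    fun C'' hC'' hne hdiam m'' hm'' hcap hscale => ?_).mono hC'C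
  · rw [hm]
    refine hC.le_skeletonBound hε (hC'C hx) hxy ?_
    calc Δ ≤ 2 * Δ' := by linarith
      _ ≤ 2 * (9 / ε * (2 * r)) := by gcongr
      _ = 36 / ε * r := by ring
  · refine hchild C'' (hC''.trans hC'C) hne _ m'' (by linarith) (by linarith)
      ⟨hm'', hdiam, hscale, fun y hy j => hcap.trans ?_⟩
    exact hC.childCap_le_rpow hε (hC'C (hC'' hy)) (by linarith) j

lemma IsAdmissible.isCarvable_of_le_childCap (hC : IsAdmissible μ ε k n C Δ m) (hε : 0 ≤ ε)
    (hfin : C.Finite) (hpos : ∀ z ∈ C, 0 < μ.real {z}) (hv : 0 < μ.real C)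
    (hlight : ∀ y ∈ C, m / μ.real C *
      μ.real (C ∩ closedBall y ((1 / 5 + 3 / 25 * (k / n)) * Δ)) ≤ childCap μ ε C m) :
    IsCarvable μ k n (ε / 32) (childCap μ ε C m) (m / μ.real C) Δ C where
  finite := hfin
  measureReal_singleton_pos := hpos
  dist_le := hC.dist_le
  mul_measureReal_le := hlight
  mul_scaleMass_mul_le y hy := by
    have hball : μ.real (C ∩ closedBall y (Δ / 5)) ≤ μ.real C :=
      measureReal_mono Set.inter_subset_left
    calc m / μ.real C * scaleMass μ k n C Δ y * μ.real (C ∩ closedBall y (Δ / 5)) ^ (ε / 32)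
        = m * scaleMass μ k n C Δ y * μ.real (C ∩ closedBall y (Δ / 5)) ^ (ε / 32) /
            μ.real C := by ring
      _ ≤ μ.real C ^ (1 - ε / 32) * μ.real C ^ (ε / 32) / μ.real C := by
          gcongr
          exact hC.mul_scaleMass_le y hy
      _ = 1 := by
          rw [← Real.rpow_add hv, sub_add_cancel, Real.rpow_one, div_self hv.ne']

lemma IsAdmissible.rpow_lt_of_childCap_lt (hC : IsAdmissible μ ε k n C Δ m) (hv : 0 < μ.real C)
    {A : Set M} (hA : A ⊆ C) (hheavy : childCap μ ε C m < m / μ.real C * μ.real A) :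
    μ.real C ^ (1 - ε) < m := by
  refine (le_max_left _ _).trans_lt (hheavy.trans_le ?_)
  rw [div_mul_eq_mul_div, div_le_iff₀ hv]
  exact mul_le_mul_of_nonneg_left (measureReal_mono hA) hC.nonneg

lemma IsAdmissible.measureReal_inter_closedBall_le_of_rpow_lt (hC : IsAdmissible μ ε k n C Δ m)
    (hε : 0 < ε) (hkn : (k / n : ℝ) ∈ Set.Icc (25 / 27 * ε) (15 / 16 * ε)) (hv : 0 < μ.real C)
    (hΔ : 0 ≤ Δ) (hm : μ.real C ^ (1 - ε) < m) (hz : z ∈ C) :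
    μ.real (C ∩ closedBall z (Δ / 5)) ≤ μ.real C ^ (31 / 30 : ℝ) := by
  have hkn0 : 0 < (k / n : ℝ) := lt_of_lt_of_le (by positivity) hkn.1
  rw [← Real.rpow_le_rpow_iff measureReal_nonneg (by positivity) hkn0]
  calc μ.real (C ∩ closedBall z (Δ / 5)) ^ (k / n : ℝ) ≤ scaleMass μ k n C Δ z :=
        rpow_le_scaleMass hΔ z
    _ ≤ μ.real C ^ (31 / 32 * ε) := hC.scaleMass_le_of_rpow_lt hv hm hz
    _ ≤ μ.real C ^ (31 / 30 * (k / n : ℝ)) :=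
        Real.rpow_le_rpow_of_exponent_ge hv measureReal_le_one (by linarith [hkn.2])
    _ = (μ.real C ^ (31 / 30 : ℝ)) ^ (k / n : ℝ) := Real.rpow_mul hv.le _ _

lemma IsAdmissible.mul_scaleMass_mul_le_one (hC : IsAdmissible μ ε k n C Δ m) (hε : 0 ≤ ε)
    (hv : 0 < μ.real C) (hΔ : 0 ≤ Δ) (hC'C : C' ⊆ C)
    (hC' : μ.real C ^ (1 + ε / 960) ≤ μ.real C') (hz : z ∈ C)
    (hball : μ.real (C ∩ closedBall z (Δ / 5)) ≤ μ.real C ^ (31 / 30 : ℝ)) :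
    m / μ.real C' * scaleMass μ k n C' (5 / 8 * Δ) z *
      μ.real (C' ∩ closedBall z (5 / 8 * Δ / 5)) ^ (ε / 32) ≤ 1 := by
  have hm := hC.nonneg
  have hscale0 := scaleMass_nonneg μ k n C Δ z
  have hscale : scaleMass μ k n C' (5 / 8 * Δ) z ≤ scaleMass μ k n C Δ z :=
    scaleMass_mono hC'C (by linarith) z
  have hball' : μ.real (C' ∩ closedBall z (5 / 8 * Δ / 5)) ≤ μ.real C ^ (31 / 30 : ℝ) :=
    (measureReal_mono (inter_closedBall_subset_inter_closedBall hC'C (by linarith))).trans hball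
  have hexp : 1 - ε / 32 + 31 / 30 * (ε / 32) = 1 + ε / 960 := by ring
  calc m / μ.real C' * scaleMass μ k n C' (5 / 8 * Δ) z *
        μ.real (C' ∩ closedBall z (5 / 8 * Δ / 5)) ^ (ε / 32)
      ≤ m / μ.real C' * scaleMass μ k n C Δ z * (μ.real C ^ (31 / 30 : ℝ)) ^ (ε / 32) := by
        gcongr
    _ = m * scaleMass μ k n C Δ z * μ.real C ^ (31 / 30 * (ε / 32)) / μ.real C' := by
        rw [Real.rpow_mul hv.le]
        ring
    _ ≤ μ.real C ^ (1 - ε / 32) * μ.real C ^ (31 / 30 * (ε / 32)) / μ.real C' := by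
        gcongr
        exact hC.mul_scaleMass_le z hz
    _ = μ.real C ^ (1 + ε / 960) / μ.real C' := by rw [← Real.rpow_add hv, hexp]
    _ ≤ 1 := div_le_one_of_le₀ hC' measureReal_nonneg

/-- If some buffer is too heavy, then a ball of smaller radius has mass at least
`μ(C)^(1 + ε / 960)`, while the balls of radius `Δ / 5` have mass at most `μ(C)^(31 / 30)`, so that
the former can be subdivided into the latter. -/
lemma IsAdmissible.isCarvable_of_childCap_lt (hC : IsAdmissible μ ε k n C Δ m)
    (hε : ε ∈ Set.Ioo 0 1) (hkn : (k / n : ℝ) ∈ Set.Icc (25 / 27 * ε) (15 / 16 * ε))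
    (hfin : C.Finite) (hpos : ∀ z ∈ C, 0 < μ.real {z}) (hv : 0 < μ.real C) (hΔ : 0 < Δ)
    (hheavy : childCap μ ε C m <
      m / μ.real C * μ.real (C ∩ closedBall y ((1 / 5 + 3 / 25 * (k / n)) * Δ))) :
    IsCarvable μ k n (ε / 32) (childCap μ ε C m) (m / μ.real (C ∩ closedBall y (5 / 16 * Δ)))
      (5 / 8 * Δ) (C ∩ closedBall y (5 / 16 * Δ)) := by
  set C' := C ∩ closedBall y (5 / 16 * Δ)
  have hC'C : C' ⊆ C := Set.inter_subset_left
  have hkn5 : 1 / 5 + 3 / 25 * (k / n : ℝ) ≤ 5 / 16 := by linarith [hkn.2, hε.2]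
  have hC' : μ.real C ^ (1 + ε / 960) ≤ μ.real C' := by
    refine (rpow_lt_measureReal_of_childCap_lt hC.nonneg hv hheavy).le.trans (measureReal_mono ?_)
    exact inter_closedBall_subset_inter_closedBall subset_rfl (by gcongr)
  have hball (z : M) (hz : z ∈ C) : μ.real (C ∩ closedBall z (Δ / 5)) ≤ μ.real C ^ (31 / 30 : ℝ) :=
    hC.measureReal_inter_closedBall_le_of_rpow_lt hε.1 hkn hv hΔ.le
      (hC.rpow_lt_of_childCap_lt hv Set.inter_subset_left hheavy) hz
  refine ⟨hfin.subset hC'C, fun z hz => hpos z hz.1, fun z hz w hw => ?_, fun z hz => ?_,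
    fun z hz => ?_⟩
  · linarith [dist_triangle_right z w y, mem_closedBall.1 hz.2, mem_closedBall.1 hw.2]
  · exact hC.mul_scaleMass_mul_le_one hε.1.le hv hΔ.le hC'C hC' hz.1 (hball z hz.1)
  · refine div_mul_measureReal_le_childCap hε.2.le hC.nonneg hv hC'
      ((measureReal_mono ?_).trans (hball z hz.1))
    refine inter_closedBall_subset_inter_closedBall hC'C ?_
    calc (1 / 5 + 3 / 25 * (k / n)) * (5 / 8 * Δ) ≤ 5 / 16 * (5 / 8 * Δ) := by gcongr
      _ ≤ Δ / 5 := by linarith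

lemma IsAdmissible.carriesSkeleton_of_children [OpensMeasurableSpace M]
    (hC : IsAdmissible μ ε k n C Δ m) (hε : ε ∈ Set.Ioo 0 1)
    (hkn : (k / n : ℝ) ∈ Set.Icc (25 / 27 * ε) (15 / 16 * ε)) (hfin : C.Finite)
    (hpos : ∀ z ∈ C, 0 < μ.real {z}) (hne : C.Nonempty) (hΔ : 0 < Δ)
    (hchild : ∀ C' ⊆ C, C'.Nonempty → ∀ Δ' m', 0 < Δ' → Δ' ≤ 2 / 5 * Δ →
      IsAdmissible μ ε k n C' Δ' m' → CarriesSkeleton (9 / ε) (skeletonBound μ ε) C' m') :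
    CarriesSkeleton (9 / ε) (skeletonBound μ ε) C m := by
  have hm := hC.nonneg
  obtain ⟨x, hx⟩ := hne
  have hv : 0 < μ.real C :=
    (hpos x hx).trans_le (measureReal_mono (Set.singleton_subset_iff.2 hx))
  by_cases hlight : ∀ y ∈ C, m / μ.real C *
      μ.real (C ∩ closedBall y ((1 / 5 + 3 / 25 * (k / n)) * Δ)) ≤ childCap μ ε C m
  · exact hC.carriesSkeleton_of_isCarvable hε hkn.1 hΔ subset_rfl
      (hC.isCarvable_of_le_childCap hε.1.le hfin hpos hv hlight) (by positivity)
      (div_mul_cancel₀ m hv.ne') (by linarith) le_rfl hchild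
  · push Not at hlight
    obtain ⟨y, hy, hheavy⟩ := hlight
    have hv' : 0 < μ.real (C ∩ closedBall y (5 / 16 * Δ)) :=
      measureReal_inter_closedBall_pos hpos hy (by positivity)
    exact hC.carriesSkeleton_of_isCarvable hε hkn.1 hΔ Set.inter_subset_left
      (hC.isCarvable_of_childCap_lt hε hkn hfin hpos hv hΔ hheavy) (by positivity)
      (div_mul_cancel₀ m hv'.ne') le_rfl (by linarith) hchild

end Recursion

section FiniteSupport

variable {M : Type*} [MetricSpace M] [MeasurableSpace M] [OpensMeasurableSpace M] {μ : Measure M}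
  [IsProbabilityMeasure μ] {ε Δ m : ℝ} {k n : ℕ} {C F : Set M}

lemma IsAdmissible.carriesSkeleton (hC : IsAdmissible μ ε k n C Δ m)
    (hε : ε ∈ Set.Ioo 0 1) (hkn : (k / n : ℝ) ∈ Set.Icc (25 / 27 * ε) (15 / 16 * ε))
    (hfin : C.Finite) (hpos : ∀ z ∈ C, 0 < μ.real {z}) (hne : C.Nonempty) (hΔ : 0 < Δ) :
    CarriesSkeleton (9 / ε) (skeletonBound μ ε) C m := by
  have hε0 := hε.1
  obtain ⟨δ, hδ, hsep⟩ := exists_pos_pairwise_le_dist_of_finite hfin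
  obtain ⟨d, hd⟩ : ∃ d : ℕ, Δ < δ * (5 / 2) ^ d := by
    obtain ⟨d, hd⟩ := pow_unbounded_of_one_lt (Δ / δ) (by norm_num : (1 : ℝ) < 5 / 2)
    exact ⟨d, (div_lt_iff₀' hδ).1 hd⟩
  induction d generalizing C Δ m with
  | zero =>
    obtain ⟨x, hx⟩ := hne
    rw [pow_zero, mul_one] at hd
    obtain rfl : C = {x} := Set.eq_singleton_iff_unique_mem.2 ⟨hx, fun y hy => by
      by_contra hyx
      exact (hd.trans_le (hsep hy hx hyx)).not_ge (hC.dist_le y hy x hx)⟩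
    exact carriesSkeleton_singleton (by positivity) (skeletonBound_nonneg μ ε) hC.nonneg
      fun y r => le_skeletonBound_of_le_rpow hε
        (hC.le_rpow_of_singleton hε hkn.2 hΔ.le (hpos x rfl))
  | succ d ih =>
    refine hC.carriesSkeleton_of_children hε hkn hfin hpos hne hΔ
      fun C' hC'C hne' Δ' m' hΔ' hΔ'Δ hC' => ?_
    refine ih hC' (hfin.subset hC'C) (fun z hz => hpos z (hC'C hz)) hne' hΔ' (hsep.mono hC'C) ?_
    calc Δ' ≤ 2 / 5 * Δ := hΔ'Δ
      _ < 2 / 5 * (δ * (5 / 2) ^ (d + 1)) := by gcongr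
      _ = δ * (5 / 2) ^ d := by ring

theorem carriesSkeleton_of_finite (hε : ε ∈ Set.Ioo 0 1) (hF : F.Finite)
    (hμF : μ Fᶜ = 0) : CarriesSkeleton (9 / ε) (skeletonBound μ ε) F 1 := by
  obtain ⟨k, n, hkn⟩ := exists_natCast_div_mem_Icc (a := 25 / 27 * ε) (b := 15 / 16 * ε)
    (by linarith [hε.1]) (by linarith [hε.1])
  set X := F ∩ {z | 0 < μ.real {z}}
  have hfin : X.Finite := hF.inter_of_left _
  have hX : μ.real X = 1 := by
    rw [measureReal_def, (prob_compl_eq_zero_iff hfin.measurableSet).1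
      (measure_compl_inter_atoms_eq_zero hF.countable hμF), ENNReal.toReal_one]
  have hne : X.Nonempty := by
    rw [Set.nonempty_iff_ne_empty]
    intro h
    simp [h] at hX
  have hdist (x : M) (hx : x ∈ X) (y : M) (hy : y ∈ X) : dist x y ≤ diam X + 1 := by
    linarith [dist_le_diam_of_mem hfin.isBounded hx hy]
  have hadm : IsAdmissible μ ε k n X (diam X + 1) 1 := by
    refine ⟨zero_le_one, hdist, fun y _ => ?_, fun y hy j => ?_⟩
    · rw [hX, Real.one_rpow, one_mul]
      exact scaleMass_le_one
    · have hball : μ.real (closedBall y (4 ^ j * (diam X + 1))) = 1 := by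
        refine le_antisymm measureReal_le_one (hX.ge.trans (measureReal_mono fun z hz => ?_))
        exact (hdist z hz y hy).trans (le_mul_of_one_le_left (by positivity)
          (one_le_pow₀ (by norm_num)))
      rw [hball, Real.one_rpow]
  exact (hadm.carriesSkeleton hε hkn hfin (fun z hz => hz.2) hne (by positivity)).mono
    Set.inter_subset_left

end FiniteSupport

/-! ### Passing to the limit -/

section Limit

open Filter Topology

variable {M ι : Type*} [PseudoMetricSpace M] {L : Filter ι}

lemma eventually_chain_of_eventually_exists_dist_lt {S : ι → Set M} {T : Set M} {s δ : ℝ}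
    {x y : M} (hST : ∀ z ∈ T, ∀ᶠ i in L, ∃ a ∈ S i, dist a z < δ) (hx : x ∈ T)
    (h : Relation.ReflTransGen (ChainStep T s) x y) :
    ∀ᶠ i in L, ∃ a ∈ S i, ∃ b ∈ S i, dist a x < δ ∧ dist b y < δ ∧
      Relation.ReflTransGen (ChainStep (S i) (s + 2 * δ)) a b := by
  induction h with
  | refl =>
    filter_upwards [hST x hx] with i ⟨a, ha, hax⟩
    exact ⟨a, ha, a, ha, hax, hax, .refl⟩
  | @tail y z _ hstep ih =>
    filter_upwards [ih, hST z hstep.2.1] with i ⟨a, ha, b, hb, hax, hby, hab⟩ ⟨c, hc, hcz⟩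
    have hbc : dist b c ≤ s + 2 * δ := by
      linarith [dist_triangle4_right b c y z, hstep.2.2]
    exact ⟨a, ha, c, hc, hax, hcz, hab.tail ⟨hb, hc, hbc⟩⟩

lemma ChainDistortionLE.of_eventually_exists_dist_lt [L.NeBot] {D : ℝ} (hD : 0 ≤ D)
    {S : ι → Set M} {T : Set M} (hS : ∀ i, ChainDistortionLE D (S i))
    (hST : ∀ z ∈ T, ∀ δ > 0, ∀ᶠ i in L, ∃ a ∈ S i, dist a z < δ) : ChainDistortionLE D T := by
  intro s hs x hx y h
  refine le_of_forall_pos_le_add fun η hη => ?_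
  set δ := η / (2 * D + 2) with hδη
  have hδ : 0 < δ := by positivity
  obtain ⟨i, a, ha, b, -, hax, hby, hab⟩ :=
    (eventually_chain_of_eventually_exists_dist_lt (fun z hz => hST z hz δ hδ) hx h).exists
  have hdist : dist a b ≤ D * (s + 2 * δ) := hS i _ (by positivity) a ha b hab
  calc dist x y ≤ dist a x + dist a b + dist b y := by
        rw [dist_comm a x]
        exact dist_triangle4 x a b y
    _ ≤ δ + D * (s + 2 * δ) + δ := by gcongr
    _ = D * s + η := by rw [hδη]; field_simp; ring

variable [MeasurableSpace M]

lemma tendsto_measure_closedBall_nhdsGT [OpensMeasurableSpace M] (μ : Measure M)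
    [IsFiniteMeasure μ] (y : M) (r : ℝ) :
    Tendsto (fun s => μ (closedBall y s)) (𝓝[>] r) (𝓝 (μ (closedBall y r))) := by
  have hinter : ⋂ s > r, closedBall y s = closedBall y r := by
    ext z
    simp only [Set.mem_iInter, mem_closedBall]
    exact ⟨le_of_forall_gt_imp_ge_of_dense, fun hz s hs => hz.trans hs.le⟩
  rw [← hinter]
  exact tendsto_measure_biInter_gt (fun s _ => isClosed_closedBall.measurableSet.nullMeasurableSet)
    (fun s t _ hst => closedBall_subset_closedBall hst) ⟨r + 1, by simp, measure_ne_top _ _⟩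

variable [BorelSpace M] {μs νs : ι → ProbabilityMeasure M} {μ ν : ProbabilityMeasure M}

lemma eventually_exists_dist_lt_of_mem_support (hν : Tendsto νs L (𝓝 ν)) {S : ι → Set M}
    (hS : ∀ i, (νs i : Measure M) (S i)ᶜ = 0) {z : M} (hz : z ∈ (ν : Measure M).support)
    {δ : ℝ} (hδ : 0 < δ) : ∀ᶠ i in L, ∃ a ∈ S i, dist a z < δ := by
  have hpos : 0 < (ν : Measure M) (ball z δ) :=
    (Measure.mem_support_iff_forall z).1 hz _ (ball_mem_nhds z hδ)
  have hliminf : (ν : Measure M) (ball z δ) ≤ L.liminf fun i => (νs i : Measure M) (ball z δ) :=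
    ProbabilityMeasure.le_liminf_measure_open_of_tendsto hν isOpen_ball
  filter_upwards [eventually_lt_of_lt_liminf (hpos.trans_le hliminf)] with i hi
  exact exists_mem_of_measureReal_ne_zero (hS i) ((measureReal_ne_zero_iff).2 hi.ne')

lemma measure_closedBall_le_rpow_of_tendsto [L.NeBot] (hμ : Tendsto μs L (𝓝 μ))
    (hν : Tendsto νs L (𝓝 ν)) {a c : ℝ} (ha : 0 ≤ a) (hc : 0 < c)
    (h : ∀ i y r, 0 ≤ r →
      (νs i : Measure M) (closedBall y r) ≤ (μs i : Measure M) (closedBall y (c * r)) ^ a)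
    (y : M) {r : ℝ} (hr : 0 ≤ r) :
    (ν : Measure M) (closedBall y r) ≤ (μ : Measure M) (closedBall y (c * r)) ^ a := by
  have hle (s : ℝ) (hs : r < s) :
      (ν : Measure M) (closedBall y r) ≤ (μ : Measure M) (closedBall y (c * s)) ^ a :=
    calc (ν : Measure M) (closedBall y r) ≤ (ν : Measure M) (ball y s) :=
          measure_mono (closedBall_subset_ball hs)
      _ ≤ L.liminf fun i => (νs i : Measure M) (ball y s) :=
          ProbabilityMeasure.le_liminf_measure_open_of_tendsto hν isOpen_ball
      _ ≤ L.liminf fun i => (μs i : Measure M) (closedBall y (c * s)) ^ a :=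
          liminf_le_liminf (.of_forall fun i =>
            (measure_mono ball_subset_closedBall).trans (h i y s (hr.trans hs.le)))
      _ ≤ L.limsup fun i => (μs i : Measure M) (closedBall y (c * s)) ^ a := liminf_le_limsup
      _ = (L.limsup fun i => (μs i : Measure M) (closedBall y (c * s))) ^ a :=
          ((ENNReal.monotone_rpow_of_nonneg ha).map_limsup_of_continuousAt _
            ENNReal.continuous_rpow_const.continuousAt).symm
      _ ≤ (μ : Measure M) (closedBall y (c * s)) ^ a :=
          ENNReal.rpow_le_rpow (ProbabilityMeasure.limsup_measure_closed_le_of_tendsto hμ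
            isClosed_closedBall) ha
  have hscale : Tendsto (fun s => c * s) (𝓝[>] r) (𝓝[>] (c * r)) :=
    tendsto_nhdsWithin_iff.2 ⟨((continuous_const_mul c).tendsto r).mono_left nhdsWithin_le_nhds,
      eventually_mem_nhdsWithin.mono fun s hs => mul_lt_mul_of_pos_left hs hc⟩
  refine ge_of_tendsto (ENNReal.continuous_rpow_const.continuousAt.tendsto.comp
    ((tendsto_measure_closedBall_nhdsGT (μ : Measure M) y (c * r)).comp hscale)) ?_
  filter_upwards [self_mem_nhdsWithin] with s hs using hle s hs

lemma exists_seq_tendsto_finite_carrier {M : Type*} [MetricSpace M]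
    [TopologicalSpace.SeparableSpace M] [MeasurableSpace M] [BorelSpace M]
    (μ : ProbabilityMeasure M) : ∃ μs : ℕ → ProbabilityMeasure M, Tendsto μs atTop (𝓝 μ) ∧
      ∀ N, ∃ F : Set M, F.Finite ∧ (μs N : Measure M) Fᶜ = 0 := by
  have : Nonempty M := (μ : Measure M).nonempty_of_neZero
  set f : ℕ → SimpleFunc M M := SimpleFunc.nearestPt (TopologicalSpace.denseSeq M)
  have hf : TendstoInDistribution (fun N => f N) atTop id (fun _ => (μ : Measure M)) μ := by
    refine tendstoInDistribution_of_ae_tendsto (fun N => (f N).aemeasurable) aemeasurable_id ?_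
    exact .of_forall fun x =>
      SimpleFunc.tendsto_nearestPt (TopologicalSpace.denseRange_denseSeq M x)
  have htendsto := hf.tendsto
  simp only [Measure.map_id] at htendsto
  refine ⟨_, htendsto, fun N => ⟨(f N).range, Finset.finite_toSet _, ?_⟩⟩
  change (μ : Measure M).map (f N) _ = 0
  rw [Measure.map_apply (f N).measurable (Finset.measurableSet _).compl]
  simp

end Limit

lemma exists_probabilityMeasure_of_finite {M : Type*} [MetricSpace M] [MeasurableSpace M]
    [OpensMeasurableSpace M] {ε : ℝ} (hε : ε ∈ Set.Ioo 0 1) {μ : Measure M}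
    [IsProbabilityMeasure μ] {F : Set M} (hF : F.Finite) (hμF : μ Fᶜ = 0) :
    ∃ (S : Set M) (ν : ProbabilityMeasure M), (ν : Measure M) Sᶜ = 0 ∧
      ChainDistortionLE (9 / ε) S ∧ ∀ y r, 0 ≤ r →
        (ν : Measure M) (closedBall y r) ≤
          μ (closedBall y (skeletonDilation ε * r)) ^ (1 - ε) := by
  obtain ⟨S, -, ν, hν, hν1, hνS, hdist, hball⟩ := carriesSkeleton_of_finite hε hF hμF
  have hprob : IsProbabilityMeasure ν :=
    ⟨by simpa [measureReal_def, ENNReal.toReal_eq_one_iff] using hν1⟩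
  refine ⟨S, ⟨ν, hprob⟩, hνS, hdist, fun y r hr => ?_⟩
  have := ENNReal.ofReal_le_ofReal (hball y r hr)
  rwa [skeletonBound, ← ENNReal.ofReal_rpow_of_nonneg measureReal_nonneg (sub_nonneg.2 hε.2.le),
    ofReal_measureReal, ofReal_measureReal] at this

/-- **Ultrametric skeleton theorem (Mendel–Naor).** For every `ε ∈ (0,1)` there is
`c_ε ∈ [1,∞)` such that every compact metric space `M` with a Borel probability measure `μ`
admits a compact subset `S ⊆ M` and a Borel probability measure `ν` supported on `S` such that
`(S, d_M)` embeds into an ultrametric space with distortion at most `9/ε` and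
`ν(B(x,r) ∩ S) ≤ μ(B(x, c_ε r))^{1-ε}` for all `x ∈ M`, `r ≥ 0`. -/
theorem ultrametric_skeleton (ε : ℝ) (hε : ε ∈ Set.Ioo (0 : ℝ) 1) :
    ∃ c : ℝ, 1 ≤ c ∧
      ∀ (M : Type u) [MetricSpace M] [CompactSpace M] [MeasurableSpace M] [BorelSpace M]
        (μ : Measure M), IsProbabilityMeasure μ →
        ∃ (S : Set M) (ν : Measure M), IsCompact S ∧ IsProbabilityMeasure ν ∧ ν Sᶜ = 0 ∧
          (∃ ρ : S → S → ℝ, IsUltrametricOn ρ ∧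
            ∀ x y : S, dist (x : M) (y : M) ≤ ρ x y ∧
              ρ x y ≤ (9 / ε) * dist (x : M) (y : M)) ∧
          ∀ (x : M) (r : ℝ), 0 ≤ r →
            ν (closedBall x r ∩ S) ≤ (μ (closedBall x (c * r))) ^ (1 - ε) := by
  refine ⟨skeletonDilation ε, one_le_skeletonDilation hε.1, fun M _ _ _ _ μ hμ => ?_⟩
  obtain ⟨μs, hμs, hfinite⟩ := exists_seq_tendsto_finite_carrier (⟨μ, hμ⟩ : ProbabilityMeasure M)
  choose F hF hμF using hfinite
  choose S νs hνS hdist hball using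
    fun N => exists_probabilityMeasure_of_finite hε (hF N) (hμF N)
  set ν : ProbabilityMeasure M := ((Filter.hyperfilter ℕ).map νs).lim
  have hνs : Filter.Tendsto νs (Filter.hyperfilter ℕ) (nhds ν) :=
    ((Filter.hyperfilter ℕ).map νs).le_nhds_lim
  replace hμs := hμs.mono_left Nat.hyperfilter_le_atTop
  have hD : 0 < 9 / ε := div_pos (by norm_num) hε.1
  refine ⟨(ν : Measure M).support, ν, Measure.isClosed_support.isCompact, inferInstance,
    Measure.measure_compl_support, ?_, fun x r hr => ?_⟩
  · exact (ChainDistortionLE.of_eventually_exists_dist_lt hD.le hdist fun z hz δ hδ =>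
      eventually_exists_dist_lt_of_mem_support hνs hνS hz hδ).exists_ultrametric hD
  · exact (measure_mono Set.inter_subset_left).trans (measure_closedBall_le_rpow_of_tendsto hμs hνs
      (sub_nonneg.2 hε.2.le) (one_pos.trans_le (one_le_skeletonDilation hε.1)) hball x hr)
end

section
/- There exists a universal constant c ∈ (0,∞) such that for every ε ∈ (0,1) and every n-point metric space (M,d_M) there is a subset S ⊆ M with |S| ≥ n^{1−ε} such that (S,d_M) embeds into an ultrametric space with distortion at most c/ε, i.e., there is an ultrametric ρ on S with d_M(x,y) ≤ ρ(x,y) ≤ (c/ε) d_M(x,y) for all x,y ∈ S. -/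
universe u

/-!
Let `D` be the diameter of `X`, and choose `v ∈ X` so that `B(v, D/8)` has as many points as
possible. Cut the annulus between the radii `D/8` and `D/4` into `k` shells of width `D/(8k)`.
Across one of them the ball around `v` grows by a factor of at most
`(|B(v, D/4)| / |B(v, D/8)|) ^ (1/k)`. Discard that shell, recurse on the ball inside it and on the
complement outside it, and declare the ultrametric distance between the two parts to be `D`; they
are at distance at least `D/(8k)`, so this costs distortion `8k`.

The proportion kept is controlled by the invariant `|X| ≤ |S| * m ^ (1/k)`, where `m` bounds the
number of points of `X` in a ball of radius `D/4`. The inner part has diameter at most `D/2`, so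
its bound improves from `m` to `|B(v, D/8)|`, which exactly pays for the discarded shell.
Finally take `m = |X|` and `k = ⌈1/ε⌉`.
-/

open scoped Finset
open Metric (diam)

theorem exists_succ_sub_le_average {k : ℕ} (hk : k ≠ 0) (b : ℕ → ℝ) :
    ∃ i < k, b (i + 1) - b i ≤ (b k - b 0) / k := by
  have sum_increments_le : ∑ i ∈ Finset.range k, (b (i + 1) - b i) ≤
      ∑ _i ∈ Finset.range k, (b k - b 0) / k := by
    rw [Finset.sum_range_sub, Finset.sum_const, Finset.card_range, nsmul_eq_mul,
      mul_div_cancel₀ _ (Nat.cast_ne_zero.2 hk)]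
  simpa only [Finset.mem_range] using
    Finset.exists_le_of_sum_le (Finset.nonempty_range_iff.2 hk) sum_increments_le

theorem exists_succ_le_mul_rpow_inv {k : ℕ} (hk : k ≠ 0) {a : ℕ → ℝ} (ha : ∀ i, 0 < a i) :
    ∃ i < k, a (i + 1) ≤ a i * (a k / a 0) ^ (k : ℝ)⁻¹ := by
  obtain ⟨i, hik, hi⟩ := exists_succ_sub_le_average hk (fun i => Real.log (a i))
  have ratio_pos : 0 < a k / a 0 := div_pos (ha k) (ha 0)
  refine ⟨i, hik, ?_⟩
  rw [← Real.log_le_log_iff (ha _) (mul_pos (ha i) (Real.rpow_pos_of_pos ratio_pos _)),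
    Real.log_mul (ha i).ne' (Real.rpow_pos_of_pos ratio_pos _).ne', Real.log_rpow ratio_pos,
    Real.log_div (ha k).ne' (ha 0).ne', inv_mul_eq_div]
  linarith

theorem exists_nat_inv_le_and_le_two_div {ε : ℝ} (hε : ε ∈ Set.Ioo (0 : ℝ) 1) :
    ∃ k : ℕ, k ≠ 0 ∧ (k : ℝ)⁻¹ ≤ ε ∧ (k : ℝ) ≤ 2 / ε := by
  have one_le_inv : 1 ≤ ε⁻¹ := (one_le_inv₀ hε.1).2 hε.2.le
  refine ⟨⌈ε⁻¹⌉₊, (Nat.ceil_pos.2 (inv_pos.2 hε.1)).ne', ?_, ?_⟩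
  · exact inv_le_of_inv_le₀ hε.1 (Nat.le_ceil _)
  · exact Nat.ceil_le_two_mul (by linarith)

theorem rpow_one_sub_le_of_le_mul_rpow {n : ℕ} {s δ ε : ℝ} (hs : 0 ≤ s) (hδε : δ ≤ ε)
    (hε : ε < 1) (h : (n : ℝ) ≤ s * (n : ℝ) ^ δ) : (n : ℝ) ^ (1 - ε) ≤ s := by
  rcases Nat.eq_zero_or_pos n with rfl | hn
  · rwa [Nat.cast_zero, Real.zero_rpow (sub_pos.2 hε).ne']
  · have hn' : (1 : ℝ) ≤ n := Nat.one_le_cast.2 hn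
    rw [Real.rpow_sub (by positivity), Real.rpow_one, div_le_iff₀ (by positivity)]
    exact h.trans (by gcongr)

section Ball

variable {M : Type*} [PseudoMetricSpace M]

/-- The closed ball of radius `r` around `v` in the finite subspace `X`, as a `Finset`, so that its
points can be counted. -/
noncomputable def ballIn (X : Finset M) (v : M) (r : ℝ) : Finset M :=
  {y ∈ X | dist y v ≤ r}

theorem mem_ballIn {X : Finset M} {v y : M} {r : ℝ} :
    y ∈ ballIn X v r ↔ y ∈ X ∧ dist y v ≤ r :=
  Finset.mem_filter

theorem ballIn_subset (X : Finset M) (v : M) (r : ℝ) : ballIn X v r ⊆ X :=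
  Finset.filter_subset _ _

theorem mem_ballIn_self {X : Finset M} {v : M} {r : ℝ} (hv : v ∈ X) (hr : 0 ≤ r) :
    v ∈ ballIn X v r :=
  mem_ballIn.2 ⟨hv, by rwa [dist_self]⟩

theorem card_ballIn_pos {X : Finset M} {v : M} {r : ℝ} (hv : v ∈ X) (hr : 0 ≤ r) :
    0 < #(ballIn X v r) :=
  Finset.card_pos.2 ⟨v, mem_ballIn_self hv hr⟩

theorem ballIn_mono {X Y : Finset M} {r s : ℝ} (hXY : X ⊆ Y) (v : M) (hrs : r ≤ s) :
    ballIn X v r ⊆ ballIn Y v s := fun y hy => by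
  rw [mem_ballIn] at hy ⊢
  exact ⟨hXY hy.1, hy.2.trans hrs⟩

theorem dist_le_diam_finset {X : Finset M} {x y : M} (hx : x ∈ X) (hy : y ∈ X) :
    dist x y ≤ diam (X : Set M) :=
  Metric.dist_le_diam_of_mem X.finite_toSet.isBounded hx hy

theorem diam_finset_mono {X Y : Finset M} (hXY : X ⊆ Y) : diam (X : Set M) ≤ diam (Y : Set M) :=
  Metric.diam_mono (Finset.coe_subset.2 hXY) Y.finite_toSet.isBounded

theorem diam_ballIn_le (X : Finset M) (v : M) {r : ℝ} (hr : 0 ≤ r) :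
    diam (ballIn X v r : Set M) ≤ 2 * r :=
  (Metric.diam_mono (fun _ hy => Metric.mem_closedBall.2 (mem_ballIn.1 hy).2)
    Metric.isBounded_closedBall).trans (Metric.diam_closedBall hr)

theorem le_dist_of_mem_ballIn_of_mem_sdiff_ballIn [DecidableEq M] {X : Finset M} {v x y : M}
    {r t : ℝ} (hx : x ∈ ballIn X v r) (hy : y ∈ X \ ballIn X v (r + t)) : t ≤ dist x y := by
  rw [Finset.mem_sdiff, mem_ballIn, not_and, not_le] at hy
  have hxv : dist x v ≤ r := (mem_ballIn.1 hx).2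
  have hyv : r + t < dist y v := hy.2 hy.1
  linarith [dist_triangle_left y v x]

theorem exists_card_ballIn_add_le {k : ℕ} (hk : k ≠ 0) {X : Finset M} {v : M} (hv : v ∈ X)
    {r w : ℝ} (hr : 0 ≤ r) (hw : 0 ≤ w) :
    ∃ s, r ≤ s ∧ s + w / k ≤ r + w ∧
      (#(ballIn X v (s + w / k)) : ℝ) ≤
        #(ballIn X v s) * ((#(ballIn X v (r + w)) : ℝ) / #(ballIn X v r)) ^ (k : ℝ)⁻¹ := by
  have card_pos : ∀ i : ℕ, (0 : ℝ) < #(ballIn X v (r + i * (w / k))) := fun i =>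
    Nat.cast_pos.2 (card_ballIn_pos hv (by positivity))
  obtain ⟨i, hik, hi⟩ := exists_succ_le_mul_rpow_inv hk card_pos
  have mul_width : (k : ℝ) * (w / k) = w := mul_div_cancel₀ _ (Nat.cast_ne_zero.2 hk)
  have next_radius : r + ((i + 1 : ℕ) : ℝ) * (w / k) = r + i * (w / k) + w / k := by
    push_cast; ring
  refine ⟨r + i * (w / k), le_add_of_nonneg_right (by positivity), ?_, ?_⟩
  · rw [← next_radius]
    calc r + ((i + 1 : ℕ) : ℝ) * (w / k) ≤ r + k * (w / k) := by gcongr; exact hik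
      _ = r + w := by rw [mul_width]
  · simpa only [next_radius, mul_width, Nat.cast_zero, zero_mul, add_zero] using hi

theorem exists_separated_parts {k m : ℕ} (hk : k ≠ 0) {X : Finset M}
    (hX : 0 < diam (X : Set M)) (hm : ∀ v ∈ X, #(ballIn X v (diam (X : Set M) / 4)) ≤ m) :
    ∃ A B : Finset M, ∃ p : ℕ, A ⊂ X ∧ B ⊂ X ∧ Disjoint A B ∧
      (∀ x ∈ A, ∀ y ∈ B, diam (X : Set M) ≤ 8 * k * dist x y) ∧
      0 < p ∧ (∀ v ∈ A, #(ballIn A v (diam (A : Set M) / 4)) ≤ p) ∧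
      (#X : ℝ) ≤ #A * ((m : ℝ) / p) ^ (k : ℝ)⁻¹ + #B := by
  classical
  set D := diam (X : Set M) with hD
  have X_nonempty : X.Nonempty := Finset.nonempty_iff_ne_empty.2 fun h => by simp [hD, h] at hX
  obtain ⟨v, hv, hvmax⟩ := Finset.exists_max_image X (fun v => #(ballIn X v (D / 8))) X_nonempty
  obtain ⟨s, le_s, s_add_width_le, hcard⟩ :=
    exists_card_ballIn_add_le hk hv (r := D / 8) (w := D / 8) (by positivity) (by positivity)
  have width_pos : 0 < D / 8 / k := by positivity
  rw [show D / 8 + D / 8 = D / 4 by ring] at s_add_width_le hcard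
  set A := ballIn X v s
  set A' := ballIn X v (s + D / 8 / k)
  have hAX : A ⊆ X := ballIn_subset X v s
  have hA'X : A' ⊆ X := ballIn_subset X v _
  have diam_A_le : diam (A : Set M) ≤ D / 2 :=
    (diam_ballIn_le X v (by linarith)).trans (by linarith)
  have A_ne_X : A ≠ X := fun h => by
    rw [h] at diam_A_le
    linarith
  refine ⟨A, X \ A', #(ballIn X v (D / 8)), hAX.ssubset_of_ne A_ne_X,
    Finset.sdiff_ssubset hA'X ⟨v, mem_ballIn_self hv (by linarith)⟩,
    Finset.disjoint_sdiff.mono_left (ballIn_mono subset_rfl v (by linarith)),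
    fun x hx y hy => ?_, card_ballIn_pos hv (by positivity), fun x hx => ?_, ?_⟩
  · have width_le : D / 8 / k ≤ dist x y := le_dist_of_mem_ballIn_of_mem_sdiff_ballIn hx hy
    rw [div_div, div_le_iff₀ (by positivity)] at width_le
    linarith
  · exact (Finset.card_le_card (ballIn_mono hAX x (by linarith))).trans (hvmax x (hAX hx))
  · calc (#X : ℝ) = #A' + #(X \ A') := by
          rw [add_comm]
          exact_mod_cast (Finset.card_sdiff_add_card_eq_card hA'X).symm
      _ ≤ #A * ((m : ℝ) / #(ballIn X v (D / 8))) ^ (k : ℝ)⁻¹ + #(X \ A') := by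
          refine add_le_add_left (hcard.trans ?_) _
          gcongr
          exact hm v hv

end Ball

section UltrametricApprox

variable {M : Type*} [PseudoMetricSpace M]

/-- On `S`, the function `ρ` satisfies the ultrametric inequality, dominates the distance, exceeds
it by a factor of at most `K`, and is bounded by `D`. The values of `ρ` outside `S` are irrelevant,
which spares subtypes when two such functions are glued. If `M` is a metric space, then `ρ` is an
ultrametric on `S`. -/
structure IsUltrametricApprox (K D : ℝ) (S : Finset M) (ρ : M → M → ℝ) : Prop where
  symm : ∀ x ∈ S, ∀ y ∈ S, ρ x y = ρ y x
  le_max : ∀ x ∈ S, ∀ y ∈ S, ∀ z ∈ S, ρ x z ≤ max (ρ x y) (ρ y z)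
  dist_le : ∀ x ∈ S, ∀ y ∈ S, dist x y ≤ ρ x y
  le_mul_dist : ∀ x ∈ S, ∀ y ∈ S, ρ x y ≤ K * dist x y
  le_bound : ∀ x ∈ S, ∀ y ∈ S, ρ x y ≤ D

/-- The function equal to `ρ` on `S`, to `σ` off `S`, and to `D` between `S` and its complement. -/
def glueAtHeight [DecidableEq M] (D : ℝ) (S : Finset M) (ρ σ : M → M → ℝ) (x y : M) : ℝ :=
  if x ∈ S then if y ∈ S then ρ x y else D else if y ∈ S then D else σ x y

namespace IsUltrametricApprox

variable {K D D' : ℝ} {S T : Finset M} {ρ σ : M → M → ℝ}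

theorem mono_bound (hρ : IsUltrametricApprox K D S ρ) (hD : D ≤ D') :
    IsUltrametricApprox K D' S ρ :=
  { hρ with le_bound := fun x hx y hy => (hρ.le_bound x hx y hy).trans hD }

theorem zero_of_diam_eq_zero (hK : 0 ≤ K) (hS : diam (S : Set M) = 0) :
    IsUltrametricApprox K (diam (S : Set M)) S (fun _ _ => 0) where
  symm _ _ _ _ := rfl
  le_max _ _ _ _ _ _ := le_max_left _ _
  dist_le _ hx _ hy := hS ▸ dist_le_diam_finset hx hy
  le_mul_dist _ _ _ _ := mul_nonneg hK dist_nonneg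
  le_bound _ _ _ _ := Metric.diam_nonneg

theorem union_glueAtHeight [DecidableEq M] (hρ : IsUltrametricApprox K D S ρ)
    (hσ : IsUltrametricApprox K D T σ) (hST : Disjoint S T)
    (cross_dist_le : ∀ x ∈ S, ∀ y ∈ T, dist x y ≤ D)
    (le_mul_cross_dist : ∀ x ∈ S, ∀ y ∈ T, D ≤ K * dist x y) :
    IsUltrametricApprox K D (S ∪ T) (glueAtHeight D S ρ σ) := by
  have notMem_left : ∀ x ∈ T, x ∉ S := fun _ hxT hxS => Finset.disjoint_left.1 hST hxS hxT
  constructor <;> simp only [Finset.mem_union, glueAtHeight]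
  · grind [hρ.symm, hσ.symm]
  · -- If `y` lies in another part than `x` or `z`, then the right-hand side is at least `D`.
    rintro x (hx | hx) y (hy | hy) z (hz | hz) <;>
      grind [hρ.le_max, hσ.le_max, hρ.le_bound, hσ.le_bound]
  · grind [hρ.dist_le, hσ.dist_le, dist_comm]
  · grind [hρ.le_mul_dist, hσ.le_mul_dist, dist_comm]
  · grind [hρ.le_bound, hσ.le_bound]

theorem isUltrametricOn {N : Type*} [MetricSpace N] {S : Finset N} {ρ : N → N → ℝ}
    (hρ : IsUltrametricApprox K D S ρ) : IsUltrametricOn (fun x y : S => ρ x y) := by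
  have nonneg : ∀ x y : S, 0 ≤ ρ x y := fun x y => dist_nonneg.trans (hρ.dist_le x x.2 y y.2)
  have ultra : ∀ x y z : S, ρ x z ≤ max (ρ x y) (ρ y z) := fun x y z =>
    hρ.le_max x x.2 y y.2 z z.2
  refine ⟨⟨nonneg, fun x y => ⟨fun h => ?_, ?_⟩, fun x y => hρ.symm x x.2 y y.2, fun x y z => ?_⟩,
    ultra⟩
  · exact Subtype.ext (dist_le_zero.1 ((hρ.dist_le x x.2 y y.2).trans_eq h))
  · rintro rfl
    refine le_antisymm ?_ (nonneg x x)
    simpa only [dist_self, mul_zero] using hρ.le_mul_dist x x.2 x x.2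
  · exact (ultra x y z).trans (max_le_add_of_nonneg (nonneg x y) (nonneg y z))

end IsUltrametricApprox

theorem exists_large_ultrametricApprox {k : ℕ} (hk : k ≠ 0) (X : Finset M) (m : ℕ)
    (hm : ∀ v ∈ X, #(ballIn X v (diam (X : Set M) / 4)) ≤ m) :
    ∃ S ⊆ X, (#X : ℝ) ≤ #S * (m : ℝ) ^ (k : ℝ)⁻¹ ∧
      ∃ ρ, IsUltrametricApprox (8 * k) (diam (X : Set M)) S ρ := by
  classical
  induction X using Finset.strongInduction generalizing m with
  | H X ih =>
  rcases (Metric.diam_nonneg (s := (X : Set M))).eq_or_lt' with diam_zero | diam_pos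
  · refine ⟨X, subset_rfl, ?_, _, .zero_of_diam_eq_zero (by positivity) diam_zero⟩
    rcases X.eq_empty_or_nonempty with rfl | ⟨v, hv⟩
    · simp
    · have one_le_m : 1 ≤ m := (card_ballIn_pos hv (by positivity)).trans_le (hm v hv)
      exact le_mul_of_one_le_right (by positivity)
        (Real.one_le_rpow (Nat.one_le_cast.2 one_le_m) (by positivity))
  obtain ⟨A, B, p, hAX, hBX, hAB, separated, hp, hpA, hcard⟩ :=
    exists_separated_parts hk diam_pos hm
  have diam_B_le : diam (B : Set M) ≤ diam (X : Set M) := diam_finset_mono hBX.subset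
  have hmB : ∀ v ∈ B, #(ballIn B v (diam (B : Set M) / 4)) ≤ m := fun v hv =>
    (Finset.card_le_card (ballIn_mono hBX.subset v (by linarith))).trans (hm v (hBX.subset hv))
  obtain ⟨S, hSA, hS, ρ, hρ⟩ := ih A hAX p hpA
  obtain ⟨T, hTB, hT, σ, hσ⟩ := ih B hBX m hmB
  have hST : Disjoint S T := hAB.mono hSA hTB
  refine ⟨S ∪ T, Finset.union_subset (hSA.trans hAX.subset) (hTB.trans hBX.subset), ?_,
    glueAtHeight (diam (X : Set M)) S ρ σ,
    (hρ.mono_bound (diam_finset_mono hAX.subset)).union_glueAtHeight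
      (hσ.mono_bound diam_B_le) hST
      (fun x hx y hy => dist_le_diam_finset (hAX.subset (hSA hx)) (hBX.subset (hTB hy)))
      (fun x hx y hy => separated x (hSA hx) y (hTB hy))⟩
  calc (#X : ℝ) ≤ #A * ((m : ℝ) / p) ^ (k : ℝ)⁻¹ + #B := hcard
    _ ≤ #S * (p : ℝ) ^ (k : ℝ)⁻¹ * ((m : ℝ) / p) ^ (k : ℝ)⁻¹ + #T * (m : ℝ) ^ (k : ℝ)⁻¹ := by gcongr
    _ = #(S ∪ T) * (m : ℝ) ^ (k : ℝ)⁻¹ := by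
      rw [mul_assoc, ← Real.mul_rpow (by positivity) (by positivity),
        mul_div_cancel₀ _ (Nat.cast_ne_zero.2 hp.ne'), Finset.card_union_of_disjoint hST,
        Nat.cast_add, add_mul]

end UltrametricApprox

/-- **Nonlinear Dvoretzky theorem (Mendel–Naor).** There is a universal constant `c > 0` such
that for every `ε ∈ (0,1)`, every finite metric space `M` on `n` points has a subset `S` of
cardinality at least `n^{1-ε}` that embeds into an ultrametric space with distortion at most
`c/ε`. -/
theorem nonlinear_dvoretzky_finite :
    ∃ c : ℝ, 0 < c ∧ ∀ ε : ℝ, ε ∈ Set.Ioo (0 : ℝ) 1 →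
      ∀ (M : Type u) [MetricSpace M] [Fintype M],
        ∃ S : Finset M, ((Fintype.card M : ℝ) ^ (1 - ε) ≤ (S.card : ℝ)) ∧
          ∃ ρ : S → S → ℝ, IsUltrametricOn ρ ∧
            ∀ x y : S, dist (x : M) (y : M) ≤ ρ x y ∧
              ρ x y ≤ (c / ε) * dist (x : M) (y : M) := by
  refine ⟨16, by norm_num, fun ε hε M _ _ => ?_⟩
  obtain ⟨k, hk, hkε, hk_le⟩ := exists_nat_inv_le_and_le_two_div hε
  obtain ⟨S, -, hS, ρ, hρ⟩ := exists_large_ultrametricApprox hk (Finset.univ : Finset M)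
    (Fintype.card M) (fun _ _ => Finset.card_le_univ _)
  refine ⟨S, rpow_one_sub_le_of_le_mul_rpow (Nat.cast_nonneg _) hkε hε.2 hS, fun x y => ρ x y,
    hρ.isUltrametricOn, fun x y => ⟨hρ.dist_le x x.2 y y.2, ?_⟩⟩
  calc ρ x y ≤ 8 * k * dist (x : M) y := hρ.le_mul_dist x x.2 y y.2
    _ ≤ 8 * (2 / ε) * dist (x : M) y := by gcongr
    _ = 16 / ε * dist (x : M) y := by ring
end

section
/- There exists a universal constant c ∈ (0,∞) such that for every ε ∈ (0,1) and every α ∈ (0,∞), any compact metric space (M, d_M) of Hausdorff dimension strictly greater than α has a closed subset S ⊆ M of Hausdorff dimension at least (1−ε)α such that (S,d_M) embeds into an ultrametric space with distortion at most c/ε, i.e., there is an ultrametric ρ on S with d_M(x,y) ≤ ρ(x,y) ≤ (c/ε) d_M(x,y) for all x,y ∈ S. -/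
universe u

/-!
An outer measure `ν` with `ν A ≤ (diam A) ^ α` and `ν M ≠ 0` is cut into a tree of clusters. To cut
`X` at scale `r`, take a point `x` of a finite net whose ball of radius `3 * r` has the largest
measure, and let `s` run through `[3 * r, 6 * r]` in `⌈1 / ε⌉` steps: at some step the measure of
the ball of radius `s` grows by a factor of at most `(ν B(x, 6 * r) / ν B(x, 3 * r)) ^ ε`. Remove
the `s`-ball together with a moat of width about `ε * r` and repeat on the rest of `X`. Charging
the moat to the `s`-ball preserves the total mass, while the growth factors telescope along each
branch of the tree, so that a cluster of diameter `d` ends up with weight at most about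
`d ^ ((1 - ε) * α)`. The points surviving at all scales form the required set: the moats make
the tree metric on it an ultrametric of distortion `O(1 / ε)`, and a mass distribution argument
bounds its dimension from below.
-/

open MeasureTheory Metric Set Filter Topology
open scoped ENNReal NNReal

section LabelDist

variable {S ι : Type*} {π : ℕ → S → ι} {d : ℕ → ℝ}

/-- The ultrametric read off from a sequence of partitions of `S`, the `n`-th one given by the
labelling `π n`: the distance between two points is the largest `d n` for which `π (n + 1)`
separates them, and `0` if there is none. -/
noncomputable def labelDist (π : ℕ → S → ι) (d : ℕ → ℝ) (x y : S) : ℝ :=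
  ⨆ n, {n | π (n + 1) x ≠ π (n + 1) y}.indicator d n

lemma le_labelDist (hd : BddAbove (range d)) (hd₀ : ∀ n, 0 ≤ d n) {x y : S} {n : ℕ}
    (h : π (n + 1) x ≠ π (n + 1) y) : d n ≤ labelDist π d x y := by
  have hbdd : BddAbove (range ({n | π (n + 1) x ≠ π (n + 1) y}.indicator d)) :=
    hd.range_mono _ (indicator_le_self' fun n _ => hd₀ n)
  exact (indicator_of_mem (s := {n | π (n + 1) x ≠ π (n + 1) y}) h d).symm.trans_le
    (le_ciSup hbdd n)

lemma labelDist_le {x y : S} {a : ℝ} (ha : 0 ≤ a)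
    (h : ∀ n, π (n + 1) x ≠ π (n + 1) y → d n ≤ a) : labelDist π d x y ≤ a :=
  ciSup_le fun n => indicator_apply_le' (h n) fun _ => ha

lemma labelDist_nonneg (hd₀ : ∀ n, 0 ≤ d n) (x y : S) : 0 ≤ labelDist π d x y :=
  Real.iSup_nonneg (indicator_nonneg fun n _ => hd₀ n)

lemma labelDist_comm (x y : S) : labelDist π d x y = labelDist π d y x := by
  simp only [labelDist, ne_comm]

lemma labelDist_le_max (hd : BddAbove (range d)) (hd₀ : ∀ n, 0 ≤ d n) (x y z : S) :
    labelDist π d x z ≤ max (labelDist π d x y) (labelDist π d y z) := by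
  refine labelDist_le (le_max_of_le_left (labelDist_nonneg hd₀ x y)) fun n hxz => ?_
  by_cases hxy : π (n + 1) x = π (n + 1) y
  · exact le_max_of_le_right (le_labelDist hd hd₀ (hxy ▸ hxz))
  · exact le_max_of_le_left (le_labelDist hd hd₀ hxy)

lemma dist_le_labelDist [PseudoMetricSpace S] (hd₀ : ∀ n, 0 ≤ d n)
    (hlim : Tendsto d atTop (𝓝 0)) (hroot : ∀ x y, π 0 x = π 0 y)
    (hsame : ∀ n x y, π n x = π n y → dist x y ≤ d n) (x y : S) :
    dist x y ≤ labelDist π d x y := by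
  by_cases h : ∃ n, π (n + 1) x ≠ π (n + 1) y
  · classical
    have hfirst : π (Nat.find h) x = π (Nat.find h) y := by
      rcases hn : Nat.find h with _ | n
      · exact hroot x y
      · exact not_not.1 (Nat.find_min h (m := n) (by omega))
    exact (hsame _ x y hfirst).trans (le_labelDist hlim.bddAbove_range hd₀ (Nat.find_spec h))
  · push Not at h
    have hdist : dist x y ≤ 0 :=
      ge_of_tendsto' ((tendsto_add_atTop_iff_nat 1).2 hlim) fun n => hsame (n + 1) x y (h n)
    exact hdist.trans (labelDist_nonneg hd₀ x y)

end LabelDist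

lemma isUltrametricOn_of_dist_le_of_le_mul_dist {S : Type*} [MetricSpace S] {ρ : S → S → ℝ} {c : ℝ}
    (hcomm : ∀ x y, ρ x y = ρ y x) (hmax : ∀ x y z, ρ x z ≤ max (ρ x y) (ρ y z))
    (hlower : ∀ x y, dist x y ≤ ρ x y) (hupper : ∀ x y, ρ x y ≤ c * dist x y) :
    IsUltrametricOn ρ := by
  have hnonneg : ∀ x y, 0 ≤ ρ x y := fun x y => dist_nonneg.trans (hlower x y)
  refine ⟨⟨hnonneg, fun x y => ⟨fun h => ?_, ?_⟩, hcomm, fun x y z => ?_⟩, hmax⟩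
  · exact dist_le_zero.1 ((hlower x y).trans_eq h)
  · rintro rfl
    exact le_antisymm (by simpa using hupper x x) (hnonneg x x)
  · exact (hmax x y z).trans (max_le_add_of_nonneg (hnonneg x y) (hnonneg y z))

section SlowGrowth

-- Otherwise `a j` would grow by a factor above `(a k / a 0) ^ ε` at each of the `k ≥ 1 / ε` steps.
lemma exists_mul_rpow_le_mul_rpow {a : ℕ → ℝ≥0∞} (ha : Monotone a) {k : ℕ} {ε : ℝ}
    (hk : 1 ≤ ε * k) : ∃ j < k, a (j + 1) * a 0 ^ ε ≤ a j * a k ^ ε := by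
  by_contra! h
  have hk₀ : 0 < k := Nat.pos_of_ne_zero (by rintro rfl; norm_num at hk)
  have hε : 0 < ε := pos_of_mul_pos_left (one_pos.trans_le hk) k.cast_nonneg
  have ha₀ : a 0 ≠ 0 := fun h₀ => by simpa [h₀, hε] using h 0 hk₀
  have ha₀' : a 0 ≠ ∞ := fun h₀ => by
    have hak : a k = ∞ := top_le_iff.1 (h₀ ▸ ha k.zero_le)
    simpa [h₀, hak, hε] using h 0 hk₀
  set l := (a k / a 0) ^ ε with hl
  have hstep : ∀ j < k, a j * l < a (j + 1) := fun j hj => by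
    rw [hl, ENNReal.div_rpow_of_nonneg _ _ hε.le, ← mul_div_assoc]
    exact ENNReal.div_lt_of_lt_mul (h j hj)
  have hgrowth : ∀ j ≤ k, a 0 * l ^ j ≤ a j := by
    intro j
    induction j with
    | zero => simp
    | succ j ih =>
      intro hj
      calc a 0 * l ^ (j + 1) = a 0 * l ^ j * l := by ring
        _ ≤ a j * l := by gcongr; exact ih (by omega)
        _ ≤ a (j + 1) := (hstep j hj).le
  have hone : 1 ≤ a k / a 0 :=
    (ENNReal.le_div_iff_mul_le (.inl ha₀) (.inl ha₀')).2 (by simpa using ha k.zero_le)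
  obtain ⟨j, rfl⟩ := Nat.exists_eq_succ_of_ne_zero hk₀.ne'
  refine lt_irrefl (a (j + 1)) ?_
  calc a (j + 1) = a 0 * (a (j + 1) / a 0) ^ (1 : ℝ) := by
        rw [ENNReal.rpow_one, ENNReal.mul_div_cancel ha₀ ha₀']
    _ ≤ a 0 * (a (j + 1) / a 0) ^ (ε * (j + 1 : ℕ)) := by gcongr
    _ = a 0 * l ^ j * l := by rw [ENNReal.rpow_mul, ENNReal.rpow_natCast, pow_succ, mul_assoc]
    _ ≤ a j * l := by gcongr; exact hgrowth j (by omega)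
    _ < a (j + 1) := hstep j (by omega)

lemma exists_add_mul_rpow_le_mul_rpow {f : ℝ → ℝ≥0∞} (hf : Monotone f) {ε a b : ℝ} (hε₀ : 0 < ε)
    (hε₁ : ε ≤ 1) (hab : a ≤ b) :
    ∃ s, a ≤ s ∧ s + ε * (b - a) / 2 ≤ b ∧
      f (s + ε * (b - a) / 2) * f a ^ ε ≤ f s * f b ^ ε := by
  set h := ε * (b - a) / 2
  have hh : 0 ≤ h := by have := sub_nonneg.2 hab; positivity
  set k := ⌈1 / ε⌉₊
  have hk : 1 ≤ ε * k := (div_le_iff₀' hε₀).1 (Nat.le_ceil _)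
  have hkh : a + k * h ≤ b := by
    have hk₂ : ε * k ≤ 2 := by
      have := mul_lt_mul_of_pos_left (Nat.ceil_lt_add_one (one_div_pos.2 hε₀).le) hε₀
      rw [mul_add, mul_one_div_cancel hε₀.ne'] at this
      linarith
    calc a + k * h = a + ε * k * ((b - a) / 2) := by ring
      _ ≤ a + 2 * ((b - a) / 2) := by gcongr
      _ = b := by ring
  obtain ⟨j, hjk, hj⟩ := exists_mul_rpow_le_mul_rpow (a := fun j : ℕ => f (a + j * h))
    (fun i j hij => hf (by gcongr)) hk
  have hj_succ : a + (j + 1 : ℕ) * h = a + j * h + h := by push_cast; ring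
  refine ⟨a + j * h, by linarith [mul_nonneg j.cast_nonneg hh], ?_, ?_⟩
  · rw [← hj_succ]
    exact le_trans (by gcongr; exact hjk) hkh
  · calc f (a + j * h + h) * f a ^ ε ≤ f (a + j * h) * f (a + k * h) ^ ε := by
          simpa only [hj_succ, Nat.cast_zero, zero_mul, add_zero] using hj
      _ ≤ f (a + j * h) * f b ^ ε := by gcongr; exact hf hkh

end SlowGrowth

lemma exists_outerMeasure_le_ediam_rpow {M : Type*} [EMetricSpace M] [SecondCountableTopology M]
    {α : ℝ≥0} (hα : α < dimH (univ : Set M)) :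
    ∃ ν : OuterMeasure M, ν univ ≠ 0 ∧ ∀ A, ν A ≤ ediam A ^ (α : ℝ) := by
  borelize M
  obtain ⟨r, hr, hpre⟩ : ∃ r > 0,
      OuterMeasure.mkMetric'.pre (fun s : Set M => ediam s ^ (α : ℝ)) r univ ≠ 0 := by
    by_contra! h
    have hμ : μH[(α : ℝ)] (univ : Set M) = 0 := by
      rw [Measure.hausdorffMeasure, ← OuterMeasure.coe_mkMetric]
      simpa [OuterMeasure.mkMetric, OuterMeasure.mkMetric', OuterMeasure.iSup_apply] using h
    exact ENNReal.zero_ne_top (hμ.symm.trans (hausdorffMeasure_of_lt_dimH hα))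
  set ν := OuterMeasure.mkMetric'.pre (fun s : Set M => ediam s ^ (α : ℝ)) r
  obtain ⟨c, hc⟩ : ∃ c, ν (eball c (r / 2)) ≠ 0 := by
    by_contra! h
    obtain ⟨t, ht, hcover⟩ := TopologicalSpace.countable_cover_nhds fun x : M =>
      eball_mem_nhds x (ENNReal.half_pos hr.ne')
    exact hpre (hcover ▸ (measure_biUnion_null_iff ht).2 fun x _ => h x)
  refine ⟨OuterMeasure.restrict (eball c (r / 2)) ν, by simpa using hc, fun A => ?_⟩
  have hsmall : ediam (A ∩ eball c (r / 2)) ≤ r :=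
    calc ediam (A ∩ eball c (r / 2)) ≤ 2 * (r / 2) :=
          (ediam_mono inter_subset_right).trans ediam_eball_le
      _ = r := ENNReal.mul_div_cancel two_ne_zero ENNReal.ofNat_ne_top
  calc OuterMeasure.restrict (eball c (r / 2)) ν A = ν (A ∩ eball c (r / 2)) :=
        OuterMeasure.restrict_apply ..
    _ ≤ ediam (A ∩ eball c (r / 2)) ^ (α : ℝ) := OuterMeasure.mkMetric'.pre_le hsmall
    _ ≤ ediam A ^ (α : ℝ) := by gcongr; exact inter_subset_left

/-- A subset of `M` together with the mass assigned to it: a node of a hierarchy of clusters. The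
weight is part of the data because it is not the value of a measure at the set. -/
structure WeightedSet (M : Type*) where
  carrier : Set M
  weight : ℝ≥0∞

/-- The same set with its weight multiplied by `c`. -/
noncomputable def WeightedSet.scale {M : Type*} (c : ℝ≥0∞) (p : WeightedSet M) : WeightedSet M :=
  ⟨p.carrier, c * p.weight⟩

/-- Points of distinct members of `F` are at distance at least `δ`. -/
def IsSeparatedFamily {M : Type*} [PseudoMetricSpace M] (δ : ℝ) (F : Finset (WeightedSet M)) :
    Prop :=
  ∀ p ∈ F, ∀ q ∈ F, p ≠ q → ∀ x ∈ p.carrier, ∀ y ∈ q.carrier, δ ≤ dist x y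

/-- `G` consists of `δ`-separated subsets of `p`, and passing from `p` to `G` loses no mass. -/
structure IsSubdivision {M : Type*} [PseudoMetricSpace M] (δ : ℝ) (p : WeightedSet M)
    (G : Finset (WeightedSet M)) : Prop where
  carrier_subset : ∀ q ∈ G, q.carrier ⊆ p.carrier
  separated : IsSeparatedFamily δ G
  weight_le_sum : p.weight ≤ ∑ q ∈ G, q.weight

section Subdivision

variable {M : Type*} [PseudoMetricSpace M] {δ : ℝ}

lemma IsSeparatedFamily.injOn_carrier {F : Finset (WeightedSet M)} (hF : IsSeparatedFamily δ F)
    (hδ : 0 < δ) (hne : ∀ p ∈ F, p.carrier.Nonempty) :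
    InjOn WeightedSet.carrier (F : Set (WeightedSet M)) := by
  intro p hp q hq hpq
  by_contra h
  obtain ⟨x, hx⟩ := hne p hp
  exact hδ.not_ge (dist_self x ▸ hF p hp q hq h x hx x (hpq ▸ hx))

lemma IsSeparatedFamily.biUnion [DecidableEq (WeightedSet M)] {δ' : ℝ}
    {F : Finset (WeightedSet M)} {G : WeightedSet M → Finset (WeightedSet M)}
    (hF : IsSeparatedFamily δ' F) (hδ : δ ≤ δ') (hG : ∀ p ∈ F, IsSubdivision δ p (G p)) :
    IsSeparatedFamily δ (F.biUnion G) := by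
  simp only [IsSeparatedFamily, Finset.mem_biUnion]
  rintro q ⟨p, hp, hq⟩ q' ⟨p', hp', hq'⟩ hne x hx y hy
  by_cases h : p = p'
  · subst h
    exact (hG p hp).separated q hq q' hq' hne x hx y hy
  · exact hδ.trans (hF p hp p' hp' h x ((hG p hp).carrier_subset q hq hx)
      y ((hG p' hp').carrier_subset q' hq' hy))

lemma IsSubdivision.insert [DecidableEq (WeightedSet M)] {X P Q : Set M} {u v w : ℝ≥0∞}
    {G : Finset (WeightedSet M)} (hG : IsSubdivision δ ⟨Q, u⟩ G) (hδ : 0 < δ) (hP : P.Nonempty)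
    (hPX : P ⊆ X) (hQX : Q ⊆ X) (hPQ : ∀ x ∈ P, ∀ y ∈ Q, δ ≤ dist x y) (hv : v ≤ w + u) :
    IsSubdivision δ ⟨X, v⟩ (insert ⟨P, w⟩ G) where
  carrier_subset := by
    simp only [Finset.mem_insert, forall_eq_or_imp]
    exact ⟨hPX, fun q hq => (hG.carrier_subset q hq).trans hQX⟩
  separated := by
    simp only [IsSeparatedFamily, Finset.mem_insert]
    rintro p (rfl | hp) q (rfl | hq) hne x hx y hy
    · exact absurd rfl hne
    · exact hPQ x hx y (hG.carrier_subset q hq hy)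
    · exact dist_comm x y ▸ hPQ y hy x (hG.carrier_subset p hp hx)
    · exact hG.separated p hp q hq hne x hx y hy
  weight_le_sum := by
    have hnotMem : (⟨P, w⟩ : WeightedSet M) ∉ G := fun h => by
      obtain ⟨x, hx⟩ := hP
      exact hδ.not_ge (dist_self x ▸ hPQ x hx x (hG.carrier_subset _ h hx))
    rw [Finset.sum_insert hnotMem]
    exact hv.trans (by gcongr; exact hG.weight_le_sum)

lemma IsSubdivision.image_scale [DecidableEq (WeightedSet M)] {p : WeightedSet M}
    {G : Finset (WeightedSet M)} (hG : IsSubdivision δ p G) (hδ : 0 < δ)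
    (hne : ∀ q ∈ G, q.carrier.Nonempty) (c : ℝ≥0∞) :
    IsSubdivision δ (p.scale c) (G.image (WeightedSet.scale c)) where
  carrier_subset := by
    rw [Finset.forall_mem_image]
    exact hG.carrier_subset
  separated := by
    simp only [IsSeparatedFamily, Finset.forall_mem_image]
    exact fun q hq q' hq' hqq' => hG.separated q hq q' hq' (ne_of_apply_ne _ hqq')
  weight_le_sum := by
    have hinj : InjOn (WeightedSet.scale c) (G : Set (WeightedSet M)) := fun q hq q' hq' h =>
      hG.separated.injOn_carrier hδ hne hq hq' (congrArg (fun p => p.carrier) h :)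
    rw [Finset.sum_image hinj]
    simp only [WeightedSet.scale, ← Finset.mul_sum]
    gcongr
    exact hG.weight_le_sum

end Subdivision

/-- The levels `F n` of a tree of closed sets of diameter at most `d n`. Distinct clusters of
`F (n + 1)` are `d n / L`-separated, so `L` bounds the distortion of the associated ultrametric. -/
structure IsHierarchy {M : Type*} [PseudoMetricSpace M] (F : ℕ → Finset (WeightedSet M))
    (d : ℕ → ℝ) (L : ℝ) : Prop where
  isClosed : ∀ n, ∀ p ∈ F n, IsClosed p.carrier
  nonempty : ∀ n, ∀ p ∈ F n, p.carrier.Nonempty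
  dist_le : ∀ n, ∀ p ∈ F n, ∀ x ∈ p.carrier, ∀ y ∈ p.carrier, dist x y ≤ d n
  separated : ∀ n, IsSeparatedFamily (d n / L) (F (n + 1))
  exists_isSubdivision : ∀ n, ∀ p ∈ F n, ∃ G ⊆ F (n + 1), IsSubdivision (d n / L) p G

/-- The subset of `M` carved out by a hierarchy: the points lying in some cluster of every level. -/
def limitSet {M : Type*} (F : ℕ → Finset (WeightedSet M)) : Set M :=
  ⋂ n, ⋃ p ∈ F n, p.carrier

section LimitSet

variable {M : Type*} {F : ℕ → Finset (WeightedSet M)} {d : ℕ → ℝ} {L : ℝ}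

lemma mem_limitSet {x : M} : x ∈ limitSet F ↔ ∀ n, ∃ p ∈ F n, x ∈ p.carrier := by
  simp only [limitSet, mem_iInter, mem_iUnion, exists_prop]

lemma IsHierarchy.isClosed_limitSet [PseudoMetricSpace M] (hF : IsHierarchy F d L) :
    IsClosed (limitSet F) :=
  isClosed_iInter fun n => (F n).finite_toSet.isClosed_biUnion (hF.isClosed n)

theorem IsHierarchy.exists_isUltrametricOn_limitSet [MetricSpace M] (hF : IsHierarchy F d L)
    (hL : 0 < L) (hd₀ : ∀ n, 0 ≤ d n) (hlim : Tendsto d atTop (𝓝 0)) {p₀ : WeightedSet M}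
    (hroot : F 0 = {p₀}) :
    ∃ ρ : limitSet F → limitSet F → ℝ, IsUltrametricOn ρ ∧
      ∀ x y : limitSet F, dist (x : M) (y : M) ≤ ρ x y ∧ ρ x y ≤ L * dist (x : M) (y : M) := by
  choose π hπF hπmem using fun n (x : limitSet F) => mem_limitSet.1 x.2 n
  have hlower : ∀ x y, dist x y ≤ labelDist π d x y := by
    refine dist_le_labelDist hd₀ hlim (fun x y => ?_) fun n x y h => ?_
    · have hπ₀ : ∀ z, π 0 z = p₀ := fun z => Finset.mem_singleton.1 (hroot ▸ hπF 0 z)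
      rw [hπ₀, hπ₀]
    · exact hF.dist_le n _ (hπF n x) x (hπmem n x) y (h ▸ hπmem n y)
  have hupper : ∀ x y, labelDist π d x y ≤ L * dist x y := fun x y =>
    labelDist_le (by positivity) fun n h => (div_le_iff₀' hL).1 <|
      hF.separated n _ (hπF _ x) _ (hπF _ y) h x (hπmem _ x) y (hπmem _ y)
  exact ⟨labelDist π d, isUltrametricOn_of_dist_le_of_le_mul_dist labelDist_comm
    (labelDist_le_max hlim.bddAbove_range hd₀) hlower hupper, fun x y => ⟨hlower x y, hupper x y⟩⟩

end LimitSet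

/-- The total price of the sets `t i` that meet `A`, where `t i` costs `e i`; the weights of a
hierarchy are compared with it when `t` covers the limit set. -/
noncomputable def hittingCost {M : Type*} (t : ℕ → Set M) (e : ℕ → ℝ≥0∞) (A : Set M) : ℝ≥0∞ :=
  ∑' i, {i | (t i ∩ A).Nonempty}.indicator e i

section MassDistribution

variable {M : Type*} {t : ℕ → Set M} {e : ℕ → ℝ≥0∞}

lemma le_hittingCost {A : Set M} {i : ℕ} (h : (t i ∩ A).Nonempty) : e i ≤ hittingCost t e A :=
  (indicator_of_mem (s := {i | (t i ∩ A).Nonempty}) h e).symm.trans_le (ENNReal.le_tsum i)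

lemma hittingCost_le_tsum (A : Set M) : hittingCost t e A ≤ ∑' i, e i :=
  ENNReal.tsum_le_tsum fun i => indicator_le_self _ _ i

lemma sum_hittingCost_le {A : Set M} {G : Finset (WeightedSet M)}
    (hG : ∀ q ∈ G, q.carrier ⊆ A)
    (hsplit : ∀ i, (t i ∩ A).Nonempty → ∀ q ∈ G, ∀ q' ∈ G,
      (t i ∩ q.carrier).Nonempty → (t i ∩ q'.carrier).Nonempty → q = q') :
    ∑ q ∈ G, hittingCost t e q.carrier ≤ hittingCost t e A := by
  simp only [hittingCost]
  rw [← Summable.tsum_finsetSum fun _ _ => ENNReal.summable]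
  refine ENNReal.tsum_le_tsum fun i => ?_
  by_cases h : ∃ q ∈ G, (t i ∩ q.carrier).Nonempty
  · obtain ⟨q, hq, hqi⟩ := h
    have hA : (t i ∩ A).Nonempty := hqi.mono (inter_subset_inter_right _ (hG q hq))
    rw [Finset.sum_eq_single_of_mem q hq]
    · exact indicator_le_indicator_of_subset (fun j hj => hj.mono
        (inter_subset_inter_right _ (hG q hq))) (fun _ => zero_le) i
    · exact fun q' hq' hne => indicator_of_notMem (s := {i | (t i ∩ q'.carrier).Nonempty})
        (fun hq'i => hne (hsplit i hA q' hq' q hq hq'i hqi)) e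
  · push Not at h
    rw [Finset.sum_eq_zero fun q hq => indicator_of_notMem (by simp [h q hq]) e]
    exact zero_le

variable [PseudoMetricSpace M] {F : ℕ → Finset (WeightedSet M)} {d : ℕ → ℝ} {L : ℝ}

lemma IsHierarchy.exists_hittingCost_lt_weight (hF : IsHierarchy F d L)
    (hsplit : ∀ i n, ∀ p ∈ F n, e i < p.weight → ∀ q ∈ F (n + 1), ∀ q' ∈ F (n + 1),
      (t i ∩ q.carrier).Nonempty → (t i ∩ q'.carrier).Nonempty → q = q')
    {n : ℕ} {p : WeightedSet M} (hp : p ∈ F n) (hcost : hittingCost t e p.carrier < p.weight) :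
    ∃ q ∈ F (n + 1), q.carrier ⊆ p.carrier ∧ hittingCost t e q.carrier < q.weight := by
  obtain ⟨G, hGF, hG⟩ := hF.exists_isSubdivision n p hp
  by_contra! h
  refine hcost.not_ge ?_
  calc p.weight ≤ ∑ q ∈ G, q.weight := hG.weight_le_sum
    _ ≤ ∑ q ∈ G, hittingCost t e q.carrier :=
        Finset.sum_le_sum fun q hq => h q (hGF hq) (hG.carrier_subset q hq)
    _ ≤ hittingCost t e p.carrier :=
        sum_hittingCost_le hG.carrier_subset fun i hi q hq q' hq' =>
          hsplit i n p hp ((le_hittingCost hi).trans_lt hcost) q (hGF hq) q' (hGF hq')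

-- If the cover were cheaper than the root, some branch would consist of clusters heavier than the
-- cost of the `t i` meeting them; a set `t i` containing its limit point cannot be that cheap.
lemma IsHierarchy.weight_le_tsum_of_limitSet_subset [CompactSpace M] (hF : IsHierarchy F d L)
    (hcover : limitSet F ⊆ ⋃ i, t i)
    (hsplit : ∀ i n, ∀ p ∈ F n, e i < p.weight → ∀ q ∈ F (n + 1), ∀ q' ∈ F (n + 1),
      (t i ∩ q.carrier).Nonempty → (t i ∩ q'.carrier).Nonempty → q = q')
    (hsmall : ∀ i, ∃ n, ∀ p ∈ F n, p.weight ≤ e i) {p₀ : WeightedSet M} (hp₀ : p₀ ∈ F 0) :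
    p₀.weight ≤ ∑' i, e i := by
  by_contra! hcost₀
  choose! child hmem hsub hlt using fun n p hp => hF.exists_hittingCost_lt_weight hsplit (n := n)
    (p := p) hp
  let P : ℕ → WeightedSet M := Nat.rec p₀ child
  have hP : ∀ n, P n ∈ F n ∧ hittingCost t e (P n).carrier < (P n).weight := by
    intro n
    induction n with
    | zero => exact ⟨hp₀, (hittingCost_le_tsum _).trans_lt hcost₀⟩
    | succ n ih => exact ⟨hmem n _ ih.1 ih.2, hlt n _ ih.1 ih.2⟩
  have hclosed : ∀ n, IsClosed (P n).carrier := fun n => hF.isClosed n _ (hP n).1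
  obtain ⟨x, hx⟩ := IsCompact.nonempty_iInter_of_sequence_nonempty_isCompact_isClosed
    (fun n => (P n).carrier) (fun n => hsub n _ (hP n).1 (hP n).2)
    (fun n => hF.nonempty n _ (hP n).1) (hclosed 0).isCompact hclosed
  rw [mem_iInter] at hx
  obtain ⟨i, hi⟩ := mem_iUnion.1 (hcover (mem_limitSet.2 fun n => ⟨P n, (hP n).1, hx n⟩))
  obtain ⟨n, hn⟩ := hsmall i
  exact (((hn _ (hP n).1).trans (le_hittingCost ⟨x, hi, hx n⟩)).trans_lt (hP n).2).false

lemma IsHierarchy.le_mul_ediam (hF : IsHierarchy F d L) (hL : 0 < L) {n : ℕ} {A : Set M}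
    {q q' : WeightedSet M} (hq : q ∈ F (n + 1)) (hq' : q' ∈ F (n + 1)) (hne : q ≠ q')
    (hA : (A ∩ q.carrier).Nonempty) (hA' : (A ∩ q'.carrier).Nonempty) :
    ENNReal.ofReal (d n) ≤ ENNReal.ofReal L * ediam A := by
  obtain ⟨x, hxA, hxq⟩ := hA
  obtain ⟨y, hyA, hyq⟩ := hA'
  calc ENNReal.ofReal (d n) ≤ ENNReal.ofReal (L * dist x y) :=
        ENNReal.ofReal_le_ofReal ((div_le_iff₀' hL).1 (hF.separated n q hq q' hq' hne x hxq y hyq))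
    _ = ENNReal.ofReal L * edist x y := by rw [ENNReal.ofReal_mul hL.le, edist_dist]
    _ ≤ ENNReal.ofReal L * ediam A := by gcongr; exact edist_le_ediam_of_mem hxA hyA

end MassDistribution

section Dimension

variable {M : Type*} [MetricSpace M] [CompactSpace M] {F : ℕ → Finset (WeightedSet M)}
  {d : ℕ → ℝ} {L β : ℝ}

theorem IsHierarchy.weight_le_mul_hausdorffMeasure [MeasurableSpace M] [BorelSpace M]
    (hF : IsHierarchy F d L) (hL : 0 < L) (hlim : Tendsto d atTop (𝓝 0)) (hβ : 0 < β)
    (hw : ∀ n, ∀ p ∈ F n, p.weight ≤ ENNReal.ofReal (d n) ^ β) {p₀ : WeightedSet M}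
    (hp₀ : p₀ ∈ F 0) : p₀.weight ≤ ENNReal.ofReal L ^ β * μH[β] (limitSet F) := by
  have hL₀ : ENNReal.ofReal L ^ β ≠ 0 := by simp [hL]
  rw [← ENNReal.div_le_iff' hL₀ (by simp [hβ.le]), Measure.hausdorffMeasure_apply]
  refine le_iSup₂_of_le 1 one_pos (le_iInf₂ fun t ht => le_iInf fun _ => ?_)
  rw [ENNReal.div_le_iff' hL₀ (by simp [hβ.le]), ← ENNReal.tsum_mul_left]
  refine ENNReal.le_of_forall_pos_le_add fun η hη _ => ?_
  obtain ⟨η', hη', hsum⟩ := ENNReal.exists_pos_sum_of_countable' (ENNReal.coe_pos.2 hη).ne' ℕ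
  refine le_trans ?_ (add_le_add_right hsum.le _)
  rw [← ENNReal.tsum_add]
  refine hF.weight_le_tsum_of_limitSet_subset ht ?_ (fun i => ?_) hp₀
  · intro i n p hp hlt q hq q' hq' hqi hqi'
    by_contra hne
    refine hlt.not_ge ((hw n p hp).trans ?_)
    calc ENNReal.ofReal (d n) ^ β ≤ (ENNReal.ofReal L * ediam (t i)) ^ β := by
          gcongr; exact hF.le_mul_ediam hL hq hq' hne hqi hqi'
      _ = ENNReal.ofReal L ^ β * ⨆ _ : (t i).Nonempty, ediam (t i) ^ β := by
          rw [ENNReal.mul_rpow_of_nonneg _ _ hβ.le, iSup_pos hqi.left]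
      _ ≤ _ := le_self_add
  · have hscale : Tendsto (fun n => ENNReal.ofReal (d n) ^ β) atTop (𝓝 0) := by
      simpa [hβ] using (ENNReal.tendsto_ofReal hlim).ennrpow_const β
    obtain ⟨n, hn⟩ := (hscale.eventually_lt_const (hη' i)).exists
    exact ⟨n, fun p hp => (hw n p hp).trans (hn.le.trans le_add_self)⟩

theorem IsHierarchy.le_dimH_limitSet (hF : IsHierarchy F d L) (hL : 0 < L)
    (hlim : Tendsto d atTop (𝓝 0)) (hβ : 0 < β)
    (hw : ∀ n, ∀ p ∈ F n, p.weight ≤ ENNReal.ofReal (d n) ^ β) {p₀ : WeightedSet M}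
    (hp₀ : p₀ ∈ F 0) (hp₀w : p₀.weight ≠ 0) : ENNReal.ofReal β ≤ dimH (limitSet F) := by
  borelize M
  refine le_dimH_of_hausdorffMeasure_ne_zero fun h => hp₀w ?_
  rw [Real.coe_toNNReal β hβ.le] at h
  simpa [h] using hF.weight_le_mul_hausdorffMeasure hL hlim hβ hw hp₀

end Dimension

section Levels

variable {M : Type*} [PseudoMetricSpace M]

lemma exists_levels_of_forall_exists_isSubdivision {P : ℕ → WeightedSet M → Prop} {δ : ℕ → ℝ}
    (hδ : Antitone δ)
    (hstep : ∀ n p, P n p → ∃ G, IsSubdivision (δ n) p G ∧ ∀ q ∈ G, P (n + 1) q)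
    {p₀ : WeightedSet M} (hp₀ : P 0 p₀) :
    ∃ F : ℕ → Finset (WeightedSet M), F 0 = {p₀} ∧ (∀ n, ∀ p ∈ F n, P n p) ∧
      (∀ n, IsSeparatedFamily (δ n) (F (n + 1))) ∧
      ∀ n, ∀ p ∈ F n, ∃ G ⊆ F (n + 1), IsSubdivision (δ n) p G := by
  classical
  choose! G hG hGP using hstep
  let F : ℕ → Finset (WeightedSet M) := Nat.rec {p₀} fun n Fn => Fn.biUnion (G n)
  have hFP : ∀ n, ∀ p ∈ F n, P n p := by
    intro n
    induction n with
    | zero => simpa [F] using hp₀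
    | succ n ih =>
      intro q hq
      obtain ⟨p, hp, hqp⟩ := Finset.mem_biUnion.1 hq
      exact hGP n p (ih p hp) q hqp
  have hsub : ∀ n, ∀ p ∈ F n, IsSubdivision (δ n) p (G n p) := fun n p hp => hG n p (hFP n p hp)
  refine ⟨F, rfl, hFP, fun n => ?_, fun n p hp =>
    ⟨G n p, Finset.subset_biUnion_of_mem (G n) hp, hsub n p hp⟩⟩
  induction n with
  | zero =>
    have hroot : IsSeparatedFamily (δ 0) (F 0) := by simp [F, IsSeparatedFamily]
    exact hroot.biUnion le_rfl (hsub 0)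
  | succ n ih => exact ih.biUnion (hδ n.le_succ) (hsub (n + 1))

end Levels

section Cluster

variable {M : Type*} [PseudoMetricSpace M] {ν : OuterMeasure M} {ε r : ℝ} {X : Set M}

/-- The pieces into which `X` is cut at scale `r`: the weight of such a piece `p` is at most
`(ν b / ν (closedBall y r ∩ p)) ^ ε` times its measure, where `b` is the trace on `X` of a ball of
radius `6 * r` around `p`. -/
structure IsCluster (ν : OuterMeasure M) (ε r : ℝ) (X : Set M) (p : WeightedSet M) : Prop where
  isClosed : IsClosed p.carrier
  measure_ne_zero : ν p.carrier ≠ 0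
  exists_center : ∃ x, p.carrier ⊆ closedBall x (6 * r) ∧
    p.weight ≤ ν (closedBall x (6 * r) ∩ X) ∧
    ∀ y, p.weight * ν (closedBall y r ∩ p.carrier) ^ ε ≤
      ν p.carrier * ν (closedBall x (6 * r) ∩ X) ^ ε

lemma IsCluster.nonempty {p : WeightedSet M} (hp : IsCluster ν ε r X p) : p.carrier.Nonempty :=
  nonempty_iff_ne_empty.2 fun h => hp.measure_ne_zero (h ▸ measure_empty)

lemma IsCluster.mono {Y : Set M} {p : WeightedSet M} (hp : IsCluster ν ε r X p) (hε : 0 ≤ ε)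
    (hXY : X ⊆ Y) : IsCluster ν ε r Y p where
  isClosed := hp.isClosed
  measure_ne_zero := hp.measure_ne_zero
  exists_center := by
    obtain ⟨x, hsub, hweight, hball⟩ := hp.exists_center
    have hb : ν (closedBall x (6 * r) ∩ X) ≤ ν (closedBall x (6 * r) ∩ Y) := by gcongr
    exact ⟨x, hsub, hweight.trans hb, fun y => (hball y).trans (by gcongr)⟩

lemma exists_forall_measure_closedBall_inter_le {t : Finset M}
    (ht : X ⊆ ⋃ c ∈ t, closedBall c r) (hX : ν X ≠ 0) :
    ∃ x ∈ t, ν (closedBall x (3 * r) ∩ X) ≠ 0 ∧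
      ∀ y, ν (closedBall y r ∩ X) ≤ ν (closedBall x (3 * r) ∩ X) := by
  have htne : t.Nonempty := by
    rw [Finset.nonempty_iff_ne_empty]
    rintro rfl
    exact hX (measure_mono_null (by simpa using ht) (measure_empty (μ := ν)))
  obtain ⟨x, hxt, hx⟩ := t.exists_max_image (fun c => ν (closedBall c (3 * r) ∩ X)) htne
  have hmax : ∀ y, ν (closedBall y r ∩ X) ≤ ν (closedBall x (3 * r) ∩ X) := by
    intro y
    rcases (closedBall y r ∩ X).eq_empty_or_nonempty with h | ⟨z, hzy, hzX⟩
    · simp [h]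
    · obtain ⟨c, hct, hzc⟩ := mem_iUnion₂.1 (ht hzX)
      refine le_trans ?_ (hx c hct)
      gcongr
      refine closedBall_subset_closedBall' ?_
      linarith [dist_triangle_left y c z, mem_closedBall.1 hzy, mem_closedBall.1 hzc]
  refine ⟨x, hxt, fun hx₀ => hX ?_, hmax⟩
  have hnull : ν (⋃ c ∈ t, closedBall c r ∩ X) = 0 :=
    (measure_biUnion_null_iff t.countable_toSet).2 fun c _ => le_zero_iff.1 ((hmax c).trans_eq hx₀)
  refine measure_mono_null (fun z hz => ?_) hnull
  obtain ⟨c, hct, hzc⟩ := mem_iUnion₂.1 (ht hz)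
  exact mem_iUnion₂.2 ⟨c, hct, hzc, hz⟩

lemma exists_isCluster (hε₀ : 0 < ε) (hε₁ : ε ≤ 1) (hr : 0 ≤ r) (hX : IsClosed X) {t : Finset M}
    (ht : X ⊆ ⋃ c ∈ t, closedBall c r) (hνX : ν X ≠ 0) :
    ∃ x ∈ t, ∃ s ≥ 3 * r, IsCluster ν ε r X
      ⟨closedBall x s ∩ X, ν (closedBall x (s + 3 * r * ε / 2) ∩ X)⟩ := by
  obtain ⟨x, hxt, hx₀, hmax⟩ := exists_forall_measure_closedBall_inter_le ht hνX
  have hmono : Monotone fun s => ν (closedBall x s ∩ X) := fun s s' h => by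
    dsimp only; gcongr
  obtain ⟨s, hs, hs', hgrowth⟩ := exists_add_mul_rpow_le_mul_rpow hmono hε₀ hε₁
    (show 3 * r ≤ 6 * r by linarith)
  rw [show ε * (6 * r - 3 * r) / 2 = 3 * r * ε / 2 by ring] at hs' hgrowth
  have hs₆ : s ≤ 6 * r := le_trans (le_add_of_nonneg_right (by positivity)) hs'
  refine ⟨x, hxt, s, hs, isClosed_closedBall.inter hX, ?_, x, ?_, hmono hs', fun y => ?_⟩
  · exact fun h => hx₀ (le_zero_iff.1 ((hmono hs).trans_eq h))
  · exact inter_subset_left.trans (closedBall_subset_closedBall hs₆)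
  · have hball : ν (closedBall y r ∩ (closedBall x s ∩ X)) ≤ ν (closedBall x (3 * r) ∩ X) :=
      (measure_mono (inter_subset_inter_right _ inter_subset_right)).trans (hmax y)
    exact le_trans (mul_le_mul_right (ENNReal.rpow_le_rpow hball hε₀.le) _) hgrowth

-- Cut out one cluster together with a moat of width `3 * r * ε / 2` and recurse on what is left,
-- which no longer needs the centre of the cluster in its net.
lemma exists_isSubdivision_isCluster (hε₀ : 0 < ε) (hε₁ : ε ≤ 1) (hr : 0 < r) (t : Finset M)
    (hX : IsClosed X) (ht : X ⊆ ⋃ c ∈ t, closedBall c r) :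
    ∃ G, IsSubdivision (3 * r * ε / 2) ⟨X, ν X⟩ G ∧ ∀ p ∈ G, IsCluster ν ε r X p := by
  classical
  induction t using Finset.strongInduction generalizing X with
  | H t ih =>
  by_cases hνX : ν X = 0
  · exact ⟨∅, ⟨by simp, by simp [IsSeparatedFamily], by simp [hνX]⟩, by simp⟩
  obtain ⟨x, hxt, s, hs, hcluster⟩ := exists_isCluster hε₀ hε₁ hr.le hX ht hνX
  set δ := 3 * r * ε / 2
  have hδ : 0 < δ := by positivity
  set Q := X \ ball x (s + δ)
  have hQ : Q ⊆ ⋃ c ∈ t.erase x, closedBall c r := by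
    rintro y ⟨hyX, hy⟩
    obtain ⟨c, hct, hyc⟩ := mem_iUnion₂.1 (ht hyX)
    refine mem_iUnion₂.2 ⟨c, Finset.mem_erase.2 ⟨?_, hct⟩, hyc⟩
    rintro rfl
    exact hy (mem_ball.2 (by linarith [mem_closedBall.1 hyc]))
  obtain ⟨G, hG, hGcluster⟩ := ih _ (Finset.erase_ssubset hxt) (hX.sdiff isOpen_ball) hQ
  refine ⟨insert ⟨closedBall x s ∩ X, ν (closedBall x (s + δ) ∩ X)⟩ G, hG.insert hδ
    hcluster.nonempty inter_subset_right sdiff_subset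
    ?_ ?_, ?_⟩
  · rintro y ⟨hyx, -⟩ z ⟨-, hz⟩
    rw [mem_ball, not_lt] at hz
    linarith [dist_triangle_left z x y, mem_closedBall.1 hyx]
  · refine (measure_mono fun y hy => ?_).trans (measure_union_le _ _)
    by_cases hyx : y ∈ ball x (s + δ)
    · exact .inl ⟨ball_subset_closedBall hyx, hy⟩
    · exact .inr ⟨hy, hyx⟩
  · rw [Finset.forall_mem_insert]
    exact ⟨hcluster, fun p hp => (hGcluster p hp).mono hε₀.le sdiff_subset⟩

end Cluster

section Construction

variable {M : Type*} [PseudoMetricSpace M] {ν : OuterMeasure M} {ε α r : ℝ}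

/-- The invariant kept at scale `r` while the hierarchy is built. Subdividing `p` costs a factor
`ν (closedBall x r ∩ p) ^ ε`, for which `weight_mul_rpow_le` reserves room. -/
structure IsBalanced (ν : OuterMeasure M) (ε α r : ℝ) (p : WeightedSet M) : Prop where
  isClosed : IsClosed p.carrier
  measure_ne_zero : ν p.carrier ≠ 0
  dist_le : ∀ x ∈ p.carrier, ∀ y ∈ p.carrier, dist x y ≤ 12 * r
  weight_mul_rpow_le : ∀ x, p.weight * ν (closedBall x r ∩ p.carrier) ^ ε ≤ ν p.carrier
  weight_le : p.weight ≤ ENNReal.ofReal (12 * r) ^ ((1 - ε) * α)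

lemma IsBalanced.nonempty {p : WeightedSet M} (hp : IsBalanced ν ε α r p) : p.carrier.Nonempty :=
  nonempty_iff_ne_empty.2 fun h => hp.measure_ne_zero (h ▸ measure_empty)

lemma measure_closedBall_inter_le (hν : ∀ A, ν A ≤ ediam A ^ α) (hα : 0 ≤ α) (x : M) (r : ℝ)
    (X : Set M) : ν (closedBall x r ∩ X) ≤ ENNReal.ofReal (2 * r) ^ α := by
  refine (hν _).trans (ENNReal.rpow_le_rpow (ediam_le_of_forall_dist_le ?_) hα)
  rintro y ⟨hy, -⟩ z ⟨hz, -⟩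
  linarith [dist_triangle_right y z x, mem_closedBall.1 hy, mem_closedBall.1 hz]

lemma IsBalanced.scale_of_isCluster {p q : WeightedSet M} (hp : IsBalanced ν ε α (6 * r) p)
    (hq : IsCluster ν ε r p.carrier q) (hν : ∀ A, ν A ≤ ediam A ^ α) (hε₀ : 0 ≤ ε) (hε₁ : ε ≤ 1)
    (hα : 0 ≤ α) : IsBalanced ν ε α r (q.scale (p.weight / ν p.carrier)) := by
  obtain ⟨x, hsub, hweight, hball⟩ := hq.exists_center
  set b := ν (closedBall x (6 * r) ∩ p.carrier)
  have hb : p.weight / ν p.carrier * b ^ ε ≤ 1 :=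
    calc p.weight / ν p.carrier * b ^ ε = p.weight * b ^ ε / ν p.carrier :=
          ENNReal.mul_div_right_comm.symm
      _ ≤ ν p.carrier / ν p.carrier := by gcongr; exact hp.weight_mul_rpow_le x
      _ ≤ 1 := ENNReal.div_self_le_one
  refine ⟨hq.isClosed, hq.measure_ne_zero, fun y hy z hz => ?_, fun y => ?_, ?_⟩
  · linarith [dist_triangle_right y z x, mem_closedBall.1 (hsub hy), mem_closedBall.1 (hsub hz)]
  · calc p.weight / ν p.carrier * q.weight * ν (closedBall y r ∩ q.carrier) ^ ε
        = p.weight / ν p.carrier * (q.weight * ν (closedBall y r ∩ q.carrier) ^ ε) := mul_assoc ..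
      _ ≤ p.weight / ν p.carrier * (ν q.carrier * b ^ ε) := mul_le_mul_right (hball y) _
      _ = p.weight / ν p.carrier * b ^ ε * ν q.carrier := by ring
      _ ≤ ν q.carrier := mul_le_of_le_one_left' hb
  · calc p.weight / ν p.carrier * q.weight
        ≤ p.weight / ν p.carrier * b := by gcongr
      _ = p.weight / ν p.carrier * b ^ ε * b ^ (1 - ε) := by
          rw [mul_assoc, ← ENNReal.rpow_add_of_nonneg _ _ hε₀ (sub_nonneg.2 hε₁),
            add_sub_cancel, ENNReal.rpow_one]
      _ ≤ b ^ (1 - ε) := mul_le_of_le_one_left' hb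
      _ ≤ (ENNReal.ofReal (2 * (6 * r)) ^ α) ^ (1 - ε) :=
          ENNReal.rpow_le_rpow (measure_closedBall_inter_le hν hα ..) (sub_nonneg.2 hε₁)
      _ = ENNReal.ofReal (12 * r) ^ ((1 - ε) * α) := by
          rw [← ENNReal.rpow_mul, mul_comm α]; ring_nf

variable [CompactSpace M]

lemma measure_ne_top_of_le_ediam_rpow (hν : ∀ A, ν A ≤ ediam A ^ α) (hα : 0 ≤ α) (X : Set M) :
    ν X ≠ ∞ :=
  ne_top_of_le_ne_top (ENNReal.rpow_ne_top_of_nonneg hα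
    (isBounded_of_compactSpace (s := X)).ediam_ne_top) (hν X)

lemma IsBalanced.exists_isSubdivision {p : WeightedSet M} (hp : IsBalanced ν ε α (6 * r) p)
    (hν : ∀ A, ν A ≤ ediam A ^ α) (hε₀ : 0 < ε) (hε₁ : ε ≤ 1) (hα : 0 ≤ α) (hr : 0 < r) :
    ∃ G, IsSubdivision (3 * r * ε / 2) p G ∧ ∀ q ∈ G, IsBalanced ν ε α r q := by
  classical
  obtain ⟨t, -, htfin, ht⟩ := (isCompact_univ (X := M)).finite_cover_balls hr
  have hcover : p.carrier ⊆ ⋃ c ∈ htfin.toFinset, closedBall c r := fun x _ => by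
    obtain ⟨c, hct, hxc⟩ := mem_iUnion₂.1 (ht (mem_univ x))
    exact mem_iUnion₂.2 ⟨c, htfin.mem_toFinset.2 hct, ball_subset_closedBall hxc⟩
  obtain ⟨G, hG, hGcluster⟩ :=
    exists_isSubdivision_isCluster (ν := ν) hε₀ hε₁ hr htfin.toFinset hp.isClosed hcover
  refine ⟨G.image (WeightedSet.scale (p.weight / ν p.carrier)), ?_, ?_⟩
  · have hscale : WeightedSet.scale (p.weight / ν p.carrier) ⟨p.carrier, ν p.carrier⟩ = p := by
      rw [WeightedSet.scale, ENNReal.div_mul_cancel hp.measure_ne_zero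
        (measure_ne_top_of_le_ediam_rpow hν hα _)]
    have himage := hG.image_scale (by positivity) (fun q hq => (hGcluster q hq).nonempty)
      (p.weight / ν p.carrier)
    rwa [hscale] at himage
  · rw [Finset.forall_mem_image]
    exact fun q hq => hp.scale_of_isCluster (hGcluster q hq) hν hε₀.le hε₁ hα

lemma exists_isBalanced_univ (hν₀ : ν univ ≠ 0) (hν : ∀ A, ν A ≤ ediam A ^ α) (hε₀ : 0 ≤ ε)
    (hε₁ : ε ≤ 1) (hα : 0 ≤ α) :
    ∃ r > 0, IsBalanced ν ε α r ⟨univ, ν univ ^ (1 - ε)⟩ := by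
  set r := diam (univ : Set M) + 1
  have hr : 0 < r := by positivity
  have hdist : ∀ x y : M, dist x y ≤ 12 * r := fun x y => by
    have := dist_le_diam_of_mem isBounded_of_compactSpace (mem_univ x) (mem_univ y)
    linarith
  refine ⟨r, hr, isClosed_univ, hν₀, fun x _ y _ => hdist x y, fun x => ?_, ?_⟩
  · calc ν univ ^ (1 - ε) * ν (closedBall x r ∩ univ) ^ ε ≤ ν univ ^ (1 - ε) * ν univ ^ ε := by
          gcongr; exact subset_univ _
      _ = ν univ := by
          rw [← ENNReal.rpow_add_of_nonneg _ _ (sub_nonneg.2 hε₁) hε₀, sub_add_cancel,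
            ENNReal.rpow_one]
  · calc ν univ ^ (1 - ε) ≤ (ENNReal.ofReal (12 * r) ^ α) ^ (1 - ε) := by
          have hdiam : ediam (univ : Set M) ≤ ENNReal.ofReal (12 * r) :=
            ediam_le_of_forall_dist_le fun x _ y _ => hdist x y
          exact ENNReal.rpow_le_rpow ((hν univ).trans (ENNReal.rpow_le_rpow hdiam hα))
            (sub_nonneg.2 hε₁)
      _ = ENNReal.ofReal (12 * r) ^ ((1 - ε) * α) := by rw [← ENNReal.rpow_mul, mul_comm α]

theorem exists_isHierarchy (hν₀ : ν univ ≠ 0) (hν : ∀ A, ν A ≤ ediam A ^ α) (hε₀ : 0 < ε)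
    (hε₁ : ε ≤ 1) (hα : 0 ≤ α) :
    ∃ (F : ℕ → Finset (WeightedSet M)) (d : ℕ → ℝ) (p₀ : WeightedSet M),
      IsHierarchy F d (48 / ε) ∧ (∀ n, 0 ≤ d n) ∧ Tendsto d atTop (𝓝 0) ∧
      (∀ n, ∀ p ∈ F n, p.weight ≤ ENNReal.ofReal (d n) ^ ((1 - ε) * α)) ∧
      F 0 = {p₀} ∧ p₀.weight ≠ 0 := by
  obtain ⟨r₀, hr₀, hroot⟩ := exists_isBalanced_univ hν₀ hν hε₀.le hε₁ hα
  set r : ℕ → ℝ := fun n => r₀ / 6 ^ n with hr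
  have hr_succ : ∀ n, r n = 6 * r (n + 1) := fun n => by simp only [hr, pow_succ]; field_simp
  have hr_pos : ∀ n, 0 < r n := fun n => by positivity
  have hgap : ∀ n, 3 * r (n + 1) * ε / 2 = 12 * r n / (48 / ε) := fun n => by
    rw [hr_succ n]; field_simp; ring
  have hanti : Antitone fun n => 12 * r n / (48 / ε) := antitone_nat_of_succ_le fun n => by
    have := hr_succ n
    have := hr_pos (n + 1)
    gcongr
    linarith
  obtain ⟨F, hF₀, hbal, hsep, hsub⟩ := exists_levels_of_forall_exists_isSubdivision
    (P := fun n => IsBalanced ν ε α (r n)) hanti (fun n p hp => by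
      rw [← hgap]
      exact (hr_succ n ▸ hp).exists_isSubdivision hν hε₀ hε₁ hα (hr_pos (n + 1)))
    (p₀ := ⟨univ, ν univ ^ (1 - ε)⟩) (by simpa [hr] using hroot)
  refine ⟨F, fun n => 12 * r n, _, ⟨fun n p hp => (hbal n p hp).isClosed,
    fun n p hp => (hbal n p hp).nonempty, fun n p hp => (hbal n p hp).dist_le, hsep, hsub⟩,
    fun n => by have := hr_pos n; positivity, ?_, fun n p hp => (hbal n p hp).weight_le, hF₀, ?_⟩
  · have hpow : Tendsto (fun n : ℕ => (1 / 6 : ℝ) ^ n) atTop (𝓝 0) :=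
      tendsto_pow_atTop_nhds_zero_of_lt_one (by norm_num) (by norm_num)
    simpa [hr, div_eq_mul_inv] using (hpow.const_mul r₀).const_mul 12
  · exact (ENNReal.rpow_pos (pos_iff_ne_zero.2 hν₀) (measure_ne_top_of_le_ediam_rpow hν hα _)).ne'

end Construction

/-- **Nonlinear Dvoretzky theorem for Hausdorff dimension (Mendel–Naor).** There is a universal
constant `c > 0` such that for every `ε ∈ (0,1)` and `α > 0`, every compact metric space of
Hausdorff dimension `> α` has a closed subset of Hausdorff dimension `≥ (1-ε)α` that embeds
into an ultrametric space with distortion at most `c/ε`. -/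
theorem nonlinear_dvoretzky_hausdorff :
    ∃ c : ℝ, 0 < c ∧ ∀ ε : ℝ, ε ∈ Set.Ioo (0 : ℝ) 1 → ∀ α : ℝ, 0 < α →
      ∀ (M : Type u) [MetricSpace M] [CompactSpace M],
        ENNReal.ofReal α < dimH (Set.univ : Set M) →
        ∃ S : Set M, IsClosed S ∧ ENNReal.ofReal ((1 - ε) * α) ≤ dimH S ∧
          ∃ ρ : S → S → ℝ, IsUltrametricOn ρ ∧
            ∀ x y : S, dist (x : M) (y : M) ≤ ρ x y ∧
              ρ x y ≤ (c / ε) * dist (x : M) (y : M) := by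
  refine ⟨48, by norm_num, fun ε ⟨hε₀, hε₁⟩ α hα M _ _ hdim => ?_⟩
  lift α to ℝ≥0 using hα.le
  rw [ENNReal.ofReal_coe_nnreal] at hdim
  obtain ⟨ν, hν₀, hν⟩ := exists_outerMeasure_le_ediam_rpow hdim
  obtain ⟨F, d, p₀, hF, hd₀, hlim, hweight, hroot, hp₀⟩ :=
    exists_isHierarchy hν₀ hν hε₀ hε₁.le hα.le
  have hL : 0 < 48 / ε := by positivity
  have hβ : 0 < (1 - ε) * α := mul_pos (sub_pos.2 hε₁) hα
  exact ⟨limitSet F, hF.isClosed_limitSet,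
    hF.le_dimH_limitSet hL hlim hβ hweight (hroot ▸ Finset.mem_singleton_self p₀) hp₀,
    hF.exists_isUltrametricOn_limitSet hL hd₀ hlim hroot⟩
end
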